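/- arXiv:0810.1840 — 7 statements merged into one kernel-verified Lean document; each statement's English description precedes it below -/
import Mathlib

section
/- Let p be an odd prime and n a positive integer. Then the symmetric group S_n possesses a p-basic set B ⊆ Irr(S_n) that is stable under multiplication by the sign character: if χ ∈ B then ε·χ ∈ B, where ε denotes the sign character of S_n (a degree-one character, so that ε·χ is again an irreducible character). -/
/-!
The irreducible characters of `S_n` are parametrized by beta sets: finite sets `X ⊆ ℕ` with `N`
elements (here `N = n`) and sum `0 + 1 + ⋯ + (N - 1) + n`, i.e. the sets of first column hook lengths
of partitions of `n` padded to `N` rows. The value of the character at cycle type `s` is, up to a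
global sign, the coefficient of the monomial with exponents `X` in the product of the Vandermonde
determinant and the power sum product of type `s` (Frobenius' formula, `chiM`). That these class
functions are irreducible characters up to sign follows from the Cauchy identity, which makes them
orthonormal (`sum_chi_mul_chi`), and from the expansion of the determinant, which makes them integral
combinations of permutation characters (`chi_mem_span`). Linear independence of power sum products
shows that all irreducible characters arise (`exists_chi`). Multiplication by the sign character is
conjugation of partitions: `X` is replaced by its complement in `{0, …, 2N - 1}`, reflected by
`x ↦ 2N - 1 - x` (`sign_mul_irr`, from the Murnaghan–Nakayama rule).

Fix a residue `m` modulo `p`, and let `stb` be the family of beta sets `X` in which no bead of residue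
`m` can be moved down: `x ∈ X`, `x ≡ m`, `x ≥ p` imply `x - p ∈ X`. In other words, the component of
index `m` of the `p`-quotient is empty. The corresponding characters form a `p`-basic set.

* They span (`tv_mem_span`). The product of an alternant and an elementary symmetric function of
  positive degree in the `p`-th powers of the variables gives a combination of characters vanishing on
  the `p`-regular classes (`sum_chiM_sh`). These relations are unitriangular for a suitable statistic
  of the beads of residue `m`, so that a character outside of the family can be eliminated.
* They are independent. Their number is the number of `p`-regular classes (`card_regP_eq`): a beta set
  is a member of the family together with an arbitrary runner of residue `m`, and a partition is a
  partition with no part divisible by `p` together with one whose parts are all divisible by `p`.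
  As the columns of the truncated character table are independent, so are the rows of the family.

Since `p` is odd, `m` can be chosen with `2m ≡ 2N - 1` modulo `p`. Then the reflection
`x ↦ 2N - 1 - x` preserves the residue class of `m`, and the family is stable under conjugation
(`cj_mem_stb`).
-/

open scoped Classical

noncomputable section

/-- The set of irreducible complex characters of the group `G`. -/
def IrrChar (G : Type) [Group G] : Set (G → ℂ) :=
  {χ | ∃ V : FDRep ℂ G, CategoryTheory.Simple V ∧ χ = FDRep.character V}

/-- Truncation of a class function to the subset `C`: `φ^C`. -/
def truncCF {G : Type} (C : Set G) (φ : G → ℂ) : G → ℂ := fun g =>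
  if g ∈ C then φ g else 0

/-- The scalar product of class functions across the subset `C`:
`⟨α,β⟩_C = (1/|G|) · Σ_{g ∈ C} α(g) · conj(β(g))`. -/
def innerOn {G : Type} [Fintype G] (C : Set G) (α β : G → ℂ) : ℂ :=
  (Fintype.card G : ℂ)⁻¹ * ∑ g : G, if g ∈ C then α g * (starRingEnd ℂ) (β g) else 0

/-- `B` is a `C`-basic set of `b`: `B ⊆ b` and the truncations `χ^C` for `χ ∈ B` form a
`ℤ`-basis of the `ℤ`-submodule of class functions generated by the `χ^C`, `χ ∈ b`. -/
def IsBasicSetOf {G : Type} [Group G] (C : Set G) (b B : Set (G → ℂ)) : Prop :=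
  B ⊆ b ∧
  LinearIndependent ℤ (fun χ : B => truncCF C (χ : G → ℂ)) ∧
  Submodule.span ℤ (truncCF C '' B) = Submodule.span ℤ (truncCF C '' b)

/-- The set of `p`-regular elements of `G` (elements of order coprime to `p`). -/
def pRegular (p : ℕ) (G : Type) [Group G] : Set G :=
  {g | Nat.Coprime (orderOf g) p}

namespace SymBasic

open Finset

/-! ### The Cauchy identity -/

/-- The matrix of signed elementary symmetric functions of the `y k`, `k ≠ j`: its `j`-th column
lists the coefficients of `∏_{k ≠ j} (1 - t y_k)`. -/
def coeffMat {K : Type*} [CommRing K] {N : ℕ} (y : Fin N → K) : Matrix (Fin N) (Fin N) K :=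
  Matrix.of fun a j => ∑ T ∈ powersetCard (a : ℕ) (univ.erase j), ∏ k ∈ T, (-y k)

lemma projVandermonde_mul_coeffMat {K : Type*} [CommRing K] {N : ℕ} (x u y : Fin N → K) :
    Matrix.projVandermonde x u * coeffMat y =
      Matrix.of fun i j => ∏ k ∈ univ.erase j, (u i - x i * y k) := by
  ext i j
  have hcard : (univ.erase j : Finset (Fin N)).card + 1 = N := by
    rw [card_erase_add_one (mem_univ _), card_univ, Fintype.card_fin]
  simp only [Matrix.mul_apply, Matrix.projVandermonde_apply, coeffMat, Matrix.of_apply]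
  have h1 : ∏ k ∈ univ.erase j, (u i - x i * y k) =
      ∏ k ∈ univ.erase j, (x i * (-y k) + u i) := prod_congr rfl fun k _ => by ring
  rw [h1, prod_add, sum_powerset, hcard, ← Fin.sum_univ_eq_sum_range
    (fun a => ∑ t ∈ powersetCard a (univ.erase j), (∏ k ∈ t, x i * -y k) *
      ∏ k ∈ univ.erase j \ t, u i)]
  refine sum_congr rfl fun a _ => ?_
  rw [mul_sum]
  refine sum_congr rfl fun T hT => ?_
  rw [mem_powersetCard] at hT
  rw [prod_mul_distrib, prod_const, prod_const, card_sdiff_of_subset hT.1, hT.2]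
  have : (Fin.rev a : ℕ) = (univ.erase j : Finset (Fin N)).card - a := by
    rw [Fin.val_rev]; omega
  rw [this]; ring

/-- The case `x = 1`, `u = y` of `projVandermonde_mul_coeffMat`, where the right-hand side is diagonal. -/
lemma det_coeffMat {K : Type*} [CommRing K] [IsDomain K] {N : ℕ} (y : Fin N → K)
    (hy : Function.Injective y) : (coeffMat y).det = (Matrix.vandermonde y).det := by
  have h := congrArg Matrix.det (projVandermonde_mul_coeffMat (fun _ => 1) y y)
  rw [Matrix.det_mul, Matrix.det_projVandermonde] at h
  have hdiag : (Matrix.of fun i j => ∏ k ∈ univ.erase j, (y i - 1 * y k)) =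
      Matrix.diagonal fun j => ∏ k ∈ univ.erase j, (y j - y k) := by
    ext i j
    by_cases hij : i = j
    · subst hij; simp
    · rw [Matrix.diagonal_apply_ne _ hij, Matrix.of_apply]
      exact prod_eq_zero (i := i) (mem_erase.2 ⟨hij, mem_univ _⟩) (by simp)
  rw [hdiag, Matrix.det_diagonal] at h
  have hsplit : ∀ j : Fin N, ∏ k ∈ univ.erase j, (y j - y k) =
      (∏ k ∈ Ioi j, (y j - y k)) * ∏ k ∈ Iio j, (y j - y k) := by
    intro j
    rw [← prod_union]
    · congr 1; ext k; simp [lt_or_lt_iff_ne, eq_comm]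
    · rw [disjoint_left]; intro k; simp; intro h1; exact h1.le
  have hV : (Matrix.vandermonde y).det = ∏ j : Fin N, ∏ k ∈ Iio j, (y j - y k) := by
    rw [Matrix.det_vandermonde]
    exact prod_comm' (by simp)
  rw [prod_congr rfl fun j _ => hsplit j, prod_mul_distrib, ← hV] at h
  simp only [one_mul] at h
  refine mul_left_cancel₀ ?_ h
  refine prod_ne_zero_iff.2 fun i _ => prod_ne_zero_iff.2 fun j hj => sub_ne_zero.2 fun e => ?_
  exact (mem_Ioi.1 hj).ne (hy e)

/-- Cauchy's determinant, with denominators cleared. -/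
lemma cauchy_det {K : Type*} [CommRing K] [IsDomain K] {N : ℕ} (x y : Fin N → K)
    (hy : Function.Injective y) :
    (Matrix.of fun i j => ∏ k ∈ univ.erase j, (1 - x i * y k)).det =
      (Matrix.vandermonde x).det * (Matrix.vandermonde y).det := by
  rw [← projVandermonde_mul_coeffMat x (fun _ => 1) y, Matrix.det_mul, det_coeffMat y hy]
  congr 2
  ext i j; simp [Matrix.projVandermonde_apply]

/-- The complete homogeneous symmetric function `h_m` in the alphabet `z`. -/
def hsum {ι R : Type*} [Fintype ι] [CommRing R] (z : ι → R) (m : ℕ) : R :=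
  ∑ l ∈ finsuppAntidiag (univ : Finset ι) m, ∏ i, z i ^ l i

/-- The geometric series `1 / (1 - z t)`. -/
def geom {R : Type*} [CommRing R] (z : R) : PowerSeries R := PowerSeries.mk fun n => z ^ n

lemma geom_mul {R : Type*} [CommRing R] (z : R) :
    (1 - PowerSeries.C z * PowerSeries.X) * geom z = 1 := by
  ext n
  rw [sub_mul, one_mul, mul_assoc, map_sub, PowerSeries.coeff_C_mul]
  cases n with
  | zero => simp [geom]
  | succ n => simp [geom, PowerSeries.coeff_succ_X_mul, PowerSeries.coeff_one, pow_succ']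

lemma coeff_prod_geom {ι R : Type*} [Fintype ι] [CommRing R] (z : ι → R) (m : ℕ) :
    PowerSeries.coeff m (∏ i, geom (z i)) = hsum z m := by
  rw [PowerSeries.coeff_prod]
  simp [hsum, geom]

/-- The homogeneous form of the Cauchy identity: the component of degree `|δ| + n` of
`det (1 / (1 - x_i y_j)) = V(x) V(y) ∏ 1 / (1 - x_i y_j)`. -/
lemma cauchy_hsum {R : Type*} [CommRing R] [IsDomain R] {N : ℕ} (x y : Fin N → R)
    (hy : Function.Injective y) (n : ℕ) :
    (Matrix.vandermonde x).det * (Matrix.vandermonde y).det *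
        hsum (fun ij : Fin N × Fin N => x ij.1 * y ij.2) n =
      ∑ σ : Equiv.Perm (Fin N), (Equiv.Perm.sign σ : ℤ) •
        hsum (fun i => x i * y (σ i)) ((∑ i : Fin N, (i : ℕ)) + n) := by
  set x' : Fin N → PowerSeries R := fun i => PowerSeries.C (x i)
  set y' : Fin N → PowerSeries R := fun i => PowerSeries.C (y i) * PowerSeries.X
  have hy' : Function.Injective y' := by
    intro i j hij
    have := congrArg (PowerSeries.coeff 1) hij
    simp [y'] at this
    exact hy this
  have hxy : ∀ i j, (1 - x' i * y' j) * geom (x i * y j) = 1 := by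
    intro i j
    refine Eq.trans ?_ (geom_mul (x i * y j))
    simp only [x', y', map_mul]; ring
  have hV : (Matrix.vandermonde y').det =
      PowerSeries.C (Matrix.vandermonde y).det * PowerSeries.X ^ (∑ i : Fin N, (i : ℕ)) := by
    have : Matrix.vandermonde y' = Matrix.of fun i (j : Fin N) => (PowerSeries.X : PowerSeries R) ^ (j : ℕ) *
        (Matrix.vandermonde y).map PowerSeries.C i j := by
      ext1 i j; simp [y', Matrix.vandermonde_apply, mul_pow, mul_comm]
    rw [this]
    refine (Matrix.det_mul_row (fun j : Fin N => (PowerSeries.X : PowerSeries R) ^ (j : ℕ))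
      ((Matrix.vandermonde y).map PowerSeries.C)).trans ?_
    rw [prod_pow_eq_pow_sum, mul_comm]
    congr 1
    exact (RingHom.map_det (PowerSeries.C : R →+* PowerSeries R) _).symm
  have hVx : (Matrix.vandermonde x').det = PowerSeries.C (Matrix.vandermonde x).det := by
    rw [RingHom.map_det]; congr 1; ext1 i j; simp [x', Matrix.vandermonde_apply]
  have key : (Matrix.vandermonde x').det * (Matrix.vandermonde y').det *
      ∏ ij : Fin N × Fin N, geom (x ij.1 * y ij.2) =
      ∑ σ : Equiv.Perm (Fin N), (Equiv.Perm.sign σ : ℤ) • ∏ i, geom (x i * y (σ i)) := by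
    rw [← cauchy_det x' y' hy', ← Matrix.det_transpose, Matrix.det_apply, sum_mul]
    refine sum_congr rfl fun σ _ => ?_
    rw [smul_mul_assoc, Fintype.prod_prod_type, ← prod_mul_distrib]
    rw [Units.smul_def]
    congr 1
    refine prod_congr rfl fun i _ => ?_
    rw [Matrix.transpose_apply, Matrix.of_apply, ← mul_prod_erase univ _ (mem_univ (σ i)),
      mul_left_comm, ← prod_mul_distrib, prod_eq_one fun k _ => hxy i k, mul_one]
  have h2 := congrArg (PowerSeries.coeff ((∑ i : Fin N, (i : ℕ)) + n)) key
  rw [hV, hVx, map_sum] at h2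
  have e : ∀ (a b : R) (k : ℕ) (G : PowerSeries R),
      PowerSeries.C a * (PowerSeries.C b * PowerSeries.X ^ k) * G =
      PowerSeries.C (a * b) * (PowerSeries.X ^ k * G) := by
    intros; rw [map_mul]; ring
  rw [e, PowerSeries.coeff_C_mul, add_comm, PowerSeries.coeff_X_pow_mul, coeff_prod_geom] at h2
  rw [h2]
  refine sum_congr rfl fun σ _ => ?_
  rw [map_zsmul, coeff_prod_geom, add_comm]

/-! ### Words fixed by a permutation -/

/-- The sum of the monomials `∏ z (F i)` over the words `F` of length `n` fixed by `g`; it is the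
power sum product attached to the cycle type of `g`. -/
def fixP {ι R : Type*} [Fintype ι] [CommRing R] {n : ℕ} (z : ι → R) (g : Equiv.Perm (Fin n)) : R :=
  ∑ F : Fin n → ι with F ∘ g = F, ∏ i, z (F i)

/-- The content of a word: the number of occurrences of each letter. -/
def content {ι : Type*} [Fintype ι] {n : ℕ} (F : Fin n → ι) : ι →₀ ℕ :=
  Finsupp.equivFunOnFinite.symm fun a => #{i | F i = a}

lemma content_apply {ι : Type*} [Fintype ι] {n : ℕ} (F : Fin n → ι) (a : ι) :
    content F a = #{i | F i = a} := rfl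

lemma prod_eq_content {ι R : Type*} [Fintype ι] [CommRing R] {n : ℕ} (z : ι → R) (F : Fin n → ι) :
    ∏ i, z (F i) = ∏ a, z a ^ content F a := by
  rw [← prod_fiberwise_of_maps_to (s := univ) (t := univ) (g := F) (fun _ _ => mem_univ _)]
  refine prod_congr rfl fun a _ => ?_
  rw [content_apply, ← prod_const]
  exact prod_congr rfl fun i hi => by rw [(mem_filter.1 hi).2]

lemma mem_antidiag {ι : Type*} [Fintype ι] (l : ι →₀ ℕ) (n : ℕ) :
    l ∈ finsuppAntidiag (univ : Finset ι) n ↔ ∑ i, l i = n := by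
  simp [mem_finsuppAntidiag]

lemma content_mem {ι : Type*} [Fintype ι] {n : ℕ} (F : Fin n → ι) :
    content F ∈ finsuppAntidiag (univ : Finset ι) n := by
  rw [mem_finsuppAntidiag]
  refine ⟨?_, subset_univ _⟩
  have := card_eq_sum_card_fiberwise (f := F) (s := univ) (t := univ) (by simp)
  simp only [card_univ, Fintype.card_fin] at this
  exact this.symm

lemma exists_content {ι : Type*} [Fintype ι] {n : ℕ} (l : ι →₀ ℕ)
    (hl : l ∈ finsuppAntidiag (univ : Finset ι) n) : ∃ F : Fin n → ι, content F = l := by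
  rw [mem_finsuppAntidiag] at hl
  have hc : Fintype.card (Fin n) = Fintype.card (Σ i, Fin (l i)) := by
    simpa using hl.1.symm
  let e := Fintype.equivOfCardEq hc
  refine ⟨fun i => (e i).1, ?_⟩
  ext a
  rw [content_apply]
  have : Fintype.card {i : Fin n // (e i).1 = a} = Fintype.card (Fin (l a)) := by
    refine Fintype.card_congr ((e.subtypeEquiv (q := fun s => s.1 = a) (by simp)).trans
      (Equiv.sigmaSubtype (β := fun i => Fin (l i)) a))
  rw [Fintype.card_subtype, Fintype.card_fin] at this
  exact this

lemma exists_perm_of_content_eq {ι : Type*} [Fintype ι] {n : ℕ} {F F' : Fin n → ι}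
    (h : content F = content F') : ∃ g : Equiv.Perm (Fin n), F ∘ g = F' := by
  have hc : ∀ a, Nonempty ({i // F' i = a} ≃ {i // F i = a}) := by
    intro a
    refine ⟨Fintype.equivOfCardEq ?_⟩
    rw [Fintype.card_subtype, Fintype.card_subtype]
    exact (DFunLike.congr_fun h a).symm
  let e := fun a => (hc a).some
  refine ⟨(Equiv.sigmaFiberEquiv F').symm.trans ((Equiv.sigmaCongrRight e).trans
    (Equiv.sigmaFiberEquiv F)), ?_⟩
  ext i
  exact (e (F' i) ⟨i, rfl⟩).2

lemma content_comp {ι : Type*} [Fintype ι] {n : ℕ} (F : Fin n → ι) (g : Equiv.Perm (Fin n)) :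
    content (F ∘ g) = content F := by
  ext a
  rw [content_apply, content_apply]
  refine card_bij (fun i _ => g i) (by simp) (by simp) fun i hi => ⟨g.symm i, by simpa using hi, by simp⟩

/-- The orbit-stabilizer count behind `h_n = (1/n!) ∑_g p_{cyc(g)}`. -/
lemma sum_card_stab {ι : Type*} [Fintype ι] {n : ℕ} (l : ι →₀ ℕ)
    (hl : l ∈ finsuppAntidiag (univ : Finset ι) n) :
    ∑ F : Fin n → ι with content F = l, #{g : Equiv.Perm (Fin n) | F ∘ g = F} = n.factorial := by
  obtain ⟨F0, rfl⟩ := exists_content l hl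
  have h1 : ∀ F ∈ ({F : Fin n → ι | content F = content F0} : Finset _),
      #{g : Equiv.Perm (Fin n) | F ∘ g = F} = #{g : Equiv.Perm (Fin n) | F0 ∘ g = F} := by
    intro F hF
    obtain ⟨h, rfl⟩ := exists_perm_of_content_eq (mem_filter.1 hF).2.symm
    refine card_bij (fun g _ => h * g) ?_ (by simp) ?_
    · intro g hg
      simpa [Function.comp_assoc] using (mem_filter.1 hg).2
    · intro g hg
      refine ⟨h⁻¹ * g, ?_, by simp⟩
      have hg := (mem_filter.1 hg).2
      rw [mem_filter]
      refine ⟨mem_univ _, ?_⟩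
      rw [← hg]; ext i
      have := congrFun hg (h.symm (g i))
      simp at this ⊢
      exact this
  rw [sum_congr rfl h1, ← card_eq_sum_card_fiberwise (f := fun g : Equiv.Perm (Fin n) => F0 ∘ g)
    (s := univ) ]
  · simp [Fintype.card_perm]
  · intro g _; simp [content_comp]

/-- `n! h_n` is the sum over `S_n` of the power sum products of the cycle types. -/
lemma sum_fixP {ι R : Type*} [Fintype ι] [CommRing R] (n : ℕ) (z : ι → R) :
    ∑ g : Equiv.Perm (Fin n), fixP z g = (n.factorial : R) * hsum z n := by
  have h : ∑ g : Equiv.Perm (Fin n), fixP z g =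
      ∑ F : Fin n → ι, (#{g : Equiv.Perm (Fin n) | F ∘ g = F} : R) * ∏ i, z (F i) := by
    simp only [fixP, sum_filter]
    rw [sum_comm]
    refine sum_congr rfl fun F _ => ?_
    rw [← sum_filter, sum_const, nsmul_eq_mul]
  rw [h, hsum, mul_sum, ← sum_fiberwise_of_maps_to (s := univ) (g := content)
    (fun F _ => content_mem F)]
  refine sum_congr rfl fun l hl => ?_
  rw [← sum_card_stab l hl, Nat.cast_sum, sum_mul]
  refine sum_congr rfl fun F hF => ?_
  rw [prod_eq_content, (mem_filter.1 hF).2]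

/-! ### Cycle types and power sums -/

/-- If `c` labels the points by the cycles of `g`, the words fixed by `g` are the functions of the
label, so `fixP z g` factors over the labels. -/
lemma fixP_eq_prod_label {ι R κ : Type*} [Fintype ι] [Fintype κ] [CommRing R] {n : ℕ} (z : ι → R)
    (g : Equiv.Perm (Fin n)) (c : Fin n → κ) (hs : Function.Surjective c)
    (hc : ∀ i, c (g i) = c i) (hc' : ∀ i j, c i = c j → g.SameCycle i j) :
    fixP z g = ∏ k, ∑ a, z a ^ #{i | c i = k} := by
  rw [fixP, prod_univ_sum, Fintype.piFinset_univ]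
  symm
  refine sum_bij (fun f _ => f ∘ c) ?_ ?_ ?_ ?_
  · intro f _
    simp only [mem_filter, mem_univ, true_and]
    ext i; simp [hc]
  · intro f _ f' _ h
    exact hs.injective_comp_right h
  · intro F hF
    have hF := (mem_filter.1 hF).2
    have hpow : ∀ (m : ℤ) (i : Fin n), F ((g ^ m) i) = F i := by
      have h1 : ∀ i, F (g i) = F i := fun i => congrFun hF i
      intro m
      induction m with
      | zero => simp
      | succ m ih => intro i; rw [zpow_add_one, Equiv.Perm.mul_apply, ih, h1]
      | pred m ih =>
        intro i
        rw [zpow_sub_one, Equiv.Perm.mul_apply, ih, ← h1 (g⁻¹ i)]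
        simp
    refine ⟨fun k => F (Function.surjInv hs k), mem_univ _, ?_⟩
    ext i
    obtain ⟨m, hm⟩ := hc' _ _ (Function.surjInv_eq hs (c i)).symm
    simp only [Function.comp]
    rw [← hm, hpow]
  · intro f _
    rw [← prod_fiberwise_of_maps_to (s := univ) (t := univ) (g := c) (fun _ _ => mem_univ _)]
    refine prod_congr rfl fun k _ => ?_
    rw [← prod_const]
    exact prod_congr rfl fun i hi => by simp [(mem_filter.1 hi).2]

/-- The label of a point: the cycle containing it, or the point itself if it is fixed. -/
def cycLabel {n : ℕ} (g : Equiv.Perm (Fin n)) (i : Fin n) :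
    g.cycleFactorsFinset ⊕ {i : Fin n // g i = i} :=
  if h : g i = i then Sum.inr ⟨i, h⟩ else
    Sum.inl ⟨g.cycleOf i, Equiv.Perm.cycleOf_mem_cycleFactorsFinset_iff.2
      (Equiv.Perm.mem_support.2 h)⟩

lemma cycLabel_eq_inl {n : ℕ} (g : Equiv.Perm (Fin n)) (i : Fin n) (c : g.cycleFactorsFinset) :
    cycLabel g i = Sum.inl c ↔ i ∈ (c : Equiv.Perm (Fin n)).support := by
  unfold cycLabel
  split_ifs with h
  · simp only [false_iff]
    intro hi
    exact Equiv.Perm.mem_support.1 (Equiv.Perm.mem_cycleFactorsFinset_support_le c.2 hi) h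
  · rw [Sum.inl.injEq, Subtype.ext_iff]
    constructor
    · intro e
      simp only at e
      rw [← e, Equiv.Perm.mem_support_cycleOf_iff]
      exact ⟨Equiv.Perm.SameCycle.refl _ _, Equiv.Perm.mem_support.2 h⟩
    · intro hi
      exact (Equiv.Perm.cycle_is_cycleOf hi c.2).symm

lemma cycLabel_eq_inr {n : ℕ} (g : Equiv.Perm (Fin n)) (i : Fin n) (c : {i : Fin n // g i = i}) :
    cycLabel g i = Sum.inr c ↔ i = c := by
  unfold cycLabel
  split_ifs with h
  · rw [Sum.inr.injEq, Subtype.ext_iff]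
  · simp only [false_iff]
    rintro rfl
    exact h c.2

/-- The product of the power sums `∑ z_a ^ m` over the multiset `s` of exponents. -/
def psumM {ι R : Type*} [Fintype ι] [CommRing R] (z : ι → R) (s : Multiset ℕ) : R :=
  (s.map fun m => ∑ a, z a ^ m).prod

lemma fixP_eq_psumM {ι R : Type*} [Fintype ι] [CommRing R] {n : ℕ} (z : ι → R)
    (g : Equiv.Perm (Fin n)) : fixP z g = psumM z g.partition.parts := by
  rw [fixP_eq_prod_label z g (cycLabel g)]
  · rw [Fintype.prod_sum_type]
    simp only [cycLabel_eq_inl, cycLabel_eq_inr]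
    rw [psumM, Equiv.Perm.parts_partition, Multiset.map_add, Multiset.prod_add,
      Equiv.Perm.cycleType_def, Multiset.map_map]
    congr 1
    · rw [prod_coe_sort g.cycleFactorsFinset (fun c => ∑ a, z a ^ #{i | i ∈ c.support})]
      refine prod_congr rfl fun c _ => ?_
      simp only [filter_mem_eq_inter, univ_inter, Function.comp]
    · have : ∀ c : {i : Fin n // g i = i}, #{i | i = (c : Fin n)} = 1 := by
        intro c; simp [filter_eq']
      simp only [this, prod_const, Multiset.map_replicate, Multiset.prod_replicate]
      congr 1
      rw [card_univ, Fintype.card_subtype, ← card_compl]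
      congr 1
      ext i; simp
  · rintro (c | c)
    · obtain ⟨i, hi⟩ := (Equiv.Perm.mem_cycleFactorsFinset_iff.1 c.2).1.nonempty_support
      exact ⟨i, (cycLabel_eq_inl g i c).2 hi⟩
    · exact ⟨c, (cycLabel_eq_inr g c c).2 rfl⟩
  · intro i
    rcases h : cycLabel g i with c | c
    · rw [cycLabel_eq_inl] at h ⊢
      have := (Equiv.Perm.mem_cycleFactorsFinset_iff.1 c.2).2 i h
      rw [← this]
      exact Equiv.Perm.apply_mem_support.2 h
    · rw [cycLabel_eq_inr] at h ⊢
      rw [h]; exact c.2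
  · intro i j hij
    rcases h : cycLabel g i with c | c
    · have h' := hij ▸ h
      rw [cycLabel_eq_inl] at h h'
      have := Equiv.Perm.cycle_is_cycleOf h c.2
      rw [this, Equiv.Perm.mem_support_cycleOf_iff] at h'
      exact h'.1
    · have h' := hij ▸ h
      rw [cycLabel_eq_inr] at h h'
      rw [h, h']

lemma psumM_prod {ι κ R : Type*} [Fintype ι] [Fintype κ] [CommRing R] (x : ι → R) (y : κ → R)
    (s : Multiset ℕ) :
    psumM (fun ij : ι × κ => x ij.1 * y ij.2) s = psumM x s * psumM y s := by
  rw [psumM, psumM, psumM, ← Multiset.prod_map_mul]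
  congr 1
  refine Multiset.map_congr rfl fun m _ => ?_
  rw [sum_mul_sum, Fintype.sum_prod_type]
  simp [mul_pow]

/-! ### Frobenius' formula and orthonormality -/

section

open MvPolynomial

/-- An exponent vector as a finitely supported function. -/
abbrev fs {N : ℕ} (w : Fin N → ℕ) : Fin N →₀ ℕ := Finsupp.equivFunOnFinite.symm w

/-- The Vandermonde determinant in the variables of the polynomial ring. -/
def vdm (N : ℕ) : MvPolynomial (Fin N) ℂ := (Matrix.vandermonde X).det

/-- The alternant `∑_σ sign σ X ^ (w ∘ σ)`. -/
def alt {N : ℕ} (w : Fin N → ℕ) : MvPolynomial (Fin N) ℂ :=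
  ∑ σ : Equiv.Perm (Fin N), (Equiv.Perm.sign σ : ℤ) • monomial (fs (w ∘ σ)) 1

/-- The coefficient of `X ^ w` in `vdm * f`. For symmetric `f` and decreasing `w` it is the
multiplicity in `f` of the Schur function indexed by `w - δ`. -/
def kap {N : ℕ} (w : Fin N → ℕ) : MvPolynomial (Fin N) ℂ →ₗ[ℂ] ℂ :=
  (lcoeff ℂ (fs w)) ∘ₗ (LinearMap.mulLeft ℂ (vdm N))

lemma kap_apply {N : ℕ} (w : Fin N → ℕ) (f : MvPolynomial (Fin N) ℂ) :
    kap w f = coeff (fs w) (vdm N * f) := rfl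

/-- The power sum product, in the variables of the polynomial ring. -/
abbrev pp (N : ℕ) (s : Multiset ℕ) : MvPolynomial (Fin N) ℂ := psumM X s

/-- The Frobenius character value: the multiplicity of the Schur function of exponent vector `w`
in the power sum product of type `s`. -/
def chiM {N : ℕ} (w : Fin N → ℕ) (s : Multiset ℕ) : ℂ := kap w (pp N s)

/-- The (virtual) character of `S_n` attached to the exponent vector `w`. -/
def chi {N : ℕ} (n : ℕ) (w : Fin N → ℕ) (g : Equiv.Perm (Fin n)) : ℂ := chiM w g.partition.parts

lemma prod_X_pow {N : ℕ} {R : Type*} [CommSemiring R] (w : Fin N → ℕ) :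
    ∏ i, (X i : MvPolynomial (Fin N) R) ^ w i = monomial (fs w) 1 := by
  rw [monomial_eq, Finsupp.prod_fintype _ _ (by simp)]; simp

lemma vdm_eq (N : ℕ) : vdm N = alt (fun i : Fin N => (i : ℕ)) := by
  rw [vdm, ← Matrix.det_transpose, Matrix.det_apply, alt]
  refine sum_congr rfl fun σ _ => ?_
  rw [Units.smul_def]
  congr 1
  rw [← prod_X_pow]
  simp [Matrix.vandermonde_apply]

lemma vdm_ne_zero (N : ℕ) : vdm N ≠ 0 := by
  rw [vdm, Matrix.det_vandermonde_ne_zero_iff]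
  exact X_injective

lemma psumM_symm {N : ℕ} (s : Multiset ℕ) : (pp N s).IsSymmetric := by
  unfold pp psumM
  induction s using Multiset.induction_on with
  | empty => simp [IsSymmetric]
  | cons a s ih =>
    rw [Multiset.map_cons, Multiset.prod_cons]
    exact IsSymmetric.mul (psum_isSymmetric _ _ a) ih

lemma rename_alt {N : ℕ} (w : Fin N → ℕ) (τ : Equiv.Perm (Fin N)) :
    rename τ (alt w) = (Equiv.Perm.sign τ : ℤ) • alt w := by
  rw [alt, map_sum, smul_sum]
  refine Fintype.sum_equiv (Equiv.mulRight τ⁻¹) _ _ fun σ => ?_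
  rw [map_zsmul, rename_monomial, Equiv.coe_mulRight, smul_smul]
  congr 1
  · rw [Equiv.Perm.sign_mul, Equiv.Perm.sign_inv, mul_comm (Equiv.Perm.sign σ)]
    rw [← Units.val_mul, ← mul_assoc, Int.units_mul_self, one_mul]
  · refine congrArg (fun t => monomial t (1 : ℂ)) ?_
    rw [← Finsupp.equivMapDomain_eq_mapDomain]
    ext i; simp [Finsupp.equivMapDomain]

/-- `vdm * f` is alternating for symmetric `f`, hence so is `w ↦ kap w f`. -/
lemma kap_comp {N : ℕ} (w : Fin N → ℕ) (τ : Equiv.Perm (Fin N)) {f : MvPolynomial (Fin N) ℂ}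
    (hf : f.IsSymmetric) : kap (w ∘ τ) f = (Equiv.Perm.sign τ : ℤ) • kap w f := by
  have h1 : rename τ (vdm N * f) = (Equiv.Perm.sign τ : ℤ) • (vdm N * f) := by
    rw [map_mul, hf τ, vdm_eq, rename_alt, smul_mul_assoc]
  have h2 := coeff_rename_mapDomain τ τ.injective (vdm N * f) (fs (w ∘ τ))
  have h3 : Finsupp.mapDomain τ (fs (w ∘ τ)) = fs w := by
    rw [← Finsupp.equivMapDomain_eq_mapDomain]
    ext i; simp [Finsupp.equivMapDomain]
  rw [h3, h1] at h2
  rw [kap_apply, kap_apply, ← h2, coeff_smul]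

lemma kap_eq_zero {N : ℕ} (w : Fin N → ℕ) (hw : ¬ Function.Injective w)
    {f : MvPolynomial (Fin N) ℂ} (hf : f.IsSymmetric) : kap w f = 0 := by
  simp only [Function.Injective, not_forall] at hw
  obtain ⟨i, j, hij, hne⟩ := hw
  have h := kap_comp w (Equiv.swap i j) hf
  have : w ∘ Equiv.swap i j = w := by
    ext k
    simp only [Function.comp, Equiv.swap_apply_def]
    split_ifs with h1 h2 <;> simp_all
  rw [this, Equiv.Perm.sign_swap hne] at h
  simp at h
  linear_combination h / 2

lemma coeff_alt {N : ℕ} (w v : Fin N → ℕ) :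
    coeff (fs v) (alt w) = ∑ σ : Equiv.Perm (Fin N),
      if w ∘ σ = v then ((Equiv.Perm.sign σ : ℤ) : ℂ) else 0 := by
  rw [alt, coeff_sum]
  refine sum_congr rfl fun σ _ => ?_
  rw [coeff_smul, coeff_monomial]
  simp only [Equiv.apply_eq_iff_eq]
  split_ifs <;> simp

lemma coeff_hsum {N : ℕ} (w : Fin N → ℕ) (σ : Equiv.Perm (Fin N)) (m : ℕ) (hm : ∑ i, w i = m) :
    coeff (fs w) (hsum (fun i => (C (X i) * X (σ i) :
      MvPolynomial (Fin N) (MvPolynomial (Fin N) ℂ))) m) = monomial (fs (w ∘ σ)) 1 := by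
  have h1 : ∀ l : Fin N →₀ ℕ, ∏ i, (C (X i) * X (σ i) :
      MvPolynomial (Fin N) (MvPolynomial (Fin N) ℂ)) ^ l i =
      monomial (fs (l ∘ σ.symm)) (monomial (fs l) 1) := by
    intro l
    simp only [mul_pow, prod_mul_distrib]
    rw [← mul_one (monomial (fs l) (1 : ℂ)), ← C_mul_monomial, ← prod_X_pow, ← prod_X_pow, map_prod]
    congr 1
    · simp
    · exact Fintype.prod_equiv σ _ _ fun i => by simp
  rw [hsum, sum_congr rfl fun l _ => h1 l, coeff_sum]
  simp only [coeff_monomial, Equiv.apply_eq_iff_eq]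
  rw [sum_eq_single (fs (w ∘ σ))]
  · rw [if_pos]
    · rfl
    · funext i; simp
  · intro l _ hl
    rw [if_neg]
    rintro rfl
    apply hl
    ext i; simp
  · intro h
    exfalso; apply h
    rw [mem_antidiag, ← hm]
    exact Fintype.sum_equiv σ _ _ fun i => by simp

/-- Frobenius' formula in dual form: the characteristic polynomial of `chi n w` is the Schur
function `alt w / vdm`. -/
lemma vdm_mul_sum_chi {N n : ℕ} (w : Fin N → ℕ) (hw : ∑ i, w i = (∑ i : Fin N, (i : ℕ)) + n) :
    vdm N * ∑ g : Equiv.Perm (Fin n), C (chi n w g) * pp N g.partition.parts =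
      (n.factorial : ℂ) • alt w := by
  have hc := cauchy_hsum (R := MvPolynomial (Fin N) (MvPolynomial (Fin N) ℂ))
    (fun i => C (X i)) (fun i => X i) X_injective n
  have hf := sum_fixP (R := MvPolynomial (Fin N) (MvPolynomial (Fin N) ℂ)) n
    (fun ij : Fin N × Fin N => C (X ij.1) * X ij.2)
  have hx : (Matrix.vandermonde fun i => (C (X i) : MvPolynomial (Fin N)
      (MvPolynomial (Fin N) ℂ))).det = C (vdm N) := by
    rw [vdm, RingHom.map_det]; congr 1; ext1 i j; simp [Matrix.vandermonde_apply]
  have hy : (Matrix.vandermonde fun i => (X i : MvPolynomial (Fin N)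
      (MvPolynomial (Fin N) ℂ))).det = map C (vdm N) := by
    rw [vdm, RingHom.map_det]; congr 1; ext1 i j; simp [Matrix.vandermonde_apply]
  have hg : ∀ g : Equiv.Perm (Fin n), fixP (fun ij : Fin N × Fin N =>
      (C (X ij.1) * X ij.2 : MvPolynomial (Fin N) (MvPolynomial (Fin N) ℂ))) g =
      C (pp N g.partition.parts) * map C (pp N g.partition.parts) := by
    intro g
    rw [fixP_eq_psumM, psumM_prod (R := MvPolynomial (Fin N) (MvPolynomial (Fin N) ℂ))
      (fun i => C (X i)) (fun i => X i)]
    congr 1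
    · simp [psumM, pp, map_multiset_prod]
    · simp [psumM, pp, map_multiset_prod]
  rw [hx, hy] at hc
  have h2 := congrArg (fun t => (n.factorial : MvPolynomial (Fin N) (MvPolynomial (Fin N) ℂ)) * t) hc
  rw [mul_left_comm, ← hf, sum_congr rfl fun g _ => hg g] at h2
  have h3 := congrArg (coeff (fs w)) h2
  rw [mul_assoc, mul_sum, mul_sum, coeff_sum, ← map_natCast (C : MvPolynomial (Fin N) ℂ →+* _),
    coeff_C_mul, coeff_sum] at h3
  rw [mul_sum]
  refine Eq.trans ?_ (h3.trans ?_)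
  · refine sum_congr rfl fun g _ => ?_
    rw [mul_left_comm (MvPolynomial.map C (vdm N)), coeff_C_mul, coeff_C_mul, ← RingHom.map_mul,
      coeff_map]
    rw [chi, chiM, kap_apply]; ring
  · rw [alt, Nat.cast_smul_eq_nsmul, nsmul_eq_mul]
    refine congrArg (fun t => (n.factorial : MvPolynomial (Fin N) ℂ) * t)
      (sum_congr rfl fun σ _ => ?_)
    rw [coeff_smul, coeff_hsum w σ _ hw]

/-- Orthonormality of the characters `chi`. -/
lemma sum_chi_mul_chi {N n : ℕ} (w v : Fin N → ℕ) (hw : ∑ i, w i = (∑ i : Fin N, (i : ℕ)) + n) :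
    ∑ g : Equiv.Perm (Fin n), chi n w g * chi n v g = (n.factorial : ℂ) *
      ∑ σ : Equiv.Perm (Fin N), if w ∘ σ = v then ((Equiv.Perm.sign σ : ℤ) : ℂ) else 0 := by
  have h := congrArg (coeff (fs v)) (vdm_mul_sum_chi w hw)
  rw [coeff_smul, coeff_alt, mul_sum, coeff_sum] at h
  rw [← smul_eq_mul (n.factorial : ℂ), ← h]
  refine sum_congr rfl fun g _ => ?_
  rw [mul_left_comm, coeff_C_mul]; rfl

end

/-! ### Linear independence of power sum products -/

section

open MvPolynomial

lemma pp_cons (N a : ℕ) (s : Multiset ℕ) : pp N (a ::ₘ s) = psum (Fin N) ℂ a * pp N s := by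
  simp [pp, psumM, psum]

lemma pp_add (N : ℕ) (s t : Multiset ℕ) : pp N (s + t) = pp N s * pp N t := by
  simp [pp, psumM]

lemma pp_zero (N : ℕ) : pp N 0 = 1 := by simp [pp, psumM]

lemma coeff_psum_mul {N : ℕ} (a : ℕ) (f : MvPolynomial (Fin N) ℂ) (m : Fin N →₀ ℕ) :
    coeff m (psum (Fin N) ℂ a * f) =
      ∑ i, if a ≤ m i then coeff (m - Finsupp.single i a) f else 0 := by
  rw [psum, sum_mul, coeff_sum]
  refine sum_congr rfl fun i _ => ?_
  rw [X_pow_eq_monomial, coeff_monomial_mul']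
  simp only [Finsupp.single_le_iff, one_mul]

/-- Triangularity: monomials in a power sum product involve at most as many variables as there are
factors, with equality only if the exponents are the indices of the factors. -/
lemma coeff_pp_ne_zero {N : ℕ} (s : Multiset ℕ) (m : Fin N →₀ ℕ)
    (hm : coeff m (pp N s) ≠ 0) : m.support.card ≤ Multiset.card s ∧
      (m.support.card = Multiset.card s → s = m.support.val.map m) := by
  induction s using Multiset.induction_on generalizing m with
  | empty =>
    rw [pp_zero, coeff_one] at hm
    have : m = 0 := by by_contra h; exact hm (if_neg fun e => h e.symm)
    subst this; simp
  | cons a s ih =>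
    rw [pp_cons, coeff_psum_mul] at hm
    obtain ⟨i, -, hi⟩ := exists_ne_zero_of_sum_ne_zero hm
    split_ifs at hi with hle
    · obtain ⟨h1, h2⟩ := ih _ hi
      set m' := m - Finsupp.single i a with hm'
      have hmm : m = m' + Finsupp.single i a := by
        rw [hm', tsub_add_cancel_of_le (Finsupp.single_le_iff.2 hle)]
      have hsub : m.support ⊆ insert i m'.support := by
        intro j hj
        rw [mem_insert]
        by_contra hcon
        push Not at hcon
        rw [Finsupp.mem_support_iff, hmm, Finsupp.add_apply, Finsupp.single_apply,
          if_neg (Ne.symm hcon.1), Finsupp.notMem_support_iff.1 hcon.2] at hj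
        exact hj rfl
      have hc1 := card_le_card hsub
      have hc2 := card_insert_le i m'.support
      rw [Multiset.card_cons]
      refine ⟨by omega, fun heq => ?_⟩
      have hi' : i ∉ m'.support := by
        intro h
        rw [insert_eq_of_mem h] at hc1
        omega
      have hS : m.support = cons i m'.support hi' := by
        rw [cons_eq_insert]
        exact eq_of_subset_of_card_le hsub (by omega)
      rw [hS, cons_val, Multiset.map_cons]
      congr 1
      · rw [hmm, Finsupp.add_apply, Finsupp.single_eq_same, Finsupp.notMem_support_iff.1 hi',
          zero_add]
      · rw [h2 (by omega)]
        refine Multiset.map_congr rfl fun j hj => ?_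
        have hji : i ≠ j := by rintro rfl; exact hi' hj
        rw [hmm, Finsupp.add_apply, Finsupp.single_apply, if_neg hji, add_zero]
    · exact absurd rfl hi

open ComplexOrder in
lemma coeff_pp_nonneg {N : ℕ} (s : Multiset ℕ) (m : Fin N →₀ ℕ) : 0 ≤ coeff m (pp N s) := by
  induction s using Multiset.induction_on generalizing m with
  | empty =>
    rw [pp_zero, coeff_one]
    split_ifs <;> simp
  | cons a s ih =>
    rw [pp_cons, coeff_psum_mul]
    refine sum_nonneg fun i _ => ?_
    split_ifs
    · exact ih _
    · exact le_rfl

open ComplexOrder in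
lemma coeff_pp_pos {N : ℕ} (s : Multiset ℕ) (m : Fin N →₀ ℕ) (h : m.support.val.map m = s) :
    0 < coeff m (pp N s) := by
  induction s using Multiset.induction_on generalizing m with
  | empty =>
    have : m = 0 := by simpa using h
    subst this
    simp [pp_zero]
  | cons a s ih =>
    have ha : a ∈ m.support.val.map m := by rw [h]; exact Multiset.mem_cons_self a s
    obtain ⟨i, hi, rfl⟩ := Multiset.mem_map.1 ha
    rw [pp_cons, coeff_psum_mul]
    refine lt_of_lt_of_le ?_ (single_le_sum (fun j _ => ?_) (mem_univ i))
    · rw [if_pos le_rfl]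
      have hm' : ∀ j, (m - Finsupp.single i (m i)) j = if j = i then 0 else m j := by
        intro j
        rw [Finsupp.tsub_apply, Finsupp.single_apply]
        by_cases hij : i = j
        · subst hij; simp
        · rw [if_neg hij, if_neg (Ne.symm hij)]; simp
      have hsupp : (m - Finsupp.single i (m i)).support = m.support.erase i := by
        ext j
        rw [Finsupp.mem_support_iff, hm', mem_erase, Finsupp.mem_support_iff]
        by_cases hij : j = i <;> simp [hij]
      refine ih _ ?_
      rw [hsupp, erase_val]
      have : m.support.val = i ::ₘ (m.support.val.erase i) := (Multiset.cons_erase hi).symm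
      rw [this, Multiset.map_cons] at h
      rw [← (Multiset.cons_inj_right _).1 h]
      refine Multiset.map_congr rfl fun j hj => ?_
      rw [hm', if_neg]
      rintro rfl
      exact (Multiset.Nodup.notMem_erase m.support.nodup) hj
    · split_ifs
      · exact coeff_pp_nonneg _ _
      · exact le_rfl

lemma exists_exponent {N : ℕ} (s : Multiset ℕ) (hs : ∀ a ∈ s, 0 < a) (hN : Multiset.card s ≤ N) :
    ∃ m : Fin N →₀ ℕ, m.support.val.map m = s := by
  induction s using Multiset.induction_on with
  | empty => exact ⟨0, by simp⟩
  | cons a s ih =>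
    rw [Multiset.card_cons] at hN
    obtain ⟨m, hm⟩ := ih (fun b hb => hs b (Multiset.mem_cons_of_mem hb)) (by omega)
    have hc : m.support.card < N := by
      have := congrArg Multiset.card hm
      rw [Multiset.card_map] at this
      rw [card_def]; omega
    obtain ⟨i, hi⟩ : ∃ i, i ∉ m.support := by
      by_contra hcon
      push Not at hcon
      rw [eq_univ_of_forall hcon] at hc
      simp at hc
    have ha := hs a (Multiset.mem_cons_self a s)
    have hmi := Finsupp.notMem_support_iff.1 hi
    have hval : ∀ j, (m + Finsupp.single i a) j = if j = i then a else m j := by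
      intro j
      rw [Finsupp.add_apply, Finsupp.single_apply]
      by_cases hij : i = j
      · subst hij; simp [hmi]
      · rw [if_neg hij, if_neg (Ne.symm hij)]; simp
    have hS : (m + Finsupp.single i a).support = cons i m.support hi := by
      ext j
      rw [Finsupp.mem_support_iff, hval, mem_cons, Finsupp.mem_support_iff]
      by_cases hij : j = i
      · simp [hij]; omega
      · simp [hij]
    refine ⟨m + Finsupp.single i a, ?_⟩
    rw [hS, cons_val, Multiset.map_cons, hval, if_pos rfl, ← hm]
    congr 1
    refine Multiset.map_congr rfl fun j hj => ?_
    rw [hval, if_neg]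
    rintro rfl
    exact hi hj

lemma card_parts_le {d : ℕ} (l : Nat.Partition d) : Multiset.card l.parts ≤ d := by
  have h := Multiset.card_nsmul_le_sum (s := l.parts) (a := 1) fun x hx => l.parts_pos hx
  rw [l.parts_sum] at h
  simpa using h

open ComplexOrder in
/-- In at least `d` variables the power sum products of degree `d` are linearly independent. -/
lemma linearIndependent_pp {N d : ℕ} (hd : d ≤ N) :
    LinearIndependent ℂ (fun l : Nat.Partition d => pp N l.parts) := by
  rw [Fintype.linearIndependent_iff]
  intro c hc
  by_contra hcon
  push Not at hcon
  obtain ⟨l1, hl1⟩ := hcon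
  obtain ⟨l0, hl0, hmax⟩ := exists_max_image (univ.filter fun l : Nat.Partition d => c l ≠ 0)
    (fun l => Multiset.card l.parts) ⟨l1, by simpa using hl1⟩
  have hl0 := (mem_filter.1 hl0).2
  obtain ⟨m, hm⟩ := exists_exponent (N := N) l0.parts (fun a ha => l0.parts_pos ha)
    ((card_parts_le l0).trans hd)
  have hcard : m.support.card = Multiset.card l0.parts := by
    rw [← hm, Multiset.card_map]; rfl
  have h := congrArg (coeff m) hc
  rw [coeff_sum, sum_eq_single l0, coeff_smul, smul_eq_mul] at h
  · rcases mul_eq_zero.1 h with h | h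
    · exact hl0 h
    · exact (coeff_pp_pos l0.parts m hm).ne' h
  · intro l _ hne
    rw [coeff_smul, smul_eq_mul]
    by_contra hcon
    have hcl := left_ne_zero_of_mul hcon
    obtain ⟨h1, h2⟩ := coeff_pp_ne_zero l.parts m (right_ne_zero_of_mul hcon)
    have h3 := hmax l (by simpa using hcl)
    exact hne (Nat.Partition.ext ((h2 (by omega)).trans hm))
  · simp

end

/-! ### Generalized characters -/

lemma trace_eq_add_of_isCompl {V : Type*} [AddCommGroup V] [Module ℂ V] [FiniteDimensional ℂ V]
    (f : V →ₗ[ℂ] V) {P Q : Submodule ℂ V} (h : IsCompl P Q) (hP : ∀ x ∈ P, f x ∈ P)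
    (hQ : ∀ x ∈ Q, f x ∈ Q) :
    LinearMap.trace ℂ V f = LinearMap.trace ℂ P (f.restrict hP) +
      LinearMap.trace ℂ Q (f.restrict hQ) := by
  rw [← LinearMap.trace_prodMap',
    ← LinearMap.trace_conj' ((f.restrict hP).prodMap (f.restrict hQ)) (P.prodEquivOfIsCompl Q h)]
  congr 1
  ext x
  obtain ⟨y, rfl⟩ := (P.prodEquivOfIsCompl Q h).surjective x
  simp [LinearEquiv.conj_apply]

lemma irr_mem {G : Type} [Group G] [Fintype G] {V : Type} [AddCommGroup V] [Module ℂ V]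
    [FiniteDimensional ℂ V] (ρ : Representation ℂ G V) (h : ρ.IsIrreducible) :
    ρ.character ∈ IrrChar G := by
  have hcard : (Nat.card G : ℂ) ≠ 0 := Nat.cast_ne_zero.2 Nat.card_pos.ne'
  let : Invertible (Nat.card G : ℂ) := invertibleOfNonzero hcard
  refine ⟨FDRep.of ρ, ?_, rfl⟩
  rw [FDRep.simple_iff_char_is_norm_one]
  have h1 := Representation.char_orthonormal ρ ρ
  rw [if_pos ⟨Representation.Equiv.refl ρ⟩, inv_mul_eq_iff_eq_mul₀ hcard] at h1
  rw [mul_one] at h1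
  exact h1

/-- Complete reducibility, on the level of characters. -/
lemma char_eq_sum_irr {G : Type} [Group G] [Fintype G] (d : ℕ) : ∀ {V : Type} [AddCommGroup V]
    [Module ℂ V] [FiniteDimensional ℂ V] (ρ : Representation ℂ G V),
    Module.finrank ℂ V = d → ρ.character ∈ AddSubmonoid.closure (IrrChar G) := by
  induction d using Nat.strong_induction_on with
  | _ d ih =>
    intro V _ _ _ ρ hd
    by_cases hirr : ρ.IsIrreducible
    · exact AddSubmonoid.subset_closure (irr_mem ρ hirr)
    rcases Nat.eq_zero_or_pos d with h0 | hpos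
    · have : ρ.character = 0 := by
        have : Subsingleton V := Module.finrank_zero_iff.1 (hd.trans h0)
        ext g
        have : ρ g = 0 := by ext x; exact Subsingleton.elim _ _
        simp [Representation.character, this]
      rw [this]; exact zero_mem _
    have hnt : Nontrivial V := Module.nontrivial_of_finrank_pos (R := ℂ) (by omega)
    obtain ⟨P, hP0, hP1⟩ : ∃ P : Subrepresentation ρ, P ≠ ⊥ ∧ P ≠ ⊤ := by
      by_contra hcon
      push Not at hcon
      apply hirr
      have : Nontrivial (Subrepresentation ρ) := by
        refine ⟨⊥, ⊤, fun h => ?_⟩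
        have h := congrArg Subrepresentation.toSubmodule h
        exact bot_ne_top (α := Submodule ℂ V) h
      exact ⟨fun a => or_iff_not_imp_left.2 fun ha => hcon a ha⟩
    have : NeZero (Nat.card G : ℂ) := ⟨Nat.cast_ne_zero.2 Nat.card_pos.ne'⟩
    obtain ⟨Q, hQ⟩ := exists_isCompl P
    have hC : IsCompl P.toSubmodule Q.toSubmodule := by
      refine IsCompl.of_eq ?_ ?_
      · exact congrArg Subrepresentation.toSubmodule hQ.inf_eq_bot
      · exact congrArg Subrepresentation.toSubmodule hQ.sup_eq_top
    have hsum := Submodule.finrank_add_eq_of_isCompl hC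
    have hPpos : 0 < Module.finrank ℂ P.toSubmodule := by
      rw [Module.finrank_pos_iff, Submodule.nontrivial_iff_ne_bot]
      intro h
      exact hP0 (Subrepresentation.toSubmodule_injective h)
    have hPlt : Module.finrank ℂ P.toSubmodule < d := by
      rw [← hd]
      refine Submodule.finrank_lt fun h => ?_
      exact hP1 (Subrepresentation.toSubmodule_injective h)
    have hchar : ρ.character = P.toRepresentation.character + Q.toRepresentation.character := by
      ext g
      exact trace_eq_add_of_isCompl (ρ g) hC (P.apply_mem_toSubmodule g) (Q.apply_mem_toSubmodule g)
    rw [hchar]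
    exact add_mem (ih _ hPlt _ rfl) (ih _ (by omega) _ rfl)

/-- The bilinear form `(1/|G|) ∑ a(g) b(g⁻¹)`. -/
def ip {G : Type} [Group G] [Fintype G] (a b : G → ℂ) : ℂ :=
  (Nat.card G : ℂ)⁻¹ * ∑ g : G, a g * b g⁻¹

lemma ip_add_left {G : Type} [Group G] [Fintype G] (a a' b : G → ℂ) :
    ip (a + a') b = ip a b + ip a' b := by
  simp [ip, add_mul, sum_add_distrib, mul_add]

lemma ip_sum_smul_left {G ι : Type} [Group G] [Fintype G] (s : Finset ι) (c : ι → ℤ)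
    (a : ι → G → ℂ) (b : G → ℂ) : ip (∑ i ∈ s, c i • a i) b = ∑ i ∈ s, c i * ip (a i) b := by
  simp only [ip, Finset.sum_apply, Pi.smul_apply, sum_mul, mul_sum]
  rw [sum_comm]
  refine sum_congr rfl fun i _ => sum_congr rfl fun g _ => ?_
  simp; ring

lemma ip_comm {G : Type} [Group G] [Fintype G] (a b : G → ℂ) : ip a b = ip b a := by
  rw [ip, ip]
  congr 1
  refine Fintype.sum_equiv (Equiv.inv G) _ _ fun g => ?_
  simp [mul_comm]

lemma ip_irr {G : Type} [Group G] [Fintype G] {a b : G → ℂ} (ha : a ∈ IrrChar G)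
    (hb : b ∈ IrrChar G) : ip a b = if a = b then 1 else 0 := by
  have hcard : (Nat.card G : ℂ) ≠ 0 := Nat.cast_ne_zero.2 Nat.card_pos.ne'
  let : Invertible (Nat.card G : ℂ) := invertibleOfNonzero hcard
  obtain ⟨V, hV, rfl⟩ := ha
  obtain ⟨W, hW, rfl⟩ := hb
  have h1 := FDRep.char_orthonormal V W
  have h2 := FDRep.char_orthonormal V V
  rw [if_pos ⟨CategoryTheory.Iso.refl V⟩] at h2
  split_ifs with h
  · rw [← h]; simpa [ip] using h2
  · rw [if_neg] at h1
    · simpa [ip] using h1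
    · rintro ⟨i⟩; exact h (FDRep.char_iso i)

/-- A generalized character of norm one is, up to sign, an irreducible character. -/
lemma irr_of_norm_one {G : Type} [Group G] [Fintype G] {θ : G → ℂ}
    (hθ : θ ∈ Submodule.span ℤ (IrrChar G)) (h1 : ip θ θ = 1) :
    θ ∈ IrrChar G ∨ -θ ∈ IrrChar G := by
  obtain ⟨c, t, ht, -, rfl⟩ := Submodule.mem_span_iff_exists_finset_subset.1 hθ
  have hip : ∀ b ∈ t, ip (∑ a ∈ t, c a • a) b = c b := by
    intro b hb
    rw [ip_sum_smul_left t c (fun a => a) b]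
    rw [sum_congr rfl fun a ha => by rw [ip_irr (ht ha) (ht hb)]]
    simp [hb]
  have h2 : ip (∑ a ∈ t, c a • a) (∑ a ∈ t, c a • a) = ((∑ a ∈ t, c a ^ 2 : ℤ) : ℂ) := by
    rw [ip_sum_smul_left t c (fun a => a)]
    push_cast
    refine sum_congr rfl fun a ha => ?_
    rw [ip_comm, hip a ha]; ring
  rw [h2] at h1
  have h3 : ∑ a ∈ t, c a ^ 2 = 1 := by exact_mod_cast h1
  obtain ⟨b, hb, hcb⟩ : ∃ b ∈ t, c b ≠ 0 := by
    by_contra hcon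
    push Not at hcon
    rw [sum_eq_zero fun a ha => by rw [hcon a ha]; rfl] at h3
    exact zero_ne_one h3
  rw [← add_sum_erase t _ hb] at h3
  have h4 : 0 ≤ ∑ a ∈ t.erase b, c a ^ 2 := sum_nonneg fun a _ => sq_nonneg _
  have h5 : 0 < c b ^ 2 := by positivity
  have h6 : c b ^ 2 = 1 := by omega
  have h7 : ∑ a ∈ t.erase b, c a ^ 2 = 0 := by omega
  have h8 : ∀ a ∈ t.erase b, c a = 0 := fun a ha => by
    simpa using (sum_eq_zero_iff_of_nonneg fun a _ => sq_nonneg _).1 h7 a ha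
  have h9 : ∑ a ∈ t, c a • a = c b • b := by
    rw [← add_sum_erase t _ hb, sum_eq_zero fun a ha => by rw [h8 a ha, zero_smul], add_zero]
  rw [h9]
  rcases sq_eq_one_iff.1 h6 with h | h
  · left; rw [h, one_smul]; exact ht hb
  · right; rw [h, neg_smul, one_smul, neg_neg]; exact ht hb

/-- The permutation representation on the functions on a finite `G`-set. -/
def permRep {G : Type} [Group G] (Y : Type) [MulAction G Y] : Representation ℂ G (Y → ℂ) where
  toFun g := LinearMap.funLeft ℂ ℂ fun y => g⁻¹ • y
  map_one' := by ext; simp [LinearMap.funLeft_apply]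
  map_mul' g h := by
    refine LinearMap.ext fun f => funext fun y => ?_
    simp [LinearMap.funLeft_apply, mul_smul]

lemma perm_char_mem {G : Type} [Group G] [Fintype G] (Y : Type) [Fintype Y] [MulAction G Y] :
    (fun g : G => (Nat.card {y : Y // g • y = y} : ℂ)) ∈ AddSubmonoid.closure (IrrChar G) := by
  have h := char_eq_sum_irr _ (permRep (G := G) Y) rfl
  convert h using 1
  ext g
  rw [Representation.character, LinearMap.trace_eq_matrix_trace ℂ (Pi.basisFun ℂ Y), Matrix.trace]
  simp only [Matrix.diag_apply, LinearMap.toMatrix_apply, Pi.basisFun_apply, Pi.basisFun_repr]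
  have h1 : ∀ y : Y, permRep Y g (Pi.single y 1) y = if g • y = y then (1 : ℂ) else 0 := by
    intro y
    change (Pi.single y (1 : ℂ) : Y → ℂ) (g⁻¹ • y) = _
    rw [Pi.single_apply]
    simp only [inv_smul_eq_iff, eq_comm (a := y)]
  simp only [h1]
  rw [Nat.subtype_card (univ.filter fun y : Y => g • y = y) (by simp)]
  simp

/-- The action of `S_n` on the words of a given content. -/
abbrev wordAction {N n : ℕ} (α : Fin N →₀ ℕ) :
    MulAction (Equiv.Perm (Fin n)) {F : Fin n → Fin N // content F = α} where
  smul g F := ⟨F.1 ∘ (g⁻¹ : Equiv.Perm (Fin n)), by rw [content_comp, F.2]⟩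
  one_smul F := Subtype.ext (by ext; rfl)
  mul_smul g h F := Subtype.ext (by ext; rfl)

/-- The coefficients of power sum products are values of permutation characters, namely those on
words of a given content. -/
lemma coeff_fixP_mem {N n : ℕ} (α : Fin N →₀ ℕ) :
    (fun g : Equiv.Perm (Fin n) => MvPolynomial.coeff α (pp N g.partition.parts)) ∈
      Submodule.span ℤ (IrrChar (Equiv.Perm (Fin n))) := by
  let := wordAction (n := n) α
  have h := perm_char_mem (G := Equiv.Perm (Fin n)) {F : Fin n → Fin N // content F = α}
  have h2 : AddSubmonoid.closure (IrrChar (Equiv.Perm (Fin n))) ≤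
      (Submodule.span ℤ (IrrChar (Equiv.Perm (Fin n)))).toAddSubmonoid :=
    AddSubmonoid.closure_le.2 Submodule.subset_span
  refine Eq.mp (congrArg (· ∈ Submodule.span ℤ (IrrChar (Equiv.Perm (Fin n)))) ?_) (h2 h)
  ext g
  have h3 : ∀ F : Fin n → Fin N, ∏ i, (MvPolynomial.X (F i) : MvPolynomial (Fin N) ℂ) =
      MvPolynomial.monomial (content F) 1 := by
    intro F
    rw [prod_eq_content, prod_X_pow]; rfl
  rw [pp, ← fixP_eq_psumM, fixP, MvPolynomial.coeff_sum]
  simp only [h3, MvPolynomial.coeff_monomial]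
  rw [← sum_filter, filter_filter, sum_const, nsmul_eq_mul, mul_one]
  congr 1
  rw [← Nat.subtype_card (p := fun F : Fin n → Fin N => F ∘ g = F ∧ content F = α) _ (by simp)]
  have h4 : ∀ F : Fin n → Fin N, F ∘ (g⁻¹ : Equiv.Perm (Fin n)) = F ↔ F ∘ g = F := by
    intro F
    constructor <;> intro h <;> (nth_rewrite 1 [← h]; ext i; simp)
  refine Nat.card_congr ⟨fun F => ⟨F.1.1, (h4 _).1 (congrArg Subtype.val F.2), F.1.2⟩,
    fun F => ⟨⟨F.1, F.2.2⟩, Subtype.ext ((h4 _).2 F.2.1)⟩, fun F => rfl, fun F => rfl⟩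

/-- Expanding the Vandermonde determinant writes `chi n w` as an alternating sum of permutation
characters. -/
lemma chi_mem_span {N : ℕ} (n : ℕ) (w : Fin N → ℕ) :
    chi n w ∈ Submodule.span ℤ (IrrChar (Equiv.Perm (Fin n))) := by
  have h : chi n w = ∑ σ : Equiv.Perm (Fin N), (Equiv.Perm.sign σ : ℤ) •
      (if fs ((fun i : Fin N => (i : ℕ)) ∘ σ) ≤ fs w then (fun g : Equiv.Perm (Fin n) =>
        MvPolynomial.coeff (fs w - fs ((fun i : Fin N => (i : ℕ)) ∘ σ)) (pp N g.partition.parts))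
      else 0) := by
    ext g
    rw [chi, chiM, kap_apply, vdm_eq, alt, sum_mul, MvPolynomial.coeff_sum, Finset.sum_apply]
    refine sum_congr rfl fun σ _ => ?_
    rw [smul_mul_assoc, MvPolynomial.coeff_smul, MvPolynomial.coeff_monomial_mul', Pi.smul_apply]
    split_ifs <;> simp
  rw [h]
  refine Submodule.sum_mem _ fun σ _ => Submodule.smul_mem _ _ ?_
  split_ifs
  · exact coeff_fixP_mem _
  · exact Submodule.zero_mem _

/-! ### The irreducible characters of the symmetric group -/

section

open MvPolynomial

/-- The sum `0 + 1 + ⋯ + (N - 1)`. -/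
def dl (N : ℕ) : ℕ := ∑ i : Fin N, (i : ℕ)

lemma dl_eq_range (N : ℕ) : dl N = ∑ i ∈ range N, i := Fin.sum_univ_eq_sum_range (fun i => i) N

lemma fs_degree {N : ℕ} (w : Fin N → ℕ) : (fs w).degree = ∑ i, w i := by
  rw [Finsupp.degree_eq_sum]; rfl

lemma vdm_homogeneous (N : ℕ) : (vdm N).IsHomogeneous (dl N) := by
  rw [vdm_eq, alt]
  refine IsHomogeneous.sum _ _ _ fun σ _ => ?_
  rw [zsmul_eq_mul, ← map_intCast (C : ℂ →+* MvPolynomial (Fin N) ℂ), C_mul_monomial]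
  refine isHomogeneous_monomial _ ?_
  rw [fs_degree]
  exact Fintype.sum_equiv σ _ _ fun i => rfl

lemma psum_homogeneous (N a : ℕ) : (psum (Fin N) ℂ a).IsHomogeneous a := by
  refine IsHomogeneous.sum _ _ _ fun i _ => ?_
  simpa using (isHomogeneous_X ℂ i).pow a

lemma pp_homogeneous (N : ℕ) (s : Multiset ℕ) : (pp N s).IsHomogeneous s.sum := by
  induction s using Multiset.induction_on with
  | empty => rw [pp_zero]; exact isHomogeneous_one _ _
  | cons a s ih =>
    rw [pp_cons, Multiset.sum_cons]
    exact (psum_homogeneous N a).mul ih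

lemma chiM_degree {N : ℕ} {w : Fin N → ℕ} {s : Multiset ℕ} (h : ∑ i, w i ≠ dl N + s.sum) :
    chiM w s = 0 := by
  refine ((vdm_homogeneous N).mul (pp_homogeneous N s)).coeff_eq_zero ?_
  rwa [fs_degree]

lemma chiM_comp {N : ℕ} (w : Fin N → ℕ) (τ : Equiv.Perm (Fin N)) (s : Multiset ℕ) :
    chiM (w ∘ τ) s = (Equiv.Perm.sign τ : ℤ) • chiM w s := kap_comp w τ (psumM_symm s)

lemma chiM_not_inj {N : ℕ} {w : Fin N → ℕ} (hw : ¬ Function.Injective w) (s : Multiset ℕ) :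
    chiM w s = 0 := kap_eq_zero w hw (psumM_symm s)

/-- Exponent vectors of the Schur functions of degree `n`: beta numbers of partitions of `n`. -/
def Valid {N : ℕ} (n : ℕ) (w : Fin N → ℕ) : Prop := Function.Injective w ∧ ∑ i, w i = dl N + n

lemma partition_inv {n : ℕ} (g : Equiv.Perm (Fin n)) : g⁻¹.partition = g.partition := by
  refine Equiv.Perm.partition_eq_of_isConj.1 (Equiv.Perm.isConj_of_cycleType_eq ?_)
  exact Equiv.Perm.cycleType_inv g

lemma chi_inv {N n : ℕ} (w : Fin N → ℕ) (g : Equiv.Perm (Fin n)) : chi n w g⁻¹ = chi n w g := by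
  rw [chi, chi, partition_inv]

lemma ip_chi {N n : ℕ} {w : Fin N → ℕ} (hw : Valid n w) (v : Fin N → ℕ) :
    ip (chi n w) (chi n v) = ∑ σ : Equiv.Perm (Fin N),
      if w ∘ σ = v then ((Equiv.Perm.sign σ : ℤ) : ℂ) else 0 := by
  simp only [ip, chi_inv]
  rw [sum_chi_mul_chi w v hw.2, Nat.card_eq_fintype_card, Fintype.card_perm, Fintype.card_fin,
    inv_mul_cancel_left₀ (Nat.cast_ne_zero.2 n.factorial_ne_zero)]

lemma ip_chi_self {N n : ℕ} {w : Fin N → ℕ} (hw : Valid n w) : ip (chi n w) (chi n w) = 1 := by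
  rw [ip_chi hw, sum_eq_single 1]
  · rw [if_pos (by ext; rfl)]; simp
  · intro σ _ hσ
    rw [if_neg]
    intro h
    apply hσ
    ext i
    exact congrArg _ (hw.1 (congrFun h i))
  · simp

lemma ip_chi_ne {N n : ℕ} {w v : Fin N → ℕ} (hw : Valid n w) (h : Set.range w ≠ Set.range v) :
    ip (chi n w) (chi n v) = 0 := by
  rw [ip_chi hw]
  refine sum_eq_zero fun σ _ => if_neg ?_
  rintro rfl
  apply h
  rw [Set.range_comp, σ.surjective.range_eq, Set.image_univ]

lemma chi_irr {N n : ℕ} {w : Fin N → ℕ} (hw : Valid n w) :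
    chi n w ∈ IrrChar (Equiv.Perm (Fin n)) ∨ -chi n w ∈ IrrChar (Equiv.Perm (Fin n)) :=
  irr_of_norm_one (chi_mem_span n w) (ip_chi_self hw)

lemma irr_one_pos {G : Type} [Group G] [Fintype G] {ψ : G → ℂ} (hψ : ψ ∈ IrrChar G) :
    ∃ k : ℕ, 0 < k ∧ ψ 1 = k := by
  have h1 := ip_irr hψ hψ
  rw [if_pos rfl] at h1
  obtain ⟨V, hV, rfl⟩ := hψ
  refine ⟨Module.finrank ℂ V, Nat.pos_of_ne_zero fun h0 => ?_, FDRep.char_one V⟩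
  have hs : Subsingleton V := Module.finrank_zero_iff.1 h0
  have h2 : ∀ g, FDRep.character V g = 0 := by
    intro g
    have : V.ρ g = 0 := by ext x; exact Subsingleton.elim _ _
    rw [FDRep.character, this, map_zero]
  simp [ip, h2] at h1

/-- Completeness of the Schur functions: a combination of power sum products is determined by its
pairings with the `chiM w`. -/
lemma pp_comb_eq_zero {N d : ℕ} (hd : d ≤ N) (c : Nat.Partition d → ℂ)
    (h : ∀ w : Fin N → ℕ, Valid d w → ∑ l, c l * chiM w l.parts = 0) : c = 0 := by
  have h0 : vdm N * ∑ l, c l • pp N l.parts = 0 := by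
    ext m
    obtain ⟨w, rfl⟩ := Finsupp.equivFunOnFinite.symm.surjective m
    have e : coeff (fs w) (vdm N * ∑ l, c l • pp N l.parts) = ∑ l, c l * chiM w l.parts := by
      rw [mul_sum, coeff_sum]
      refine sum_congr rfl fun l _ => ?_
      rw [mul_smul_comm, coeff_smul, smul_eq_mul]; rfl
    rw [coeff_zero]
    refine e.trans ?_
    by_cases hw : Valid d w
    · exact h w hw
    · refine sum_eq_zero fun l _ => ?_
      by_cases hi : Function.Injective w
      · rw [chiM_degree, mul_zero]
        rw [l.parts_sum]
        exact fun e => hw ⟨hi, e⟩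
      · rw [chiM_not_inj hi, mul_zero]
  have h1 := (mul_eq_zero.1 h0).resolve_left (vdm_ne_zero N)
  exact funext (Fintype.linearIndependent_iff.1 (linearIndependent_pp hd) c h1)

lemma sum_by_partition {n : ℕ} {M : Type*} [AddCommMonoid M]
    (F : Equiv.Perm (Fin n) → M) :
    ∑ g, F g = ∑ l : Nat.Partition (Fintype.card (Fin n)), ∑ g with g.partition = l, F g :=
  (sum_fiberwise_of_maps_to (fun _ _ => mem_univ _) F).symm

/-- Every irreducible character of `S_n` is some `chi n w` up to sign. -/
lemma exists_chi {N n : ℕ} (hN : n ≤ N) {ψ : Equiv.Perm (Fin n) → ℂ}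
    (hψ : ψ ∈ IrrChar (Equiv.Perm (Fin n))) :
    ∃ w : Fin N → ℕ, Valid n w ∧ (ψ = chi n w ∨ ψ = -chi n w) := by
  by_contra hcon
  push Not at hcon
  have hz : ∀ w : Fin N → ℕ, Valid n w → ip (chi n w) ψ = 0 := by
    intro w hw
    obtain ⟨h1, h2⟩ := hcon w hw
    rcases chi_irr hw with h | h
    · rw [ip_irr h hψ, if_neg (Ne.symm h1)]
    · have h3 := ip_irr h hψ
      rw [if_neg (Ne.symm h2)] at h3
      have : ip (-chi n w) ψ = -ip (chi n w) ψ := by simp [ip]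
      rw [this] at h3
      exact neg_eq_zero.1 h3
  have hN' : Fintype.card (Fin n) ≤ N := by simpa using hN
  have h0 := pp_comb_eq_zero hN' (fun l => ∑ g : Equiv.Perm (Fin n) with g.partition = l, ψ g⁻¹) (by
    intro w hw
    have hw' : Valid n w := by simpa using hw
    have h1 := hz w hw'
    rw [ip, mul_eq_zero] at h1
    have h2 := h1.resolve_left (inv_ne_zero (Nat.cast_ne_zero.2 Nat.card_pos.ne'))
    rw [sum_by_partition] at h2
    rw [← h2]
    refine sum_congr rfl fun l _ => ?_
    rw [sum_mul]
    refine sum_congr rfl fun g hg => ?_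
    rw [chi, (mem_filter.1 hg).2, mul_comm])
  have h1 := congrFun h0 (1 : Equiv.Perm (Fin n)).partition
  have h2 : (univ.filter fun g : Equiv.Perm (Fin n) => g.partition =
      (1 : Equiv.Perm (Fin n)).partition) = {1} := by
    ext g
    rw [mem_filter, mem_singleton, ← Equiv.Perm.partition_eq_of_isConj]
    simp
  simp only [h2, sum_singleton, inv_one, Pi.zero_apply] at h1
  obtain ⟨k, hk, hk'⟩ := irr_one_pos hψ
  rw [h1] at hk'
  exact hk.ne (by exact_mod_cast hk')

lemma exists_partition_eq {n : ℕ} (l : Nat.Partition (Fintype.card (Fin n))) :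
    ∃ g : Equiv.Perm (Fin n), g.partition = l := by
  have h1 : ∀ a ∈ l.parts.filter (¬ 2 ≤ ·), a = 1 := by
    intro a ha
    have := l.parts_pos (Multiset.mem_filter.1 ha).1
    have := (Multiset.mem_filter.1 ha).2
    omega
  have h2 : (l.parts.filter (2 ≤ ·)).sum + (l.parts.filter (¬ 2 ≤ ·)).sum =
      Fintype.card (Fin n) := by
    rw [← Multiset.sum_add, Multiset.filter_add_not, l.parts_sum]
  have h3 : (l.parts.filter (¬ 2 ≤ ·)).sum = Multiset.card (l.parts.filter (¬ 2 ≤ ·)) := by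
    conv_lhs => rw [Multiset.eq_replicate_card.2 h1, Multiset.sum_replicate, smul_eq_mul, mul_one]
  obtain ⟨g, hg⟩ := (Equiv.Perm.exists_with_cycleType_iff (α := Fin n)
    (m := l.parts.filter (2 ≤ ·))).2 ⟨by omega, fun a ha => (Multiset.mem_filter.1 ha).2⟩
  refine ⟨g, Nat.Partition.ext ?_⟩
  rw [Equiv.Perm.parts_partition, ← Equiv.Perm.sum_cycleType, hg,
    ← Multiset.filter_add_not (2 ≤ ·) l.parts]
  congr 1
  · rw [Multiset.filter_add_not]
  · rw [Multiset.filter_add_not]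
    refine (Multiset.eq_replicate.2 ⟨?_, h1⟩).symm
    omega

end

/-! ### Beta sets -/

section

open MvPolynomial

lemma dl_succ (N : ℕ) : dl (N + 1) = dl N + N := by
  rw [dl_eq_range, dl_eq_range, sum_range_succ]

lemma dl_card_le (X : Finset ℕ) : dl X.card ≤ ∑ x ∈ X, x := by
  induction X using Finset.induction_on_max with
  | empty => simp [dl]
  | insert a s hs ih =>
    have ha : a ∉ s := fun h => lt_irrefl _ (hs a h)
    rw [card_insert_of_notMem ha, sum_insert ha, dl_succ]
    have : s.card ≤ a := by
      have h1 : s ⊆ range a := fun x hx => mem_range.2 (hs x hx)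
      simpa using card_le_card h1
    omega

/-- The beta sets with `N` elements of the partitions of `d`. -/
def bet (N d : ℕ) : Finset (Finset ℕ) :=
  (powersetCard N (range (N + d))).filter fun X => ∑ x ∈ X, x = dl N + d

lemma mem_bet {N d : ℕ} {X : Finset ℕ} : X ∈ bet N d ↔ X.card = N ∧ ∑ x ∈ X, x = dl N + d := by
  rw [bet, mem_filter, mem_powersetCard]
  refine ⟨fun h => ⟨h.1.2, h.2⟩, fun h => ⟨⟨fun x hx => ?_, h.1⟩, h.2⟩⟩
  have h1 := dl_card_le (X.erase x)
  have h2 := add_sum_erase X (fun x => x) hx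
  have h3 := card_erase_add_one hx
  have h4 := dl_succ (X.erase x).card
  rw [h3, h.1] at h4
  rw [mem_range]
  omega

lemma bet_lt {N d : ℕ} {X : Finset ℕ} (hX : X ∈ bet N d) {x : ℕ} (hx : x ∈ X) : x < N + d :=
  mem_range.1 ((mem_powersetCard.1 (mem_filter.1 hX).1).1 hx)

lemma bet_small {N d : ℕ} {X : Finset ℕ} (hX : X ∈ bet N d) {x : ℕ} (hx : x + d < N) : x ∈ X := by
  by_contra h
  have h1 := dl_card_le (insert x X)
  rw [card_insert_of_notMem h, sum_insert h, dl_succ, (mem_bet.1 hX).1, (mem_bet.1 hX).2] at h1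
  omega

/-- The increasing enumeration of a set with `N` elements (and `0` on other sets). -/
def enum (N : ℕ) (X : Finset ℕ) : Fin N → ℕ := if h : X.card = N then X.orderEmbOfFin h else 0

lemma enum_injective {N : ℕ} {X : Finset ℕ} (h : X.card = N) : Function.Injective (enum N X) := by
  rw [enum, dif_pos h]; exact (X.orderEmbOfFin h).injective

lemma image_enum {N : ℕ} {X : Finset ℕ} (h : X.card = N) : univ.image (enum N X) = X := by
  rw [enum, dif_pos h]
  ext x
  simp

lemma enum_mem {N : ℕ} {X : Finset ℕ} (h : X.card = N) (i : Fin N) : enum N X i ∈ X := by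
  have := mem_image_of_mem (enum N X) (mem_univ i)
  rwa [image_enum h] at this

lemma sum_enum {N : ℕ} {X : Finset ℕ} (h : X.card = N) : ∑ i, enum N X i = ∑ x ∈ X, x := by
  conv_rhs => rw [← image_enum h]
  rw [sum_image fun a _ b _ e => enum_injective h e]

lemma valid_enum {N d : ℕ} {X : Finset ℕ} (h : X ∈ bet N d) : Valid d (enum N X) := by
  rw [mem_bet] at h
  exact ⟨enum_injective h.1, by rw [sum_enum h.1, h.2]⟩

lemma valid_image {N d : ℕ} {w : Fin N → ℕ} (h : Valid d w) : univ.image w ∈ bet N d := by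
  rw [mem_bet, card_image_of_injective _ h.1, sum_image fun a _ b _ e => h.1 e]
  exact ⟨by simp, h.2⟩

lemma exists_perm_of_image_eq {N : ℕ} {w v : Fin N → ℕ} (hw : Function.Injective w)
    (h : univ.image w = univ.image v) :
    ∃ τ : Equiv.Perm (Fin N), w = v ∘ τ := by
  have h1 : ∀ i, ∃ j, v j = w i := by
    intro i
    have : w i ∈ univ.image v := by rw [← h]; exact mem_image_of_mem _ (mem_univ _)
    simpa using this
  choose f hf using h1
  have hi : Function.Injective f := fun a b e => hw (by rw [← hf a, ← hf b, e])
  exact ⟨Equiv.ofBijective f (Finite.injective_iff_bijective.1 hi), funext fun i => (hf i).symm⟩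

lemma chiM_image {N : ℕ} {w v : Fin N → ℕ} (hw : Function.Injective w)
    (h : univ.image w = univ.image v) :
    ∃ e : ℤ, (e = 1 ∨ e = -1) ∧ ∀ s, chiM w s = e • chiM v s := by
  obtain ⟨τ, rfl⟩ := exists_perm_of_image_eq hw h
  refine ⟨Equiv.Perm.sign τ, ?_, fun s => chiM_comp v τ s⟩
  rcases Int.units_eq_one_or (Equiv.Perm.sign τ) with h | h <;> simp [h]

/-- The character value of type `s` attached to a beta set. -/
def chX (N : ℕ) (X : Finset ℕ) (s : Multiset ℕ) : ℂ := chiM (enum N X) s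

lemma chiM_eq_chX {N : ℕ} {w : Fin N → ℕ} (hw : Function.Injective w) :
    ∃ e : ℤ, (e = 1 ∨ e = -1) ∧ ∀ s, chiM w s = e • chX N (univ.image w) s := by
  have hc : (univ.image w).card = N := by simp [card_image_of_injective _ hw]
  exact chiM_image hw (image_enum hc).symm

/-- The class function `chi` of a beta set, with the sign that makes it a character. -/
def irr (N n : ℕ) (X : Finset ℕ) : Equiv.Perm (Fin n) → ℂ :=
  if chi n (enum N X) ∈ IrrChar (Equiv.Perm (Fin n)) then chi n (enum N X) else -chi n (enum N X)

lemma irr_mem_IrrChar {N n : ℕ} {X : Finset ℕ} (hX : X ∈ bet N n) :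
    irr N n X ∈ IrrChar (Equiv.Perm (Fin n)) := by
  rw [irr]
  split_ifs with h
  · exact h
  · exact (chi_irr (valid_enum hX)).resolve_left h

lemma irr_eq (N n : ℕ) (X : Finset ℕ) :
    ∃ e : ℤ, (e = 1 ∨ e = -1) ∧ ∀ g, irr N n X g = e • chX N X g.partition.parts := by
  by_cases h : chi n (enum N X) ∈ IrrChar (Equiv.Perm (Fin n))
  · exact ⟨1, Or.inl rfl, fun g => by rw [irr, if_pos h, one_smul]; rfl⟩
  · exact ⟨-1, Or.inr rfl, fun g => by rw [irr, if_neg h, neg_smul, one_smul]; rfl⟩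

/-- Proportional up to sign irreducible characters coincide: their values at `1` are positive. -/
lemma irr_char_eq {G : Type} [Group G] [Fintype G] {φ ψ : G → ℂ} (hφ : φ ∈ IrrChar G)
    (hψ : ψ ∈ IrrChar G) {e : ℤ} (he : e = 1 ∨ e = -1) (h : ∀ g, φ g = e • ψ g) : φ = ψ := by
  rcases he with rfl | rfl
  · ext g; simpa using h g
  · exfalso
    obtain ⟨k, hk, hk'⟩ := irr_one_pos hφ
    obtain ⟨l, hl, hl'⟩ := irr_one_pos hψ
    have h1 := h 1
    rw [hk', hl', neg_smul, one_smul] at h1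
    have h2 : ((k + l : ℕ) : ℂ) = 0 := by push_cast; rw [h1]; ring
    have := Nat.cast_eq_zero.1 h2
    omega

lemma irr_surj {N n : ℕ} (hN : n ≤ N) {ψ : Equiv.Perm (Fin n) → ℂ}
    (hψ : ψ ∈ IrrChar (Equiv.Perm (Fin n))) : ∃ X ∈ bet N n, ψ = irr N n X := by
  obtain ⟨w, hw, h⟩ := exists_chi hN hψ
  obtain ⟨e, he, h1⟩ := chiM_eq_chX hw.1
  obtain ⟨e', he', h2⟩ := irr_eq N n (univ.image w)
  refine ⟨_, valid_image hw, ?_⟩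
  rcases h with rfl | rfl
  · refine irr_char_eq hψ (irr_mem_IrrChar (valid_image hw)) (e := e * e') ?_ fun g => ?_
    · rcases he with rfl | rfl <;> rcases he' with rfl | rfl <;> simp
    · rw [h2, chi, h1, smul_smul, mul_assoc]
      rcases he' with rfl | rfl <;> simp
  · refine irr_char_eq hψ (irr_mem_IrrChar (valid_image hw)) (e := -(e * e')) ?_ fun g => ?_
    · rcases he with rfl | rfl <;> rcases he' with rfl | rfl <;> simp
    · rw [h2, Pi.neg_apply, chi, h1, smul_smul, neg_mul, mul_assoc]
      rcases he' with rfl | rfl <;> simp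

lemma irr_inj {N n : ℕ} {X Y : Finset ℕ} (hX : X ∈ bet N n) (hY : Y ∈ bet N n)
    (h : irr N n X = irr N n Y) : X = Y := by
  by_contra hne
  have h1 := ip_chi_ne (v := enum N Y) (valid_enum hX) (by
    intro e
    apply hne
    rw [← image_enum (mem_bet.1 hX).1, ← image_enum (mem_bet.1 hY).1]
    ext x
    simpa using Set.ext_iff.1 e x)
  have h2 : ip (irr N n X) (irr N n Y) = 0 := by
    have hn1 : ∀ a b : Equiv.Perm (Fin n) → ℂ, ip (-a) b = -ip a b := fun a b => by simp [ip]
    have hn2 : ∀ a b : Equiv.Perm (Fin n) → ℂ, ip a (-b) = -ip a b := fun a b => by simp [ip]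
    rw [irr, irr]
    split_ifs <;> simp [hn1, hn2, h1]
  rw [h, ip_irr (irr_mem_IrrChar hY) (irr_mem_IrrChar hY), if_pos rfl] at h2
  exact one_ne_zero h2

end

/-! ### Removal of rim hooks and the sign character -/

section

open MvPolynomial

lemma chiM_cons {N : ℕ} (w : Fin N → ℕ) (m : ℕ) (t : Multiset ℕ) :
    chiM w (m ::ₘ t) = ∑ i, if m ≤ w i then chiM (Function.update w i (w i - m)) t else 0 := by
  rw [chiM, kap_apply, pp_cons, mul_left_comm, coeff_psum_mul]
  refine sum_congr rfl fun i _ => ?_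
  have h : fs w i = w i := rfl
  rw [h]
  split_ifs with hm
  · rw [chiM, kap_apply]
    congr 1
    ext j
    by_cases hj : j = i
    · subst hj; simp
    · simp [hj]
  · rfl

/-- The Murnaghan–Nakayama rule in terms of beta numbers `w` and their complement `u`
in `{0, …, K - 1}`. -/
lemma chiM_cons_compl {N K : ℕ} {w u : Fin N → ℕ} (hu : Function.Injective u)
    (hwK : ∀ i, w i < K) (hc : ∀ y < K, (∃ i, w i = y) ∨ ∃ j, u j = y) {m : ℕ} (hm : 0 < m)
    (t : Multiset ℕ) :
    chiM w (m ::ₘ t) =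
      ∑ i, ∑ j, if w i = u j + m then chiM (Function.update w i (u j)) t else 0 := by
  rw [chiM_cons]
  refine sum_congr rfl fun i _ => ?_
  by_cases h : m ≤ w i
  · rw [if_pos h]
    by_cases hex : ∃ j, u j = w i - m
    · obtain ⟨j, hj⟩ := hex
      rw [sum_eq_single j]
      · rw [if_pos (by omega), hj]
      · intro k _ hk
        rw [if_neg]
        intro e
        exact hk (hu (by omega))
      · simp
    · obtain ⟨k, hk⟩ := (hc (w i - m) (lt_of_le_of_lt (Nat.sub_le _ _) (hwK i))).resolve_right hex
      rw [chiM_not_inj, sum_eq_zero]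
      · intro j _
        rw [if_neg]
        intro e
        exact hex ⟨j, by omega⟩
      · have hki : k ≠ i := by rintro rfl; omega
        intro hinj
        apply hki
        apply hinj
        simp [hki, hk]
  · rw [if_neg h, sum_eq_zero]
    intro j _
    rw [if_neg (by omega)]

/-- The values `0, …, 2N - 1`, the upper half in decreasing order. -/
def bval (N : ℕ) : Fin N ⊕ Fin N → ℕ
  | Sum.inl a => a
  | Sum.inr b => 2 * N - 1 - b

lemma bval_lt {N : ℕ} (c : Fin N ⊕ Fin N) : bval N c < 2 * N := by
  rcases c with a | b
  · have := a.2; simp only [bval]; omega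
  · have := b.2; simp only [bval]; omega

lemma bval_inj {N : ℕ} : Function.Injective (bval N) := by
  rintro (a | a) (b | b) h <;> simp only [bval] at h <;> have := a.2 <;> have := b.2
  · rw [Fin.ext h]
  · omega
  · omega
  · rw [Fin.ext (show (a : ℕ) = b by omega)]

lemma bval_surj {N y : ℕ} (hy : y < 2 * N) : ∃ c, bval N c = y := by
  by_cases h : y < N
  · exact ⟨Sum.inl ⟨y, h⟩, rfl⟩
  · exact ⟨Sum.inr ⟨2 * N - 1 - y, by omega⟩, by simp only [bval]; omega⟩

/-- The beta numbers attached to a permutation of the `2N` values. -/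
def wl {N : ℕ} (π : Equiv.Perm (Fin N ⊕ Fin N)) (i : Fin N) : ℕ := bval N (π (Sum.inl i))

/-- The beta numbers of the conjugate partition: the reflected complement of `wl π`. -/
def wr {N : ℕ} (π : Equiv.Perm (Fin N ⊕ Fin N)) (j : Fin N) : ℕ :=
  2 * N - 1 - bval N (π (Sum.inr j))

lemma chiM_zero {N : ℕ} (w : Fin N → ℕ) : chiM w 0 = ∑ σ : Equiv.Perm (Fin N),
      if (fun i => (σ i : ℕ)) = w then ((Equiv.Perm.sign σ : ℤ) : ℂ) else 0 := by
  rw [chiM, kap_apply, pp_zero, mul_one, vdm_eq, coeff_alt]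
  rfl

lemma chiM_zero_perm {N : ℕ} (σ : Equiv.Perm (Fin N)) :
    chiM (fun i => (σ i : ℕ)) 0 = ((Equiv.Perm.sign σ : ℤ) : ℂ) := by
  rw [chiM_zero, sum_eq_single σ]
  · simp
  · intro τ _ h
    rw [if_neg]
    intro e
    exact h (Equiv.ext fun i => Fin.ext (congrFun e i))
  · simp

/-- Conjugation of partitions multiplies the character by the sign. -/
lemma chiM_conj {N : ℕ} (s : Multiset ℕ) (hs : ∀ a ∈ s, 0 < a) :
    ∀ π : Equiv.Perm (Fin N ⊕ Fin N),
      ((Equiv.Perm.sign π : ℤ) : ℂ) * chiM (wl π) s = (-1) ^ (Multiset.card s) * chiM (wr π) s := by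
  induction s using Multiset.induction_on with
  | empty =>
    intro π
    by_cases h : ∃ σ τ : Equiv.Perm (Fin N), Equiv.Perm.sumCongr σ τ = π
    · obtain ⟨σ, τ, rfl⟩ := h
      have h1 : wl (Equiv.Perm.sumCongr σ τ) = fun i => (σ i : ℕ) := by
        ext i; simp [wl, bval]
      have h2 : wr (Equiv.Perm.sumCongr σ τ) = fun i => (τ i : ℕ) := by
        ext i
        have := (τ i).2
        simp only [wr, bval, Equiv.Perm.sumCongr_apply, Sum.map_inr]
        omega
      rw [h1, h2, chiM_zero_perm, chiM_zero_perm, Equiv.Perm.sign_sumCongr]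
      rcases Int.units_eq_one_or (Equiv.Perm.sign σ) with h | h <;>
      rcases Int.units_eq_one_or (Equiv.Perm.sign τ) with h' | h' <;> simp [h, h']
    · have h1 : chiM (wl π) 0 = 0 := by
        rw [chiM_zero]
        refine sum_eq_zero fun σ _ => if_neg fun e => h ?_
        have := Equiv.Perm.mem_sumCongrHom_range_of_perm_mapsTo_inl (σ := π) (by
          rintro _ ⟨i, rfl⟩
          exact ⟨σ i, bval_inj (congrFun e i)⟩)
        obtain ⟨⟨a, b⟩, hab⟩ := this
        exact ⟨a, b, hab⟩
      have h2 : chiM (wr π) 0 = 0 := by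
        rw [chiM_zero]
        refine sum_eq_zero fun σ _ => if_neg fun e => h ?_
        have hr : ∀ j, π (Sum.inr j) = Sum.inr (σ j) := by
          intro j
          apply bval_inj
          have h1 := congrFun e j
          have h2 := bval_lt (π (Sum.inr j))
          have h3 : bval N (Sum.inr (σ j)) = 2 * N - 1 - σ j := rfl
          simp only [wr] at h1
          omega
        have := Equiv.Perm.mem_sumCongrHom_range_of_perm_mapsTo_inl (σ := π) (by
          rintro _ ⟨i, rfl⟩
          rcases hc : π (Sum.inl i) with a | b
          · exact ⟨a, rfl⟩
          · exfalso
            have := hr (σ.symm b)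
            rw [Equiv.apply_symm_apply, ← hc] at this
            exact Sum.inr_ne_inl (π.injective this))
        obtain ⟨⟨a, b⟩, hab⟩ := this
        exact ⟨a, b, hab⟩
      rw [h1, h2, mul_zero, mul_zero]
  | cons m t ih =>
    intro π
    have hm : 0 < m := hs m (Multiset.mem_cons_self _ _)
    have ih' := ih fun a ha => hs a (Multiset.mem_cons_of_mem ha)
    have hcov : ∀ y < 2 * N, (∃ i, wl π i = y) ∨ ∃ j, bval N (π (Sum.inr j)) = y := by
      intro y hy
      obtain ⟨c, hc⟩ := bval_surj hy
      obtain ⟨k, rfl⟩ := π.surjective c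
      rcases k with i | j
      · exact Or.inl ⟨i, hc⟩
      · exact Or.inr ⟨j, hc⟩
    rw [chiM_cons_compl (K := 2 * N) (w := wl π) (u := fun j => bval N (π (Sum.inr j)))
      (fun a b e => Sum.inr_injective (π.injective (bval_inj e))) (fun i => bval_lt _) hcov hm]
    rw [chiM_cons_compl (K := 2 * N) (w := wr π) (u := fun i => 2 * N - 1 - bval N (π (Sum.inl i)))
      (fun a b e => Sum.inl_injective (π.injective (bval_inj (by
        have h1 := bval_lt (π (Sum.inl a))
        have h2 := bval_lt (π (Sum.inl b))
        simp only at e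
        omega))))
      (fun i => by have := bval_lt (π (Sum.inr i)); simp only [wr]; omega) (by
        intro y hy
        rcases hcov (2 * N - 1 - y) (by omega) with ⟨i, hi⟩ | ⟨j, hj⟩
        · right; refine ⟨i, ?_⟩; simp only [wl] at hi; omega
        · left; refine ⟨j, ?_⟩; simp only [wr]; omega) hm]
    rw [sum_comm (s := univ (α := Fin N)), mul_sum, mul_sum]
    refine sum_congr rfl fun j _ => ?_
    rw [mul_sum, mul_sum]
    refine sum_congr rfl fun i _ => ?_
    have hi := bval_lt (π (Sum.inl i))
    have hj := bval_lt (π (Sum.inr j))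
    by_cases hc : bval N (π (Sum.inl i)) = bval N (π (Sum.inr j)) + m
    · rw [if_pos (by simpa only [wl] using hc), if_pos (by simp only [wr]; omega)]
      have h := ih' (π * Equiv.swap (Sum.inl i) (Sum.inr j))
      have e1 : wl (π * Equiv.swap (Sum.inl i) (Sum.inr j)) =
          Function.update (wl π) i (bval N (π (Sum.inr j))) := by
        ext k
        by_cases hk : k = i
        · subst hk; simp [wl]
        · simp [wl, hk, Equiv.swap_apply_of_ne_of_ne]
      have e2 : wr (π * Equiv.swap (Sum.inl i) (Sum.inr j)) =
          Function.update (wr π) j (2 * N - 1 - bval N (π (Sum.inl i))) := by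
        ext k
        by_cases hk : k = j
        · subst hk; simp [wr]
        · simp [wr, hk, Equiv.swap_apply_of_ne_of_ne]
      rw [e1, e2, Equiv.Perm.sign_mul, Equiv.Perm.sign_swap (by simp)] at h
      rw [Multiset.card_cons, pow_succ, mul_neg_one, neg_mul, ← h]
      simp
    · rw [if_neg (by simpa only [wl] using hc), if_neg (by simp only [wr]; omega), mul_zero,
        mul_zero]

/-- The beta set of the conjugate partition: the complement, reflected in `{0, …, 2N - 1}`. -/
def cj (N : ℕ) (X : Finset ℕ) : Finset ℕ := (range (2 * N) \ X).image fun y => 2 * N - 1 - y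

lemma mem_cj {N : ℕ} {X : Finset ℕ} {x : ℕ} :
    x ∈ cj N X ↔ x < 2 * N ∧ 2 * N - 1 - x ∉ X := by
  simp only [cj, mem_image, mem_sdiff, mem_range]
  constructor
  · rintro ⟨y, ⟨h1, h2⟩, rfl⟩
    refine ⟨by omega, ?_⟩
    rwa [show 2 * N - 1 - (2 * N - 1 - y) = y by omega]
  · rintro ⟨h1, h2⟩
    exact ⟨2 * N - 1 - x, ⟨by omega, h2⟩, by omega⟩

lemma dl_two_mul (N : ℕ) : dl (2 * N) = N * (2 * N - 1) := by
  induction N with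
  | zero => simp [dl]
  | succ N ih =>
    rw [show 2 * (N + 1) = 2 * N + 1 + 1 by ring, dl_succ, dl_succ, ih]
    rcases N with _ | N
    · simp
    · rw [show 2 * (N + 1) - 1 = 2 * N + 1 by omega,
        show 2 * (N + 1) + 1 + 1 - 1 = 2 * N + 3 by omega]
      ring

lemma cj_mem_bet {N d : ℕ} (hd : d ≤ N) {X : Finset ℕ} (hX : X ∈ bet N d) : cj N X ∈ bet N d := by
  have hsub : X ⊆ range (2 * N) := fun x hx => by
    have := bet_lt hX hx
    rw [mem_range]; omega
  obtain ⟨h1, h2⟩ := mem_bet.1 hX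
  have hinj : Set.InjOn (fun y => 2 * N - 1 - y) (range (2 * N) \ X : Finset ℕ) := by
    intro a ha b hb e
    have ha' := mem_range.1 (mem_sdiff.1 (mem_coe.1 ha)).1
    have hb' := mem_range.1 (mem_sdiff.1 (mem_coe.1 hb)).1
    simp only at e
    omega
  have hcard : (range (2 * N) \ X).card = N := by
    rw [card_sdiff_of_subset hsub, card_range, h1]; omega
  rw [mem_bet, cj, card_image_of_injOn hinj, sum_image hinj]
  refine ⟨hcard, ?_⟩
  have h3 : ∑ y ∈ range (2 * N) \ X, (2 * N - 1 - y) + ∑ y ∈ range (2 * N) \ X, y =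
      N * (2 * N - 1) := by
    rw [← sum_add_distrib, sum_congr rfl (g := fun _ => 2 * N - 1), sum_const, hcard, smul_eq_mul]
    intro y hy
    have := mem_range.1 (mem_sdiff.1 hy).1
    omega
  have h4 := sum_sdiff hsub (f := fun x => x)
  have h5 := dl_two_mul N
  rw [dl_eq_range] at h5
  omega

/-- `chiM_conj` restated for beta sets, up to a sign independent of `s`. -/
lemma chX_cj {N d : ℕ} (hd : d ≤ N) {X : Finset ℕ} (hX : X ∈ bet N d) :
    ∃ e : ℤ, (e = 1 ∨ e = -1) ∧ ∀ s : Multiset ℕ, (∀ a ∈ s, 0 < a) →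
      (-1) ^ (Multiset.card s) * chX N X s = e • chX N (cj N X) s := by
  have hX' := cj_mem_bet hd hX
  have hw := enum_injective (mem_bet.1 hX).1
  have hw' := enum_injective (mem_bet.1 hX').1
  have hmem := enum_mem (mem_bet.1 hX).1
  have hmem' := enum_mem (mem_bet.1 hX').1
  have hl : ∀ i, ∃ c, bval N c = enum N X i := fun i =>
    bval_surj (lt_of_lt_of_le (bet_lt hX (hmem i)) (by omega))
  have hr : ∀ i, ∃ c, bval N c = 2 * N - 1 - enum N (cj N X) i := fun i =>
    bval_surj (by have := (mem_cj.1 (hmem' i)).1; omega)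
  choose f hf using hl
  choose f' hf' using hr
  have hinj : Function.Injective (Sum.elim f f') := by
    rintro (a | a) (b | b) e <;> simp only [Sum.elim_inl, Sum.elim_inr] at e <;>
      have e := congrArg (bval N) e
    · rw [hf, hf] at e; rw [hw e]
    · rw [hf, hf'] at e
      exact absurd (e ▸ hmem a) (mem_cj.1 (hmem' b)).2
    · rw [hf, hf'] at e
      exact absurd (e ▸ hmem b) (mem_cj.1 (hmem' a)).2
    · rw [hf', hf'] at e
      have h1 := (mem_cj.1 (hmem' a)).1
      have h2 := (mem_cj.1 (hmem' b)).1
      rw [hw' (show enum N (cj N X) a = enum N (cj N X) b by omega)]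
  let π := Equiv.ofBijective _ (Finite.injective_iff_bijective.1 hinj)
  have e1 : wl π = enum N X := funext fun i => hf i
  have e2 : wr π = enum N (cj N X) := funext fun i => by
    have h1 := (mem_cj.1 (hmem' i)).1
    have h2 : bval N (π (Sum.inr i)) = _ := hf' i
    rw [wr, h2]
    omega
  refine ⟨Equiv.Perm.sign π, ?_, fun s hs => ?_⟩
  · rcases Int.units_eq_one_or (Equiv.Perm.sign π) with h | h <;> simp [h]
  · have h := chiM_conj s hs π
    rw [e1, e2] at h
    rw [chX, chX, zsmul_eq_mul]
    have h1 : ((Equiv.Perm.sign π : ℤ) : ℂ) * ((Equiv.Perm.sign π : ℤ) : ℂ) = 1 := by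
      rw [← Int.cast_mul, ← Units.val_mul, Int.units_mul_self]; simp
    have h2 : ((-1) ^ (Multiset.card s) * (-1) ^ (Multiset.card s) : ℂ) = 1 := by
      rw [← mul_pow]; simp
    linear_combination ((-1) ^ (Multiset.card s) * ((Equiv.Perm.sign π : ℤ) : ℂ)) * h -
      ((-1) ^ (Multiset.card s) * chiM (enum N X) s) * h1 +
      ((Equiv.Perm.sign π : ℤ) : ℂ) * chiM (enum N (cj N X)) s * h2

lemma sign_eq_card_parts {n : ℕ} (g : Equiv.Perm (Fin n)) :
    ((Equiv.Perm.sign g : ℤ) : ℂ) = (-1) ^ n * (-1) ^ (Multiset.card g.partition.parts) := by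
  have h1 : g.cycleType.sum ≤ n := by
    rw [Equiv.Perm.sum_cycleType]
    simpa using card_le_univ g.support
  rw [Equiv.Perm.sign_of_cycleType, Equiv.Perm.parts_partition, ← Equiv.Perm.sum_cycleType,
    Multiset.card_add, Multiset.card_replicate, Fintype.card_fin, ← pow_add]
  push_cast
  rw [neg_one_pow_congr]
  rw [Nat.even_add, Nat.even_add, Nat.even_add, Nat.even_sub h1]
  tauto

/-- Multiplication by the sign character is conjugation of the beta set. -/
lemma sign_mul_irr {N n : ℕ} (hn : n ≤ N) {X : Finset ℕ} (hX : X ∈ bet N n) :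
    (fun g => ((Equiv.Perm.sign g : ℤ) : ℂ) * irr N n X g) = irr N n (cj N X) := by
  obtain ⟨e, he, h⟩ := chX_cj hn hX
  obtain ⟨e1, he1, h1⟩ := irr_eq N n X
  obtain ⟨e2, he2, h2⟩ := irr_eq N n (cj N X)
  have key : ∃ c : ℤ, (c = 1 ∨ c = -1) ∧
      ∀ g, ((Equiv.Perm.sign g : ℤ) : ℂ) * irr N n X g = c • irr N n (cj N X) g := by
    refine ⟨(-1) ^ n * (e * e1 * e2), ?_, fun g => ?_⟩
    · rcases neg_one_pow_eq_or ℤ n with h' | h' <;> rcases he with rfl | rfl <;>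
      rcases he1 with rfl | rfl <;> rcases he2 with rfl | rfl <;> simp [h']
    · have h3 := h g.partition.parts fun a ha => g.partition.parts_pos ha
      rw [sign_eq_card_parts, h1, h2]
      simp only [zsmul_eq_mul] at h3 ⊢
      push_cast
      have h4 : (e2 : ℂ) * e2 = 1 := by rcases he2 with rfl | rfl <;> simp
      linear_combination ((-1) ^ n * e1 : ℂ) * h3 -
        ((-1) ^ n * e * e1 * chX N (cj N X) g.partition.parts : ℂ) * h4
  obtain ⟨c, hc, h3⟩ := key
  rcases hc with rfl | rfl
  · ext g; simpa using h3 g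
  · exfalso
    obtain ⟨k, hk, hk'⟩ := irr_one_pos (irr_mem_IrrChar hX)
    obtain ⟨l, hl, hl'⟩ := irr_one_pos (irr_mem_IrrChar (cj_mem_bet hn hX))
    have h1 := h3 1
    rw [hk', hl', neg_smul, one_smul, Equiv.Perm.sign_one] at h1
    have h2 : ((k + l : ℕ) : ℂ) = 0 := by
      push_cast
      push_cast at h1
      linear_combination h1
    have := Nat.cast_eq_zero.1 h2
    omega

end

/-! ### Relations on the classes with no part divisible by `p` -/

section

open MvPolynomial

/-- The exponent vector `v` with `p` added to the entries indexed by `T`. -/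
def sh {N : ℕ} (p : ℕ) (T : Finset (Fin N)) (v : Fin N → ℕ) : Fin N → ℕ :=
  fun i => if i ∈ T then v i + p else v i

lemma sum_sh {N : ℕ} (p : ℕ) (T : Finset (Fin N)) (v : Fin N → ℕ) :
    ∑ i, sh p T v i = ∑ i, v i + p * T.card := by
  have : ∀ i, sh p T v i = v i + if i ∈ T then p else 0 := fun i => by
    rw [sh]; split_ifs <;> simp
  simp only [this, sum_add_distrib, sum_ite_mem, univ_inter, sum_const, smul_eq_mul]
  ring

/-- A Pieri rule: multiplying an alternant by `e_l (X_1 ^ p, …, X_N ^ p)` adds `p` to `l` of the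
exponents in all possible ways. -/
lemma sum_alt_sh {N : ℕ} (p l : ℕ) (v : Fin N → ℕ) :
    ∑ T ∈ powersetCard l univ, alt (sh p T v) = expand p (esymm (Fin N) ℂ l) * alt v := by
  simp only [alt]
  rw [sum_comm, mul_sum]
  refine sum_congr rfl fun σ _ => ?_
  rw [← smul_sum, mul_smul_comm]
  congr 1
  have h1 : expand p (esymm (Fin N) ℂ l) = expand p (rename σ.symm (esymm (Fin N) ℂ l)) := by
    rw [rename_esymm]
  rw [h1, esymm, map_sum, map_sum, sum_mul]
  refine sum_congr rfl fun T _ => ?_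
  rw [map_prod, map_prod, ← prod_X_pow, ← prod_X_pow]
  simp only [rename_X, expand_X]
  have e : ∏ i ∈ T, (X (σ.symm i) ^ p : MvPolynomial (Fin N) ℂ) =
      ∏ i, if σ i ∈ T then X i ^ p else 1 := by
    rw [← Finset.prod_ite_mem_eq T]
    exact Fintype.prod_equiv σ.symm _ _ fun i => by simp
  rw [e, ← prod_mul_distrib]
  refine prod_congr rfl fun i _ => ?_
  simp only [Function.comp, sh]
  split_ifs
  · rw [pow_add, mul_comm]
  · simp

/-- The span of the power sum products of degree `p * j` with all parts divisible by `p`. -/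
def divSpan (N p j : ℕ) : Submodule ℂ (MvPolynomial (Fin N) ℂ) :=
  Submodule.span ℂ {f | ∃ s : Multiset ℕ, s.sum = p * j ∧ (∀ a ∈ s, 0 < a ∧ p ∣ a) ∧ f = pp N s}

lemma divSpan_mul {N p j a : ℕ} (hp : 0 < p) (ha : 0 < a) {f : MvPolynomial (Fin N) ℂ}
    (hf : f ∈ divSpan N p j) : f * psum (Fin N) ℂ (p * a) ∈ divSpan N p (j + a) := by
  induction hf using Submodule.span_induction with
  | mem f h =>
    obtain ⟨s, h1, h2, rfl⟩ := h
    refine Submodule.subset_span ⟨(p * a) ::ₘ s, ?_, ?_, ?_⟩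
    · rw [Multiset.sum_cons, h1]; ring
    · intro b hb
      rcases Multiset.mem_cons.1 hb with rfl | hb
      · exact ⟨Nat.mul_pos hp ha, dvd_mul_right _ _⟩
      · exact h2 b hb
    · rw [pp_cons, mul_comm]
  | zero => simp
  | add f g _ _ hf hg => rw [add_mul]; exact Submodule.add_mem _ hf hg
  | smul c f _ hf => rw [smul_mul_assoc]; exact Submodule.smul_mem _ _ hf

/-- By Newton's identities, `e_j` in the `p`-th powers of the variables is a polynomial in the power
sums of index divisible by `p`. -/
lemma expand_esymm_mem {N p : ℕ} (hp : 0 < p) (j : ℕ) :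
    expand p (esymm (Fin N) ℂ j) ∈ divSpan N p j := by
  induction j using Nat.strong_induction_on with
  | _ j ih =>
    rcases Nat.eq_zero_or_pos j with rfl | hj
    · refine Submodule.subset_span ⟨0, by simp, by simp, ?_⟩
      rw [pp_zero, esymm_zero, map_one]
    have h := congrArg (expand p) (mul_esymm_eq_sum (Fin N) ℂ j)
    have h2 : (j : ℂ) • expand p (esymm (Fin N) ℂ j) ∈ divSpan N p j := by
      have e : (j : ℂ) • expand p (esymm (Fin N) ℂ j) =
          expand p ((j : MvPolynomial (Fin N) ℂ) * esymm (Fin N) ℂ j) := by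
        rw [map_mul, map_natCast, smul_eq_C_mul, map_natCast]
      rw [e, h, map_mul, map_sum]
      have e1 : ∀ (k : ℕ) (f : MvPolynomial (Fin N) ℂ), f ∈ divSpan N p j →
          expand p ((-1) ^ k) * f ∈ divSpan N p j := by
        intro k f hf
        rcases neg_one_pow_eq_or (MvPolynomial (Fin N) ℂ) k with h | h
        · rwa [h, map_one, one_mul]
        · rw [h, map_neg, map_one, neg_one_mul]; exact Submodule.neg_mem _ hf
      refine e1 _ _ (Submodule.sum_mem _ fun a ha => ?_)
      rw [mem_filter, HasAntidiagonal.mem_antidiagonal] at ha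
      rw [mul_assoc, map_mul]
      refine e1 _ _ ?_
      have e2 : expand p (psum (Fin N) ℂ a.2) = psum (Fin N) ℂ (p * a.2) := by
        simp [psum, pow_mul]
      rw [map_mul, e2, ← ha.1]
      exact divSpan_mul hp (by omega) (ih _ ha.2)
    have h3 := Submodule.smul_mem _ ((j : ℂ)⁻¹) h2
    rwa [smul_smul, inv_mul_cancel₀ (Nat.cast_ne_zero.2 hj.ne'), one_smul] at h3

lemma coeff_eq_zero_of_mem_span {ι M : Type*} [Fintype ι] [AddCommGroup M] [Module ℂ M]
    {b : ι → M} (hb : LinearIndependent ℂ b) (c : ι → ℂ) (S : Set ι)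
    (h : ∑ l, c l • b l ∈ Submodule.span ℂ (b '' S)) {l : ι} (hl : l ∉ S) : c l = 0 := by
  obtain ⟨f, hf, e⟩ := (Finsupp.mem_span_image_iff_linearCombination ℂ).1 h
  have e2 : Finsupp.linearCombination ℂ b (Finsupp.equivFunOnFinite.symm c) = ∑ l, c l • b l := by
    rw [Finsupp.linearCombination_apply, Finsupp.sum_fintype _ _ (by simp)]; simp
  rw [← e2] at e
  have e3 := hb e
  have h4 : f l = 0 := by
    by_contra h5
    exact hl ((Finsupp.mem_supported ℂ f).1 hf (Finsupp.mem_support_iff.2 h5))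
  rw [e3] at h4
  simpa using h4

/-- Multiplying a Schur function by an elementary symmetric function of positive degree in the
`p`-th powers of the variables gives a combination of power sum products with a part divisible
by `p`; so the corresponding sum of characters vanishes on the other classes. -/
lemma sum_chiM_sh {N d p l : ℕ} (hp : 0 < p) (hN : d ≤ N) (hl : 0 < l) {v : Fin N → ℕ}
    (hv : ∑ i, v i + p * l = dl N + d) (hv' : dl N ≤ ∑ i, v i)
    (g : Equiv.Perm (Fin d)) (hg : ∀ a ∈ g.partition.parts, ¬ p ∣ a) :
    ∑ T ∈ powersetCard l univ, chiM (sh p T v) g.partition.parts = 0 := by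
  obtain ⟨e, he⟩ := Nat.exists_eq_add_of_le hv'
  have hed : e + p * l = d := by omega
  set F : Multiset ℕ → ℂ := fun s => ∑ T ∈ powersetCard l univ, chiM (sh p T v) s with hF
  have h1 : vdm N * ∑ g : Equiv.Perm (Fin d), F g.partition.parts • pp N g.partition.parts =
      (d.factorial : ℂ) • (expand p (esymm (Fin N) ℂ l) * alt v) := by
    rw [← sum_alt_sh, smul_sum, hF]
    simp only [sum_smul]
    rw [sum_comm, mul_sum]
    refine sum_congr rfl fun T hT => ?_
    rw [← vdm_mul_sum_chi (sh p T v) (n := d) (by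
      rw [sum_sh, (mem_powersetCard.1 hT).2, hv]; rfl)]
    simp only [smul_eq_C_mul, chi]
  have h2 := vdm_mul_sum_chi v (n := e) he
  set G : MvPolynomial (Fin N) ℂ :=
    ∑ g : Equiv.Perm (Fin e), C (chi e v g) * pp N g.partition.parts with hG
  have h3 : ∑ g : Equiv.Perm (Fin d), F g.partition.parts • pp N g.partition.parts =
      ((d.factorial : ℂ) * (e.factorial : ℂ)⁻¹) • (expand p (esymm (Fin N) ℂ l) * G) := by
    apply mul_left_cancel₀ (vdm_ne_zero N)
    rw [h1, mul_smul_comm, mul_left_comm, h2, mul_smul_comm, smul_smul, mul_assoc,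
      inv_mul_cancel₀ (Nat.cast_ne_zero.2 e.factorial_ne_zero), mul_one]
  have hd : Fintype.card (Fin d) ≤ N := by simpa using hN
  set S : Set (Nat.Partition (Fintype.card (Fin d))) := {l | ∃ a ∈ l.parts, p ∣ a} with hS
  have h4 : expand p (esymm (Fin N) ℂ l) * G ∈
      Submodule.span ℂ ((fun l : Nat.Partition (Fintype.card (Fin d)) => pp N l.parts) '' S) := by
    rw [hG, mul_sum]
    refine Submodule.sum_mem _ fun h _ => ?_
    rw [← smul_eq_C_mul, mul_smul_comm]
    refine Submodule.smul_mem _ _ ?_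
    have hmem := expand_esymm_mem (N := N) hp l
    generalize expand p (esymm (Fin N) ℂ l) = E at hmem
    induction hmem using Submodule.span_induction with
    | mem f hf =>
      obtain ⟨s, s1, s2, rfl⟩ := hf
      refine Submodule.subset_span ⟨⟨s + h.partition.parts, ?_, ?_⟩, ?_, ?_⟩
      · intro i hi
        rcases Multiset.mem_add.1 hi with hi | hi
        · exact (s2 i hi).1
        · exact h.partition.parts_pos hi
      · rw [Multiset.sum_add, s1, h.partition.parts_sum]
        simp only [Fintype.card_fin]
        omega
      · obtain ⟨a, ha⟩ : ∃ a, a ∈ s := by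
          refine Multiset.exists_mem_of_ne_zero ?_
          rintro rfl
          have := Nat.mul_pos hp hl
          simp at s1
          omega
        exact ⟨a, Multiset.mem_add.2 (Or.inl ha), (s2 a ha).2⟩
      · exact pp_add _ _ _
    | zero => simp
    | add f g _ _ hf hg => rw [add_mul]; exact Submodule.add_mem _ hf hg
    | smul c f _ hf => rw [smul_mul_assoc]; exact Submodule.smul_mem _ _ hf
  have h5 : ∑ l : Nat.Partition (Fintype.card (Fin d)),
      (((univ.filter fun g : Equiv.Perm (Fin d) => g.partition = l).card : ℂ) * F l.parts) •
        pp N l.parts ∈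
      Submodule.span ℂ ((fun l : Nat.Partition (Fintype.card (Fin d)) => pp N l.parts) '' S) := by
    have e : ∑ l : Nat.Partition (Fintype.card (Fin d)),
      (((univ.filter fun g : Equiv.Perm (Fin d) => g.partition = l).card : ℂ) * F l.parts) •
        pp N l.parts =
        ∑ g : Equiv.Perm (Fin d), F g.partition.parts • pp N g.partition.parts := by
      rw [sum_by_partition]
      refine sum_congr rfl fun l _ => ?_
      rw [sum_congr rfl (g := fun _ => F l.parts • pp N l.parts), sum_const, mul_smul,
        Nat.cast_smul_eq_nsmul]
      intro g hg
      rw [(mem_filter.1 hg).2]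
    rw [e, h3]
    exact Submodule.smul_mem _ _ h4
  have h6 := coeff_eq_zero_of_mem_span (linearIndependent_pp hd) _ S h5 (l := g.partition) (by
    rintro ⟨a, ha, ha'⟩
    exact hg a ha ha')
  refine (mul_eq_zero.1 h6).resolve_left (Nat.cast_ne_zero.2 (card_pos.2 ⟨g, ?_⟩).ne')
  exact mem_filter.2 ⟨mem_univ _, rfl⟩

end

/-! ### The basic set and the spanning property -/

section

open MvPolynomial

/-- The distinguished beta sets, with an empty `p`-quotient component in the residue class `m`: no bead of
residue `m` can be moved down. -/
def stb (p m N d : ℕ) : Finset (Finset ℕ) :=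
  (bet N d).filter fun X => ∀ x ∈ X, x % p = m → p ≤ x → x - p ∈ X

lemma mem_stb {p m N d : ℕ} {X : Finset ℕ} :
    X ∈ stb p m N d ↔ X ∈ bet N d ∧ ∀ x ∈ X, x % p = m → p ≤ x → x - p ∈ X := by
  rw [stb, mem_filter]

/-- The sum of the squares of the beta numbers of residue `m`. -/
def mu {N : ℕ} (p m : ℕ) (u : Fin N → ℕ) : ℕ := ∑ i, if u i % p = m then u i ^ 2 else 0

lemma mu_sh_lt {N p m z : ℕ} (hp : 0 < p) {v : Fin N → ℕ} {S T : Finset (Fin N)}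
    (hcard : T.card = S.card) (hne : T ≠ S) (hS : ∀ i ∈ S, v i % p = m ∧ z ≤ v i)
    (hI : ∀ i ∉ S, v i % p = m → v i < z) : mu p m (sh p T v) < mu p m (sh p S v) := by
  have key : ∀ T : Finset (Fin N), mu p m (sh p T v) =
      mu p m v + ∑ i ∈ T, if v i % p = m then 2 * p * v i + p ^ 2 else 0 := by
    intro T
    rw [← Finset.sum_ite_mem_eq T, mu, mu, ← sum_add_distrib]
    refine sum_congr rfl fun i _ => ?_
    simp only [sh]
    by_cases h : i ∈ T
    · simp only [h, if_true, Nat.add_mod_right]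
      split_ifs <;> ring
    · simp only [h, if_false, add_zero]
  rw [key, key]
  refine Nat.add_lt_add_left (sum_sdiff_lt_sum_sdiff.1 ?_) _
  have hc : (T \ S).card = (S \ T).card := card_sdiff_comm hcard
  have hpos : 0 < (S \ T).card := by
    rw [card_pos, sdiff_nonempty]
    intro hsub
    exact hne (eq_of_subset_of_card_le hsub hcard.le).symm
  have h1 : ∑ i ∈ T \ S, (if v i % p = m then 2 * p * v i + p ^ 2 else 0) ≤
      (T \ S).card • (2 * p * z + p ^ 2 - 1) := by
    refine sum_le_card_nsmul _ _ _ fun i hi => ?_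
    split_ifs with h
    · have := hI i (mem_sdiff.1 hi).2 h
      have h2 : 2 * p * (v i + 1) ≤ 2 * p * z := Nat.mul_le_mul_left _ this
      rw [mul_add] at h2
      omega
    · exact Nat.zero_le _
  have h2 : (S \ T).card • (2 * p * z + p ^ 2) ≤
      ∑ i ∈ S \ T, if v i % p = m then 2 * p * v i + p ^ 2 else 0 := by
    refine card_nsmul_le_sum _ _ _ fun i hi => ?_
    obtain ⟨h3, h4⟩ := hS i (mem_sdiff.1 hi).1
    rw [if_pos h3]
    gcongr
  refine lt_of_le_of_lt h1 (lt_of_lt_of_le ?_ h2)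
  rw [hc, smul_eq_mul, smul_eq_mul]
  have : 0 < p ^ 2 := by positivity
  exact Nat.mul_lt_mul_of_pos_left (by omega) hpos

/-- No part of the cycle type (with fixed points) of `g` is divisible by `p`. -/
def reg (p n : ℕ) : Set (Equiv.Perm (Fin n)) := {g | ∀ a ∈ g.partition.parts, ¬ p ∣ a}

/-- The character of the beta set `X`, truncated to the regular classes. -/
def tv (p N d : ℕ) (X : Finset ℕ) : Equiv.Perm (Fin d) → ℂ :=
  truncCF (reg p d) fun g => chX N X g.partition.parts

/-- The truncated characters of the distinguished beta sets span all the others over `ℤ`. If a bead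
of residue `m` can be moved down, `sum_chiM_sh` applied to all the beads of residue `m` above the
resulting gap expresses the truncated character through beta sets with a smaller value of `mu`. -/
lemma tv_mem_span {p m N d : ℕ} (hp : 0 < p) (hd : d ≤ N) : ∀ (k : ℕ) (X : Finset ℕ),
    X ∈ bet N d → mu p m (enum N X) = k →
      tv p N d X ∈ Submodule.span ℤ (tv p N d '' (stb p m N d : Set (Finset ℕ))) := by
  intro k
  induction k using Nat.strong_induction_on with
  | _ k ih =>
    intro X hX hk
    by_cases hst : X ∈ stb p m N d
    · exact Submodule.subset_span ⟨X, hst, rfl⟩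
    rw [mem_stb] at hst
    push Not at hst
    obtain ⟨x, hx, hxm, hpx, hz⟩ := hst hX
    obtain ⟨hc, hsum⟩ := mem_bet.1 hX
    set w := enum N X with hw
    have hwi : Function.Injective w := enum_injective hc
    have hwX : ∀ i, w i ∈ X := enum_mem hc
    set S : Finset (Fin N) := univ.filter fun i => w i % p = m ∧ x - p < w i with hSdef
    have hmS : ∀ i, i ∈ S ↔ w i % p = m ∧ x - p < w i := fun i => by simp [hSdef]
    have hSp : ∀ i ∈ S, x ≤ w i := by
      intro i hi
      obtain ⟨h1, h2⟩ := (hmS i).1 hi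
      by_contra h3
      have h4 : x ≡ w i [MOD p] := hxm.trans h1.symm
      have h5 : p ∣ x - w i := (Nat.modEq_iff_dvd' (by omega)).1 h4.symm
      have := Nat.le_of_dvd (by omega) h5
      omega
    set v : Fin N → ℕ := fun i => if i ∈ S then w i - p else w i with hv
    have hvS : ∀ i ∈ S, v i + p = w i := fun i hi => by
      have := hSp i hi
      simp only [hv, hi, if_true]; omega
    have hvn : ∀ i ∉ S, v i = w i := fun i hi => by simp only [hv, hi, if_false]
    have hshS : sh p S v = w := by
      funext i
      rw [sh]
      split_ifs with h
      · exact hvS i h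
      · exact hvn i h
    have hvm : ∀ i, v i % p = w i % p := by
      intro i
      by_cases h : i ∈ S
      · rw [← hvS i h, Nat.add_mod_right]
      · rw [hvn i h]
    have hS1 : ∀ i ∈ S, v i % p = m ∧ x - p ≤ v i := fun i hi => by
      refine ⟨by rw [hvm]; exact ((hmS i).1 hi).1, ?_⟩
      have := hSp i hi
      have := hvS i hi
      omega
    have hI1 : ∀ i ∉ S, v i % p = m → v i < x - p := by
      intro i hi him
      rw [hvm] at him
      rw [hvn i hi]
      have h1 : ¬ x - p < w i := fun h => hi ((hmS i).2 ⟨him, h⟩)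
      have h2 : w i ≠ x - p := fun e => hz (e ▸ hwX i)
      omega
    have hvi : Function.Injective v := by
      have aux : ∀ a ∈ S, ∀ b ∉ S, v a ≠ v b := by
        intro a ha b hb e
        have := hI1 b hb (by rw [← e]; exact (hS1 a ha).1)
        have := (hS1 a ha).2
        omega
      intro a b e
      by_cases ha : a ∈ S <;> by_cases hb : b ∈ S
      · apply hwi; rw [← hvS a ha, ← hvS b hb, e]
      · exact absurd e (aux a ha b hb)
      · exact absurd e.symm (aux b hb a ha)
      · apply hwi; rw [← hvn a ha, ← hvn b hb, e]
    have hSpos : 0 < S.card := by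
      rw [← image_enum hc, mem_image] at hx
      obtain ⟨i, -, hi⟩ := hx
      refine card_pos.2 ⟨i, (hmS i).2 ?_⟩
      have hi' : w i = x := hi
      rw [hi']
      exact ⟨hxm, by omega⟩
    have hdl : dl N ≤ ∑ i, v i := by
      have := dl_card_le (univ.image v)
      rwa [card_image_of_injective _ hvi, sum_image fun a _ b _ e => hvi e, card_univ,
        Fintype.card_fin] at this
    have hsv : ∑ i, v i + p * S.card = dl N + d := by
      rw [← sum_sh, hshS, ← hsum, hw, sum_enum hc]
    -- the term of index `S` of the relation is the character of `X`
    have hrel : tv p N d X = -∑ T ∈ (powersetCard S.card univ).erase S,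
        truncCF (reg p d) fun g : Equiv.Perm (Fin d) => chiM (sh p T v) g.partition.parts := by
      funext g
      rw [Pi.neg_apply, Finset.sum_apply]
      by_cases hg : g ∈ reg p d
      · have h := sum_chiM_sh hp hd hSpos hsv hdl g hg
        rw [← add_sum_erase _ _ (mem_powersetCard.2 ⟨subset_univ S, rfl⟩), hshS] at h
        simp only [tv, truncCF, if_pos hg]
        exact eq_neg_of_add_eq_zero_left h
      · simp [tv, truncCF, hg]
    rw [hrel]
    refine Submodule.neg_mem _ (Submodule.sum_mem _ fun T hT => ?_)
    obtain ⟨hTne, hT⟩ := mem_erase.1 hT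
    have hTc := (mem_powersetCard.1 hT).2
    by_cases hinj : Function.Injective (sh p T v)
    · obtain ⟨e, -, he⟩ := chiM_eq_chX hinj
      have hY : univ.image (sh p T v) ∈ bet N d :=
        valid_image ⟨hinj, by rw [sum_sh, hTc, hsv]⟩
      have e1 : (truncCF (reg p d) fun g : Equiv.Perm (Fin d) =>
          chiM (sh p T v) g.partition.parts) = e • tv p N d (univ.image (sh p T v)) := by
        funext g
        rw [Pi.smul_apply]
        simp only [tv, truncCF]
        split_ifs
        · exact he _
        · simp
      rw [e1]
      refine Submodule.smul_mem _ _ (ih _ ?_ _ hY rfl)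
      have e2 : mu p m (enum N (univ.image (sh p T v))) = mu p m (sh p T v) := by
        obtain ⟨τ, hτ⟩ := exists_perm_of_image_eq hinj (image_enum (mem_bet.1 hY).1).symm
        conv_rhs => rw [hτ]
        exact (Fintype.sum_equiv τ _ _ fun i => rfl).symm
      rw [e2, ← hk, ← hshS]
      exact mu_sh_lt hp hTc hTne hS1 hI1
    · have e1 : (truncCF (reg p d) fun g : Equiv.Perm (Fin d) =>
          chiM (sh p T v) g.partition.parts) = 0 := by
        funext g
        simp [truncCF, chiM_not_inj hinj]
      rw [e1]
      exact Submodule.zero_mem _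

end

/-! ### Counting -/

section

open MvPolynomial

lemma exists_perm_parts {n : ℕ} (l : Nat.Partition n) :
    ∃ g : Equiv.Perm (Fin n), g.partition.parts = l.parts := by
  obtain ⟨g, hg⟩ := exists_partition_eq (n := n) ⟨l.parts, l.parts_pos, by simpa using l.parts_sum⟩
  exact ⟨g, congrArg Nat.Partition.parts hg⟩

lemma pp_comb_bet {N d : ℕ} (hd : d ≤ N) (c : Nat.Partition d → ℂ)
    (h : ∀ X ∈ bet N d, ∑ l, c l * chX N X l.parts = 0) : c = 0 := by
  refine pp_comb_eq_zero hd c fun w hw => ?_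
  obtain ⟨e, -, he⟩ := chiM_eq_chX hw.1
  simp only [he, zsmul_eq_mul, mul_left_comm _ (e : ℂ)]
  rw [← mul_sum, h _ (valid_image hw), mul_zero]

/-- The characters of distinct beta sets are linearly independent functions of the cycle type. -/
lemma card_bet_le {N n : ℕ} : (bet N n).card ≤ Fintype.card (Nat.Partition n) := by
  have hli : LinearIndependent ℂ
      (fun (X : bet N n) (l : Nat.Partition n) => chX N X l.parts) := by
    rw [Fintype.linearIndependent_iff]
    intro c hc Y
    have h0 : (∑ X : bet N n, c X • chi n (enum N X)) = 0 := by
      funext g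
      have := congrFun hc ⟨g.partition.parts, g.partition.parts_pos, by
        simpa using g.partition.parts_sum⟩
      simpa [Finset.sum_apply, chi, chX] using this
    have h1 : ip (∑ X : bet N n, c X • chi n (enum N X)) (chi n (enum N Y)) = c Y := by
      have e : ip (∑ X : bet N n, c X • chi n (enum N X)) (chi n (enum N Y)) =
          ∑ X : bet N n, c X * ip (chi n (enum N X)) (chi n (enum N Y)) := by
        simp only [ip, Finset.sum_apply, Pi.smul_apply, smul_eq_mul, sum_mul, mul_sum]
        rw [sum_comm]
        exact sum_congr rfl fun _ _ => sum_congr rfl fun _ _ => by ring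
      rw [e, sum_eq_single Y]
      · rw [ip_chi_self (valid_enum Y.2), mul_one]
      · intro X _ hXY
        rw [ip_chi_ne (valid_enum X.2), mul_zero]
        intro e
        apply hXY
        apply Subtype.ext
        rw [← image_enum (mem_bet.1 X.2).1, ← image_enum (mem_bet.1 Y.2).1]
        ext x
        simpa using Set.ext_iff.1 e x
      · simp
    rw [h0] at h1
    rw [← h1]
    simp [ip]
  have := hli.fintype_card_le_finrank
  simpa using this

/-- The power sum products are independent, and the `chiM` detect all their combinations. -/
lemma card_partition_le {M k : ℕ} (hk : k ≤ M) :
    Fintype.card (Nat.Partition k) ≤ (bet M k).card := by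
  have hli : LinearIndependent ℂ
      (fun (l : Nat.Partition k) (X : bet M k) => chX M X l.parts) := by
    rw [Fintype.linearIndependent_iff]
    intro c hc
    refine congrFun (pp_comb_bet hk c fun X hX => ?_)
    simpa [Finset.sum_apply] using congrFun hc ⟨X, hX⟩
  have := hli.fintype_card_le_finrank
  simpa using this

/-- The partitions with no part divisible by `p`. -/
def regP (p d : ℕ) : Finset (Nat.Partition d) := univ.filter fun l => ∀ a ∈ l.parts, ¬ p ∣ a

lemma mem_regP {p d : ℕ} {l : Nat.Partition d} : l ∈ regP p d ↔ ∀ a ∈ l.parts, ¬ p ∣ a := by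
  simp [regP]

/-- The columns of the truncated character table are independent, already after restriction to the
rows of the distinguished beta sets, since these rows span. -/
lemma linearIndependent_regP {p m N d : ℕ} (hp : 0 < p) (hd : d ≤ N) : LinearIndependent ℂ
    (fun (l : regP p d) (X : stb p m N d) => chX N X l.1.parts) := by
  rw [Fintype.linearIndependent_iff]
  intro c hc
  choose g hg using exists_perm_parts (n := d)
  have hgr : ∀ l : regP p d, g l ∈ reg p d := fun l => by
    simp only [reg, Set.mem_ofPred_eq, hg]
    exact mem_regP.1 l.2
  have hΦ : ∀ X, ∑ l : regP p d, c l * tv p N d X (g l) =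
      ∑ l : regP p d, c l * chX N X l.1.parts := by
    intro X
    refine sum_congr rfl fun l _ => ?_
    rw [tv, truncCF, if_pos (hgr l), hg]
  have hle : ∀ f ∈ Submodule.span ℤ (tv p N d '' (stb p m N d : Set (Finset ℕ))),
      ∑ l : regP p d, c l * f (g l) = 0 := by
    intro f hf
    induction hf using Submodule.span_induction with
    | mem f h =>
      obtain ⟨X, hX, rfl⟩ := h
      rw [hΦ]
      simpa [Finset.sum_apply] using congrFun hc ⟨X, hX⟩
    | zero => simp
    | add f f' _ _ h h' => simp only [Pi.add_apply, mul_add, sum_add_distrib, h, h', add_zero]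
    | smul a f _ h =>
      simp only [Pi.smul_apply, zsmul_eq_mul, mul_left_comm _ (a : ℂ)]
      rw [← mul_sum, h, mul_zero]
  obtain ⟨c', hc1, hc2⟩ : ∃ c' : Nat.Partition d → ℂ, (∀ l : regP p d, c' l = c l) ∧
      ∀ l, l ∉ regP p d → c' l = 0 :=
    ⟨fun l => if h : l ∈ regP p d then c ⟨l, h⟩ else 0, fun l => dif_pos l.2,
      fun l hl => dif_neg hl⟩
  have h0 := pp_comb_bet hd c' fun X hX => by
    have h1 := hle _ (tv_mem_span hp hd _ X hX rfl)
    have h2 := Finset.sum_coe_sort (regP p d) fun l => c' l * chX N X l.parts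
    simp only [hc1] at h2
    rw [hΦ, h2] at h1
    rw [← h1]
    symm
    refine sum_subset (subset_univ _) fun l _ hl => ?_
    rw [hc2 l hl, zero_mul]
  intro l
  rw [← hc1, h0]
  rfl

lemma card_regP_le {p m N d : ℕ} (hp : 0 < p) (hd : d ≤ N) :
    (regP p d).card ≤ (stb p m N d).card := by
  have := (linearIndependent_regP (m := m) hp hd).fintype_card_le_finrank
  simpa using this

/-- With equally many rows and columns, the table is square, so its rows are independent too. -/
lemma linearIndependent_stb {p m N d : ℕ} (hp : 0 < p) (hd : d ≤ N)
    (hc : (regP p d).card = (stb p m N d).card) : LinearIndependent ℂ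
    (fun (X : stb p m N d) (l : regP p d) => chX N X l.1.parts) := by
  have h := linearIndependent_regP (m := m) hp hd
  let A : Matrix (regP p d) (stb p m N d) ℂ := fun l X => chX N X l.1.parts
  have h1 : A.rank = Fintype.card (regP p d) := by
    exact LinearIndependent.rank_matrix h
  rw [linearIndependent_iff_card_eq_finrank_span]
  have h2 := A.rank_eq_finrank_span_cols
  rw [h1] at h2
  simp only [Fintype.card_coe] at h2 ⊢
  rw [← hc, h2]
  rfl

end

/-! ### Replacing a runner of the abacus -/

section

open MvPolynomial

/-- The beads of residue `m`, as positions on their runner. -/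
def qt (p m : ℕ) (W : Finset ℕ) : Finset ℕ := (W.filter (· % p = m)).image (· / p)

/-- The bead configuration `Z` with the runner of residue `m` replaced by `Q`. -/
def bld (p m : ℕ) (Z Q : Finset ℕ) : Finset ℕ := Z.filter (¬ · % p = m) ∪ Q.image (m + p * ·)

lemma res_add {p m : ℕ} (hm : m < p) (q : ℕ) : (m + p * q) % p = m ∧ (m + p * q) / p = q := by
  have hp : 0 < p := by omega
  rw [Nat.add_mul_mod_self_left, Nat.mod_eq_of_lt hm, Nat.add_mul_div_left _ _ hp,
    Nat.div_eq_of_lt hm, zero_add]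
  exact ⟨rfl, rfl⟩

lemma mem_qt {p m : ℕ} (hm : m < p) {W : Finset ℕ} {q : ℕ} : q ∈ qt p m W ↔ m + p * q ∈ W := by
  simp only [qt, mem_image, mem_filter]
  constructor
  · rintro ⟨x, ⟨h1, h2⟩, rfl⟩
    rw [← h2, Nat.mod_add_div]; exact h1
  · intro h
    exact ⟨_, ⟨h, (res_add hm q).1⟩, (res_add hm q).2⟩

lemma mem_bld {p m : ℕ} (hm : m < p) {Z Q : Finset ℕ} {x : ℕ} :
    x ∈ bld p m Z Q ↔ (x ∈ Z ∧ x % p ≠ m) ∨ (x % p = m ∧ x / p ∈ Q) := by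
  simp only [bld, mem_union, mem_filter, mem_image]
  refine or_congr Iff.rfl ⟨?_, ?_⟩
  · rintro ⟨q, hq, rfl⟩
    exact ⟨(res_add hm q).1, by rwa [(res_add hm q).2]⟩
  · rintro ⟨h1, h2⟩
    exact ⟨_, h2, by rw [← h1, Nat.mod_add_div]⟩

lemma bld_qt {p m : ℕ} (hm : m < p) (W : Finset ℕ) : bld p m W (qt p m W) = W := by
  ext x
  rw [mem_bld hm, mem_qt hm]
  by_cases h : x % p = m
  · have : m + p * (x / p) = x := by rw [← h, Nat.mod_add_div]
    simp [h, this]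
  · simp [h]

lemma qt_bld {p m : ℕ} (hm : m < p) (Z Q : Finset ℕ) : qt p m (bld p m Z Q) = Q := by
  ext q
  rw [mem_qt hm, mem_bld hm]
  simp [res_add hm q]

lemma filter_bld {p m : ℕ} (hm : m < p) (Z Q : Finset ℕ) :
    (bld p m Z Q).filter (¬ · % p = m) = Z.filter (¬ · % p = m) := by
  ext x
  simp only [mem_filter, mem_bld hm]
  tauto

lemma bld_disjoint {p m : ℕ} (hm : m < p) (Z Q : Finset ℕ) :
    Disjoint (Z.filter (¬ · % p = m)) (Q.image (m + p * ·)) := by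
  rw [disjoint_left]
  intro x hx hx'
  obtain ⟨q, -, rfl⟩ := mem_image.1 hx'
  exact (mem_filter.1 hx).2 (res_add hm q).1

lemma add_mul_inj {p m : ℕ} (hm : m < p) : Function.Injective (m + p * · : ℕ → ℕ) := fun a b e => by
  rw [← (res_add hm a).2, ← (res_add hm b).2]
  exact congrArg (· / p) e

lemma card_bld {p m : ℕ} (hm : m < p) (Z Q : Finset ℕ) :
    (bld p m Z Q).card = (Z.filter (¬ · % p = m)).card + Q.card := by
  rw [bld, card_union_of_disjoint (bld_disjoint hm Z Q), card_image_of_injective _ (add_mul_inj hm)]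

lemma sum_bld {p m : ℕ} (hm : m < p) (Z Q : Finset ℕ) : ∑ x ∈ bld p m Z Q, x =
    ∑ x ∈ Z.filter (¬ · % p = m), x + (m * Q.card + p * ∑ q ∈ Q, q) := by
  rw [bld, sum_union (bld_disjoint hm Z Q), sum_image fun a _ b _ e => add_mul_inj hm e,
    sum_add_distrib, sum_const, mul_sum, smul_eq_mul, mul_comm m]

/-- On the runner of residue `m` of a distinguished configuration all beads are pushed down. -/
lemma qt_stb {p m : ℕ} (hm : m < p) {N d : ℕ} {Z : Finset ℕ} (hZ : Z ∈ stb p m N d) :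
    qt p m Z = range (qt p m Z).card := by
  have hdown : ∀ q, q + 1 ∈ qt p m Z → q ∈ qt p m Z := by
    intro q hq
    rw [mem_qt hm] at hq ⊢
    have := (mem_stb.1 hZ).2 _ hq (res_add hm _).1 (by rw [mul_add]; omega)
    rwa [show m + p * (q + 1) - p = m + p * q by rw [mul_add]; omega] at this
  have hdown' : ∀ q ∈ qt p m Z, ∀ j, q - j ∈ qt p m Z := by
    intro q hq j
    induction j with
    | zero => exact hq
    | succ j ih =>
      by_cases h : q - j = 0
      · rw [show q - (j + 1) = q - j by omega]; exact ih
      · apply hdown; rwa [show q - (j + 1) + 1 = q - j by omega]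
  refine eq_of_subset_of_card_le (fun q hq => ?_) (by simp)
  have hsub : range (q + 1) ⊆ qt p m Z := fun j hj => by
    have := hdown' q hq (q - j)
    rwa [show q - (q - j) = j by have := mem_range.1 hj; omega] at this
  have := card_le_card hsub
  rw [card_range] at this
  exact mem_range.2 this

lemma bld_mem_bet {p m : ℕ} (hm : m < p) {N n k : ℕ} (hk : p * k ≤ n)
    {Z Q : Finset ℕ} (hZ : Z ∈ stb p m N (n - p * k))
    (hQ : Q ∈ bet (qt p m Z).card k) : bld p m Z Q ∈ bet N n := by
  obtain ⟨h1, h2⟩ := mem_bet.1 (mem_stb.1 hZ).1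
  obtain ⟨h3, h4⟩ := mem_bet.1 hQ
  have h5 := card_bld hm Z (qt p m Z)
  have h6 := sum_bld hm Z (qt p m Z)
  rw [bld_qt hm, h1] at h5
  rw [bld_qt hm, h2] at h6
  have h7 : ∑ q ∈ qt p m Z, q = dl (qt p m Z).card := by
    conv_lhs => rw [qt_stb hm hZ]
    rw [dl_eq_range]
  rw [h7] at h6
  rw [mem_bet, card_bld hm, sum_bld hm, h3, h4, mul_add]
  omega

/-- Replacing the runner of residue `m` of a stable bead configuration by an arbitrary one
of weight `k`. -/
lemma sum_stb_le {p m : ℕ} (hm : m < p) {N n : ℕ} (hn : n ≤ N) :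
    ∑ k ∈ (range (n + 1)).filter (p * · ≤ n),
      (stb p m N (n - p * k)).card * Fintype.card (Nat.Partition k) ≤ (bet N n).card := by
  let S : Finset (Σ _ : ℕ, Σ _ : Finset ℕ, Finset ℕ) :=
    ((range (n + 1)).filter (p * · ≤ n)).sigma fun k =>
      (stb p m N (n - p * k)).sigma fun Z => bet (qt p m Z).card k
  have h1 : ∑ k ∈ (range (n + 1)).filter (p * · ≤ n),
      (stb p m N (n - p * k)).card * Fintype.card (Nat.Partition k) ≤ S.card := by
    rw [card_sigma]
    refine sum_le_sum fun k hk => ?_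
    rw [card_sigma, ← smul_eq_mul]
    refine card_nsmul_le_sum _ _ _ fun Z hZ => card_partition_le ?_
    have hk' := (mem_filter.1 hk).2
    have hsub : range k ⊆ qt p m Z := fun q hq => by
      rw [mem_qt hm]
      refine bet_small (mem_stb.1 hZ).1 ?_
      have h : p * (q + 1) ≤ p * k := Nat.mul_le_mul_left _ (mem_range.1 hq)
      rw [mul_add] at h
      omega
    simpa using card_le_card hsub
  refine h1.trans (card_le_card_of_injOn (fun t => bld p m t.2.1 t.2.2) ?_ ?_)
  · rintro ⟨k, Z, Q⟩ h
    have h := mem_coe.1 h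
    simp only [S, mem_sigma] at h
    exact bld_mem_bet hm (mem_filter.1 h.1).2 h.2.1 h.2.2
  · rintro ⟨k, Z, Q⟩ h ⟨k', Z', Q'⟩ h' e
    have h := mem_coe.1 h
    have h' := mem_coe.1 h'
    simp only [S, mem_sigma] at h h'
    simp only at e
    have hQ : Q = Q' := by rw [← qt_bld hm Z Q, e, qt_bld hm]
    subst hQ
    have hf : Z.filter (¬ · % p = m) = Z'.filter (¬ · % p = m) := by
      rw [← filter_bld hm Z Q, e, filter_bld hm]
    obtain ⟨h3, h4⟩ := mem_bet.1 h.2.2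
    obtain ⟨h3', h4'⟩ := mem_bet.1 h'.2.2
    have hc : (qt p m Z).card = (qt p m Z').card := by rw [← h3, h3']
    have hZ : Z = Z' := by
      rw [← bld_qt hm Z, ← bld_qt hm Z', qt_stb hm h.2.1, qt_stb hm h'.2.1, hc, bld, bld, hf]
    subst hZ
    have hk : k = k' := by omega
    subst hk
    rfl

lemma partition_parts_injective (d : ℕ) :
    Function.Injective (Nat.Partition.parts : Nat.Partition d → Multiset ℕ) :=
  fun _ _ h => Nat.Partition.ext h

/-- Splitting a partition into the parts not divisible by `p` and the parts divisible by `p`. -/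
lemma card_partition_le_sum {p : ℕ} (hp : 0 < p) (n : ℕ) : Fintype.card (Nat.Partition n) ≤
    ∑ k ∈ (range (n + 1)).filter (p * · ≤ n),
      (regP p (n - p * k)).card * Fintype.card (Nat.Partition k) := by
  let S : Finset (Σ _ : ℕ, Multiset ℕ × Multiset ℕ) :=
    ((range (n + 1)).filter (p * · ≤ n)).sigma fun k =>
      ((regP p (n - p * k)).image Nat.Partition.parts) ×ˢ
        ((univ : Finset (Nat.Partition k)).image Nat.Partition.parts)
  have h1 : S.card = ∑ k ∈ (range (n + 1)).filter (p * · ≤ n),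
      (regP p (n - p * k)).card * Fintype.card (Nat.Partition k) := by
    rw [card_sigma]
    refine sum_congr rfl fun k _ => ?_
    rw [card_product, card_image_of_injective _ (partition_parts_injective _),
      card_image_of_injective _ (partition_parts_injective _), card_univ]
  rw [← h1, ← card_univ]
  have hmul : ∀ l : Multiset ℕ, ((l.filter (p ∣ ·)).map (· / p)).map (p * ·) =
      l.filter (p ∣ ·) := by
    intro l
    rw [Multiset.map_map, Multiset.map_congr rfl (g := id), Multiset.map_id]
    intro a ha
    exact Nat.mul_div_cancel' (Multiset.mem_filter.1 ha).2
  refine card_le_card_of_injOn (fun l => ⟨((l.parts.filter (p ∣ ·)).map (· / p)).sum,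
    l.parts.filter (¬ p ∣ ·), (l.parts.filter (p ∣ ·)).map (· / p)⟩) ?_ ?_
  · intro l _
    have hs : p * ((l.parts.filter (p ∣ ·)).map (· / p)).sum + (l.parts.filter (¬ p ∣ ·)).sum =
        n := by
      have h2 := hmul l.parts
      rw [Multiset.map_map] at h2
      simp only [Function.comp_def] at h2
      rw [← Multiset.sum_map_mul_left, h2, ← Multiset.sum_add, Multiset.filter_add_not,
        l.parts_sum]
    have hle : ((l.parts.filter (p ∣ ·)).map (· / p)).sum ≤
      p * ((l.parts.filter (p ∣ ·)).map (· / p)).sum := Nat.le_mul_of_pos_left _ hp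
    simp only [S, coe_sigma, Set.mem_sigma_iff, mem_coe, mem_filter, mem_range, mem_product,
      mem_image]
    refine ⟨⟨by omega, by omega⟩, ⟨⟨_, fun h => l.parts_pos (Multiset.mem_filter.1 h).1, by omega⟩,
      ?_, rfl⟩, ⟨_, ?_, rfl⟩, mem_univ _, rfl⟩
    · rw [mem_regP]
      exact fun a ha => (Multiset.mem_filter.1 ha).2
    · intro a ha
      obtain ⟨b, hb, rfl⟩ := Multiset.mem_map.1 ha
      obtain ⟨h2, h3⟩ := Multiset.mem_filter.1 hb
      exact Nat.div_pos (Nat.le_of_dvd (l.parts_pos h2) h3) hp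
  · intro l _ l' _ e
    simp only [Sigma.mk.injEq, heq_eq_eq, Prod.mk.injEq] at e
    obtain ⟨-, e1, e2⟩ := e
    refine Nat.Partition.ext ?_
    rw [← Multiset.filter_add_not (p ∣ ·) l.parts, ← Multiset.filter_add_not (p ∣ ·) l'.parts, e1,
      ← hmul l.parts, e2, hmul]

/-- Put `a k = #(regP p (n - p k)) #(Partition k)` and `b k = #(stb p m N (n - p k)) #(Partition k)`.
Then `a k ≤ b k`, while `∑ b k ≤ #(bet N n) ≤ #(Partition n) ≤ ∑ a k`. So all these are equalities,
and the term `k = 0` is the claim. -/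
lemma card_regP_eq {p m N n : ℕ} (hm : m < p) (hn : n ≤ N) :
    (regP p n).card = (stb p m N n).card := by
  have hp : 0 < p := by omega
  have hle : ∀ k ∈ (range (n + 1)).filter (p * · ≤ n),
      (regP p (n - p * k)).card * Fintype.card (Nat.Partition k) ≤
        (stb p m N (n - p * k)).card * Fintype.card (Nat.Partition k) := fun k _ =>
    Nat.mul_le_mul_right _ (card_regP_le hp (by omega))
  have h := (sum_eq_sum_iff_of_le hle).1 (le_antisymm (sum_le_sum hle)
    ((sum_stb_le hm hn).trans (card_bet_le.trans (card_partition_le_sum hp n))))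
  have h0 := h 0 (by simp)
  simpa using h0

end

/-! ### Assembling the sign-stable basic set -/

lemma dvd_multiset_lcm {p : ℕ} (hp : p.Prime) (s : Multiset ℕ) :
    p ∣ s.lcm ↔ ∃ a ∈ s, p ∣ a := by
  induction s using Multiset.induction with
  | empty => simpa using hp.one_lt.ne'
  | cons a s ih =>
    rw [Multiset.lcm_cons, hp.prime.dvd_lcm, ih]
    simp

/-- The order of a permutation is the least common multiple of its cycle lengths. -/
lemma reg_eq_pRegular {p n : ℕ} (hp : p.Prime) : reg p n = pRegular p (Equiv.Perm (Fin n)) := by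
  ext g
  simp only [reg, pRegular, Set.mem_ofPred_eq]
  rw [Nat.coprime_comm, hp.coprime_iff_not_dvd, ← Equiv.Perm.lcm_cycleType,
    dvd_multiset_lcm hp, Equiv.Perm.parts_partition]
  push Not
  refine ⟨fun h a ha => h a (Multiset.mem_add.2 (Or.inl ha)), fun h a ha => ?_⟩
  rcases Multiset.mem_add.1 ha with ha | ha
  · exact h a ha
  · rw [Multiset.eq_of_mem_replicate ha]
    exact hp.not_dvd_one

/-- Conjugation maps the residue `m` to `2N - 1 - m`; it preserves the distinguished beta sets as
soon as these two residues agree modulo `p`. -/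
lemma cj_mem_stb {p m N d : ℕ} (hd : d ≤ N) (hm : (2 * m + 1) % p = (2 * N) % p) {X : Finset ℕ}
    (hX : X ∈ stb p m N d) : cj N X ∈ stb p m N d := by
  rw [mem_stb] at hX ⊢
  refine ⟨cj_mem_bet hd hX.1, fun x hx hxm hpx => ?_⟩
  rw [mem_cj] at hx ⊢
  refine ⟨by omega, fun hy => hx.2 ?_⟩
  have hmm : m % p = m := by rw [← hxm, Nat.mod_mod]
  have hres : (2 * N - 1 - (x - p)) % p = m := by
    rw [← hmm]
    have h1 : x ≡ m [MOD p] := hxm.trans hmm.symm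
    have h2 : 2 * m + 1 ≡ 2 * N [MOD p] := hm
    have h3 : (2 * N - 1 - (x - p)) + (x + 1) ≡ m + (x + 1) [MOD p] := by
      have e : (2 * N - 1 - (x - p)) + (x + 1) = 2 * N + p := by omega
      rw [e]
      calc 2 * N + p ≡ 2 * N [MOD p] := Nat.add_mod_right _ _
        _ ≡ 2 * m + 1 [MOD p] := h2.symm
        _ = m + (m + 1) := by ring
        _ ≡ m + (x + 1) [MOD p] := (h1.symm.add_right 1).add_left m
    exact Nat.ModEq.add_right_cancel' _ h3
  have := hX.2 _ hy hres (by omega)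
  convert this using 1
  omega

lemma truncCF_irr (p N n : ℕ) (X : Finset ℕ) : ∃ e : ℤ, (e = 1 ∨ e = -1) ∧
    truncCF (reg p n) (irr N n X) = e • tv p N n X := by
  obtain ⟨e, he, h⟩ := irr_eq N n X
  refine ⟨e, he, funext fun g => ?_⟩
  rw [Pi.smul_apply]
  simp only [tv, truncCF]
  split_ifs
  · exact h g
  · simp

lemma linearIndependent_truncCF {p m N n : ℕ} (hm : m < p) (hn : n ≤ N) :
    LinearIndependent ℤ (fun X : stb p m N n => truncCF (reg p n) (irr N n X)) := by
  have hp : 0 < p := by omega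
  have h := linearIndependent_stb hp hn (card_regP_eq hm hn)
  rw [Fintype.linearIndependent_iff] at h ⊢
  intro c hc X
  choose e he1 he2 using truncCF_irr p N n
  choose γ hγ using exists_perm_parts (n := n)
  have key := h (fun X => ((c X * e X : ℤ) : ℂ)) ?_ X
  · have : c X * e X = 0 := by exact_mod_cast key
    rcases mul_eq_zero.1 this with h0 | h0
    · exact h0
    · rcases he1 X with h1 | h1 <;> omega
  · funext l
    have hl : γ l ∈ reg p n := by
      simp only [reg, Set.mem_ofPred_eq, hγ]
      exact mem_regP.1 l.2
    have h2 := congrFun hc (γ l)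
    simp only [he2, Finset.sum_apply, Pi.smul_apply, Pi.zero_apply] at h2
    simp only [tv, truncCF, if_pos hl, hγ, zsmul_eq_mul] at h2
    simp only [Finset.sum_apply, Pi.smul_apply, Pi.zero_apply, smul_eq_mul, Int.cast_mul,
      mul_assoc]
    exact h2

/-- `tv_mem_span` for the irreducible characters themselves. -/
lemma truncCF_mem_span {p m N n : ℕ} (hp : 0 < p) (hn : n ≤ N) {X : Finset ℕ}
    (hX : X ∈ bet N n) : truncCF (reg p n) (irr N n X) ∈
      Submodule.span ℤ (truncCF (reg p n) '' (irr N n '' (stb p m N n : Set (Finset ℕ)))) := by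
  obtain ⟨e, -, h⟩ := truncCF_irr p N n X
  rw [h]
  refine Submodule.smul_mem _ _ (Submodule.span_le.2 ?_ (tv_mem_span (m := m) hp hn _ X hX rfl))
  rintro _ ⟨Y, hY, rfl⟩
  obtain ⟨f, hf, h'⟩ := truncCF_irr p N n Y
  have h1 : tv p N n Y = f • truncCF (reg p n) (irr N n Y) := by
    rw [h', smul_smul]
    rcases hf with rfl | rfl <;> simp
  rw [h1]
  exact Submodule.smul_mem _ _ (Submodule.subset_span ⟨_, ⟨Y, hY, rfl⟩, rfl⟩)

theorem exists_basicSet (p n : ℕ) (hp : p.Prime) (hodd : Odd p) :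
    ∃ B, IsBasicSetOf (pRegular p (Equiv.Perm (Fin n))) (IrrChar (Equiv.Perm (Fin n))) B ∧
      ∀ χ ∈ B, (fun g => ((Equiv.Perm.sign g : ℤ) : ℂ) * χ g) ∈ B := by
  rw [← reg_eq_pRegular hp]
  -- the residue `m` solves `2 m ≡ 2 n - 1` modulo `p`
  obtain ⟨m, hm, hmn⟩ : ∃ m < p, (2 * m + 1) % p = (2 * n) % p := by
    obtain ⟨k, hk⟩ := hodd
    refine ⟨(n + k) % p, Nat.mod_lt _ hp.pos, ?_⟩
    have h1 : 2 * ((n + k) % p) + 1 ≡ 2 * (n + k) + 1 [MOD p] :=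
      ((Nat.mod_modEq _ _).mul_left 2).add_right 1
    have h2 : 2 * (n + k) + 1 = 2 * n + p := by omega
    rw [h2] at h1
    exact h1.trans (Nat.add_mod_right _ _)
  refine ⟨irr n n '' (stb p m n n : Set (Finset ℕ)), ⟨?_, ?_, ?_⟩, ?_⟩
  · rintro _ ⟨X, hX, rfl⟩
    exact irr_mem_IrrChar (mem_stb.1 hX).1
  · have hinj : Set.InjOn (irr n n) (stb p m n n : Set (Finset ℕ)) := fun X hX Y hY e =>
      irr_inj (mem_stb.1 hX).1 (mem_stb.1 hY).1 e
    refine (linearIndependent_equiv' (Equiv.Set.imageOfInjOn _ _ hinj) ?_).1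
      (linearIndependent_truncCF hm le_rfl)
    rfl
  · refine le_antisymm (Submodule.span_mono (Set.image_mono ?_)) (Submodule.span_le.2 ?_)
    · rintro _ ⟨X, hX, rfl⟩
      exact irr_mem_IrrChar (mem_stb.1 hX).1
    · rintro _ ⟨ψ, hψ, rfl⟩
      obtain ⟨X, hX, rfl⟩ := irr_surj le_rfl hψ
      exact truncCF_mem_span hp.pos le_rfl hX
  · rintro _ ⟨X, hX, rfl⟩
    rw [sign_mul_irr le_rfl (mem_stb.1 hX).1]
    exact ⟨_, cj_mem_stb le_rfl hmn hX, rfl⟩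

end SymBasic

/-- For any odd prime `p` and any `n ≥ 1`, the symmetric group `S_n` has a `p`-basic set `B`
which is stable under multiplication by the sign character. -/
theorem symmGroup_exists_sign_stable_pBasicSet (p n : ℕ) (hp : p.Prime) (hodd : Odd p)
    (hn : 0 < n) :
    ∃ B : Set (Equiv.Perm (Fin n) → ℂ),
      IsBasicSetOf (pRegular p (Equiv.Perm (Fin n))) (IrrChar (Equiv.Perm (Fin n))) B ∧
      ∀ χ ∈ B, (fun g => ((Equiv.Perm.sign g : ℤ) : ℂ) * χ g) ∈ B := by
  exact SymBasic.exists_basicSet p n hp hodd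
end
end

section
/- Let G and H be finite groups, C ⊆ G and C' ⊆ H conjugation-invariant subsets, b ⊆ Irr(G) and b' ⊆ Irr(H), and let I : b → b' with signs η : b → {1,−1} be a generalized perfect isometry from (b,C) to (b',C'). Then a subset B ⊆ b is a C-basic set of b if and only if the image I(B) = {I(χ) : χ ∈ B} ⊆ b' is a C'-basic set of b'. -/
/-!
For a finitely supported `c : b → ℤ`, the vector `∑ c χ • χ^C` vanishes iff its squared norm
does, which is `∑∑ c χ * c φ * ⟨χ, φ⟩_C` (`linearCombination_eq_zero_iff_gram`). The isometry therefore
says that the families `χ^C` and `η χ • (I χ)^C'`, indexed by `χ ∈ b`, satisfy the same integral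
relations. Whether `B ⊆ b` indexes a `ℤ`-basis of the lattice spanned by such a family depends only
on these relations (`basis_transfer`), and it is unaffected by the signs `η` (`basis_units_smul`).
-/

open scoped Classical

noncomputable section

/-- Relations with coefficients supported on `b` determine which subsets `B ⊆ b` index a basis of
the span of the family over `b`: a basis is characterised by the absence of relations on `B` and,
for each `i ∈ b`, a relation expressing the `i`-th vector through those indexed by `B`. -/
theorem basis_transfer {ι M N : Type*} [AddCommGroup M] [AddCommGroup N]
    {f : ι → M} {g : ι → N} {b B : Set ι} (hB : B ⊆ b)
    (h : ∀ c ∈ Finsupp.supported ℤ ℤ b,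
      Finsupp.linearCombination ℤ f c = 0 → Finsupp.linearCombination ℤ g c = 0)
    (h' : ∀ c ∈ Finsupp.supported ℤ ℤ b,
      Finsupp.linearCombination ℤ g c = 0 → Finsupp.linearCombination ℤ f c = 0)
    (hf : LinearIndepOn ℤ f B ∧ Submodule.span ℤ (f '' B) = Submodule.span ℤ (f '' b)) :
    LinearIndepOn ℤ g B ∧ Submodule.span ℤ (g '' B) = Submodule.span ℤ (g '' b) := by
  obtain ⟨hli, hsp⟩ := hf
  constructor
  · rw [linearIndepOn_iff] at hli ⊢
    exact fun c hc h0 => hli c hc (h' c (Finsupp.supported_mono hB hc) h0)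
  · refine le_antisymm (Submodule.span_mono (Set.image_mono hB)) (Submodule.span_le.2 ?_)
    rintro _ ⟨i, hi, rfl⟩
    have hfi : f i ∈ Submodule.span ℤ (f '' B) :=
      hsp ▸ Submodule.subset_span (Set.mem_image_of_mem f hi)
    obtain ⟨c, hc, hci⟩ := (Finsupp.mem_span_image_iff_linearCombination ℤ).1 hfi
    refine (Finsupp.mem_span_image_iff_linearCombination ℤ).2 ⟨c, hc, ?_⟩
    have hrel := h (c - Finsupp.single i 1)
      (sub_mem (Finsupp.supported_mono hB hc) (Finsupp.single_mem_supported ℤ 1 hi))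
      (by simp [hci])
    simpa [sub_eq_zero] using hrel

theorem innerOn_eq_dotProduct {G : Type} [Fintype G] (C : Set G) (α β : G → ℂ) :
    innerOn C α β = (Fintype.card G : ℂ)⁻¹ * (truncCF C α ⬝ᵥ star (truncCF C β)) := by
  simp only [innerOn, dotProduct, truncCF, Pi.star_apply]
  congr 1
  refine Finset.sum_congr rfl fun g _ => ?_
  split_ifs <;> simp

open scoped ComplexOrder in
/-- The form `⟨·,·⟩_C` is positive definite on functions truncated to `C`, so an integral
relation between truncations is detected by the Gram matrix. -/
theorem linearCombination_eq_zero_iff_gram {ι G : Type} [Group G] [Fintype G] (C : Set G)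
    (f : ι → G → ℂ) (c : ι →₀ ℤ) :
    Finsupp.linearCombination ℤ (fun i => truncCF C (f i)) c = 0 ↔
      ∑ i ∈ c.support, ∑ j ∈ c.support, (c i : ℂ) * (c j : ℂ) * innerOn C (f i) (f j) = 0 := by
  have hcard : (Fintype.card G : ℂ)⁻¹ ≠ 0 := by simp
  have key : ∑ i ∈ c.support, ∑ j ∈ c.support, (c i : ℂ) * (c j : ℂ) * innerOn C (f i) (f j) =
      (Fintype.card G : ℂ)⁻¹ *
        (Finsupp.linearCombination ℤ (fun i => truncCF C (f i)) c ⬝ᵥ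
          star (Finsupp.linearCombination ℤ (fun i => truncCF C (f i)) c)) := by
    simp only [Finsupp.linearCombination_apply, Finsupp.sum, star_sum, sum_dotProduct,
      dotProduct_sum, Finset.mul_sum, innerOn_eq_dotProduct]
    rw [Finset.sum_comm]
    refine Finset.sum_congr rfl fun i _ => Finset.sum_congr rfl fun j _ => ?_
    rw [star_zsmul, smul_dotProduct, dotProduct_smul]
    simp only [zsmul_eq_mul]
    ring
  rw [key, mul_eq_zero, or_iff_right hcard, dotProduct_comm, dotProduct_star_self_eq_zero]

/-- Changing the signs of the vectors does not affect whether those indexed by `B` form a basis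
of the span of those indexed by `b`. -/
theorem basis_units_smul {ι M : Type*} [AddCommGroup M] {f : ι → M} {b B : Set ι}
    (ε : ι → ℤˣ)
    (hf : LinearIndepOn ℤ f B ∧ Submodule.span ℤ (f '' B) = Submodule.span ℤ (f '' b)) :
    LinearIndepOn ℤ (fun i => ε i • f i) B ∧
      Submodule.span ℤ ((fun i => ε i • f i) '' B) =
        Submodule.span ℤ ((fun i => ε i • f i) '' b) := by
  have hspan : ∀ s : Set ι,
      Submodule.span ℤ ((fun i => ε i • f i) '' s) = Submodule.span ℤ (f '' s) := by
    intro s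
    refine le_antisymm (Submodule.span_le.2 ?_) (Submodule.span_le.2 ?_)
    · rintro _ ⟨i, hi, rfl⟩
      exact Submodule.smul_mem _ (ε i : ℤ) (Submodule.subset_span (Set.mem_image_of_mem f hi))
    · rintro _ ⟨i, hi, rfl⟩
      have hmem := Submodule.smul_mem (Submodule.span ℤ ((fun i => ε i • f i) '' s))
        ((ε i)⁻¹ : ℤˣ).val (Submodule.subset_span (Set.mem_image_of_mem _ hi))
      change (ε i)⁻¹ • ε i • f i ∈ _ at hmem
      rwa [inv_smul_smul] at hmem
  refine ⟨LinearIndependent.units_smul hf.1 fun i : B => ε i, ?_⟩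
  rw [hspan, hspan, hf.2]

/-- A generalized perfect isometry `I` (with signs `η`) from `(b, C)` to `(b', C')` maps
`C`-basic sets of `b` exactly to `C'`-basic sets of `b'`. -/
theorem isBasicSetOf_iff_image_of_generalized_perfect_isometry
    {G H : Type} [Group G] [Fintype G] [Group H] [Fintype H]
    (C : Set G) (C' : Set H)
    (hC : ∀ g x : G, x ∈ C → g * x * g⁻¹ ∈ C)
    (hC' : ∀ h x : H, x ∈ C' → h * x * h⁻¹ ∈ C')
    (b : Set (G → ℂ)) (b' : Set (H → ℂ))
    (hb : b ⊆ IrrChar G) (hb' : b' ⊆ IrrChar H)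
    (I : (G → ℂ) → (H → ℂ)) (η : (G → ℂ) → ℂ)
    (hI : Set.BijOn I b b')
    (hη : ∀ χ ∈ b, η χ = 1 ∨ η χ = -1)
    (hiso : ∀ χ ∈ b, ∀ φ ∈ b,
      innerOn C χ φ = innerOn C' (fun h => η χ * I χ h) (fun h => η φ * I φ h))
    (B : Set (G → ℂ)) (hB : B ⊆ b) :
    IsBasicSetOf C b B ↔ IsBasicSetOf C' b' (I '' B) := by
  -- The signs are encoded by units of `ℤ`; off `b`, where `η` is unconstrained,
  -- the value is immaterial.
  let ε : (G → ℂ) → ℤˣ := fun χ => if η χ = 1 then 1 else -1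
  have hε : ∀ χ ∈ b, ((ε χ : ℤ) : ℂ) = η χ := by
    intro χ hχ
    rcases hη χ hχ with h | h
    · simp [ε, h]
    · have hne : (-1 : ℂ) ≠ 1 := by norm_num
      simp [ε, h, hne]
  have htrunc : (fun χ => ε χ • truncCF C' (I χ)) =
      fun χ => truncCF C' (fun x => ((ε χ : ℤ) : ℂ) * I χ x) := by
    funext χ x
    simp only [truncCF, Pi.smul_apply, Units.smul_def, zsmul_eq_mul]
    split_ifs <;> simp
  -- The Gram matrices over `b` agree, hence so do the integral relations.
  have hrel : ∀ c ∈ Finsupp.supported ℤ ℤ b,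
      (Finsupp.linearCombination ℤ (fun χ : G → ℂ => truncCF C χ) c = 0 ↔
        Finsupp.linearCombination ℤ (fun χ => ε χ • truncCF C' (I χ)) c = 0) := by
    intro c hc
    rw [htrunc, linearCombination_eq_zero_iff_gram C (fun χ => χ),
      linearCombination_eq_zero_iff_gram C' (fun χ x => ((ε χ : ℤ) : ℂ) * I χ x)]
    have hsupp := (Finsupp.mem_supported ℤ c).1 hc
    refine Eq.congr (Finset.sum_congr rfl fun i hi => Finset.sum_congr rfl fun j hj => ?_) rfl
    rw [hiso i (hsupp hi) j (hsupp hj), hε i (hsupp hi), hε j (hsupp hj)]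
  have himage : IsBasicSetOf C' b' (I '' B) ↔
      LinearIndepOn ℤ (fun χ => truncCF C' (I χ)) B ∧
        Submodule.span ℤ ((fun χ => truncCF C' (I χ)) '' B) =
          Submodule.span ℤ ((fun χ => truncCF C' (I χ)) '' b) := by
    have hsub : I '' B ⊆ b' := hI.image_eq ▸ Set.image_mono hB
    have hli : LinearIndepOn ℤ (truncCF C') (I '' B) ↔
        LinearIndepOn ℤ (fun χ => truncCF C' (I χ)) B :=
      (linearIndependent_equiv' ((hI.injOn.mono hB).bijOn_image.equiv I) rfl).symm
    have himg : ∀ s, truncCF C' '' (I '' s) = (fun χ => truncCF C' (I χ)) '' s :=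
      fun s => Set.image_image _ _ _
    rw [← hli, ← himg, ← himg, hI.image_eq]
    exact and_iff_right hsub
  rw [himage]
  constructor
  · rintro ⟨-, h⟩
    have hsigned := basis_transfer hB (fun c hc => (hrel c hc).1) (fun c hc => (hrel c hc).2) h
    simpa only [smul_smul, Int.units_mul_self, one_smul] using basis_units_smul ε hsigned
  · intro h
    exact ⟨hB, basis_transfer hB (fun c hc => (hrel c hc).2) (fun c hc => (hrel c hc).1)
      (basis_units_smul ε h)⟩
end
end

section
/- Let G be a finite group and C ⊆ G a conjugation-invariant subset. If B is a C-basic set of G, then for every C-block b of G the intersection B ∩ b is a C-basic set of b. -/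
/-!
Up to the factor `1/|G|`, `⟨α,β⟩_C` is the standard Hermitian form on `G → ℂ` applied to `α^C`, `β^C`,
which is positive definite. Since `b` is orthogonal across `C` to its complement in `Irr(G)`,
the lattices spanned by the truncations of `b` and of `Irr(G) ∖ b` are orthogonal
(`dotProduct_star_span_eq_zero`), hence meet only in `0`. For `χ ∈ b`, write `χ^C = x + y` with `x`
in the span of the truncations of `B ∩ b` and `y` in that of `B ∖ b`. Then `y = χ^C - x` lies in both
lattices, so `y = 0` and `χ^C = x`. Linear independence is inherited from `B`.
-/

open scoped Classical

noncomputable section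

/-- `b` is a `C`-block of `G`: a nonempty subset of `Irr G` which is orthogonal across `C`
to its complement in `Irr G`, and which is minimal (w.r.t. inclusion) among nonempty
subsets of `Irr G` with this property. -/
def IsCBlock {G : Type} [Group G] [Fintype G] (C : Set G) (b : Set (G → ℂ)) : Prop :=
  b.Nonempty ∧ b ⊆ IrrChar G ∧
  (∀ χ ∈ b, ∀ ψ ∈ IrrChar G \ b, innerOn C χ ψ = 0) ∧
  ∀ b' ⊆ b, b'.Nonempty →
    (∀ χ ∈ b', ∀ ψ ∈ IrrChar G \ b', innerOn C χ ψ = 0) → b' = b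

lemma dotProduct_star_truncCF {G : Type} [Fintype G] (C : Set G) (α β : G → ℂ)
    (h : innerOn C α β = 0) : dotProduct (truncCF C α) (star (truncCF C β)) = 0 := by
  by_cases hG : IsEmpty G
  · simp [dotProduct]
  rw [not_isEmpty_iff] at hG
  have h0 : (Fintype.card G : ℂ)⁻¹ ≠ 0 := by simp
  refine Eq.trans ?_ ((mul_eq_zero.mp h).resolve_left h0)
  refine Finset.sum_congr rfl fun g _ => ?_
  by_cases hg : g ∈ C <;> simp [truncCF, hg]

lemma dotProduct_star_span_eq_zero {G : Type} [Fintype G] {S T : Set (G → ℂ)}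
    (h : ∀ s ∈ S, ∀ t ∈ T, dotProduct s (star t) = 0) {x y : G → ℂ}
    (hx : x ∈ Submodule.span ℤ S) (hy : y ∈ Submodule.span ℤ T) :
    dotProduct x (star y) = 0 := by
  induction hx, hy using Submodule.span_induction₂ with
  | mem_mem s t hs ht => exact h s hs t ht
  | zero_left => simp
  | zero_right => simp
  | add_left _ _ _ _ _ _ h₁ h₂ => rw [add_dotProduct, h₁, h₂, add_zero]
  | add_right _ _ _ _ _ _ h₁ h₂ => rw [star_add, dotProduct_add, h₁, h₂, add_zero]
  | smul_left r _ _ _ _ h₁ => rw [smul_dotProduct, h₁, smul_zero]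
  | smul_right r _ _ _ _ h₁ => rw [star_zsmul, dotProduct_smul, h₁, smul_zero]

/-- If `B` is a `C`-basic set of `G`, then for every `C`-block `b` of `G`, the intersection
`B ∩ b` is a `C`-basic set of `b`. -/
theorem isBasicSetOf_inter_block {G : Type} [Group G] [Fintype G]
    (C : Set G) (hC : ∀ g x : G, x ∈ C → g * x * g⁻¹ ∈ C)
    (B : Set (G → ℂ)) (hB : IsBasicSetOf C (IrrChar G) B)
    (b : Set (G → ℂ)) (hb : IsCBlock C b) :
    IsBasicSetOf C b (B ∩ b) := by
  obtain ⟨hBI, hlin, hspan⟩ := hB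
  obtain ⟨-, hbI, horth, -⟩ := hb
  refine ⟨Set.inter_subset_right, ?_, ?_⟩
  · exact hlin.comp (Set.inclusion Set.inter_subset_left) (Set.inclusion_injective _)
  refine le_antisymm (Submodule.span_mono (Set.image_mono Set.inter_subset_right)) ?_
  rw [Submodule.span_le]
  rintro _ ⟨χ, hχ, rfl⟩
  have hmem : truncCF C χ ∈ Submodule.span ℤ (truncCF C '' B) := by
    rw [hspan]
    exact Submodule.subset_span ⟨χ, hbI hχ, rfl⟩
  rw [← Set.inter_union_sdiff B b, Set.image_union, Submodule.span_union,
    Submodule.mem_sup] at hmem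
  obtain ⟨x, hx, y, hy, hxy⟩ := hmem
  have hyb : y ∈ Submodule.span ℤ (truncCF C '' b) := by
    rw [eq_sub_of_add_eq' hxy]
    exact sub_mem (Submodule.subset_span ⟨χ, hχ, rfl⟩)
      (Submodule.span_mono (Set.image_mono Set.inter_subset_right) hx)
  have hyy : dotProduct y (star y) = 0 := by
    refine dotProduct_star_span_eq_zero ?_ hyb hy
    rintro _ ⟨α, hα, rfl⟩ _ ⟨β, hβ, rfl⟩
    exact dotProduct_star_truncCF C α β (horth α hα β ⟨hBI hβ.1, hβ.2⟩)
  have hy0 : y = 0 := by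
    open scoped ComplexOrder in
    exact dotProduct_self_star_eq_zero.mp hyy
  rw [← hxy, hy0, add_zero]
  exact hx
end
end

section
/- Let G and H be finite groups, C ⊆ G and C' ⊆ H conjugation-invariant subsets, b ⊆ Irr(G) and b' ⊆ Irr(H), and let I : b → b' with signs η : b → {1,−1} be a generalized perfect isometry from (b,C) to (b',C'). Assume moreover that ⟨χ,ψ⟩_C = 0 for all χ ∈ b and ψ ∈ Irr(G)∖b, and ⟨χ',ψ'⟩_{C'} = 0 for all χ' ∈ b' and ψ' ∈ Irr(H)∖b'. Let I_η denote the ℂ-linear isomorphism from the ℂ-span of b to the ℂ-span of b' sending χ ↦ η(χ)·I(χ). Then for every χ ∈ b, the truncation χ^C lies in the ℂ-span of b and I_η(χ^C) = (η(χ)·I(χ))^{C'}, i.e. I_η(χ^C) = (I_η(χ))^{C'}. -/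
/-!
The irreducible characters of a finite group are orthonormal and span the class functions.
Since `⟨χ^C, ψ⟩ = ⟨χ, ψ⟩_C`, the hypothesis that `b` is orthogonal across `C` to its complement
says that `χ^C = ∑_{ψ ∈ b} ⟨χ,ψ⟩_C ψ` (`truncCF_eq_sum`), and likewise for `b'` and `C'`.
Applying `I_η` to the first expansion and using that it preserves the truncated scalar products
and that `η² = 1` gives the second one.

Orthonormality for the Hermitian product (`innerOn_univ_irr`) rests on
`conj χ(g) = χ(g⁻¹)` (`conj_character`). Completeness (`classFunction_eq_zero`) is proved in the
group algebra: for a class function `f` orthogonal to all irreducible characters, the central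
element `∑ f(g) g⁻¹` acts on every simple module by a scalar of trace zero, hence by zero, and so
vanishes because the group algebra is semisimple.
-/

open scoped Classical

noncomputable section

open scoped MonoidAlgebra ComplexOrder

/-! ### Characters and complex conjugation -/

/-- Averaging the form `Mᴴ M` over the group gives an invariant positive definite Hermitian
matrix `P`, which conjugates `M(g⁻¹)` into `M(g)ᴴ`; the two therefore have the same trace. -/
lemma conj_character {G : Type} [Group G] [Fintype G] (V : FDRep ℂ G) (g : G) :
    (starRingEnd ℂ) (V.character g) = V.character g⁻¹ := by
  let e := Module.finBasis ℂ V
  let M : G → Matrix _ _ ℂ := fun g => LinearMap.toMatrix e e (V.ρ g)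
  have hmul : ∀ g h, M (g * h) = M g * M h := fun g h => by
    simp only [M, map_mul, LinearMap.toMatrix_mul]
  have hone : M 1 = 1 := by simp [M]
  have htr : ∀ g, V.character g = (M g).trace := fun g =>
    LinearMap.trace_eq_matrix_trace ℂ e (V.ρ g)
  let P := ∑ h : G, (M h).conjTranspose * M h
  have hP : P.PosDef := by
    have h1 : P = 1 + ∑ h ∈ Finset.univ.erase (1 : G), (M h).conjTranspose * M h := by
      simp only [P]
      rw [← Finset.add_sum_erase _ _ (Finset.mem_univ (1 : G)), hone]
      simp
    rw [h1]
    exact Matrix.PosDef.one.add_posSemidef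
      (Matrix.posSemidef_sum _ fun h _ => Matrix.posSemidef_conjTranspose_mul_self _)
  have hinv : (M g).conjTranspose * P = P * M g⁻¹ := by
    have h2 : (M g).conjTranspose * P * M g = P := by
      simp only [P, Finset.mul_sum, Finset.sum_mul]
      refine Fintype.sum_equiv (Equiv.mulRight g) _ _ fun h => ?_
      simp only [Equiv.coe_mulRight, hmul, Matrix.conjTranspose_mul, Matrix.mul_assoc]
    conv_rhs => rw [← h2, Matrix.mul_assoc, ← hmul, mul_inv_cancel, hone, Matrix.mul_one]
  have hPu : IsUnit P.det := (Matrix.isUnit_iff_isUnit_det _).1 hP.isUnit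
  have hM : M g⁻¹ = P⁻¹ * ((M g).conjTranspose * P) := by
    rw [hinv, ← Matrix.mul_assoc, Matrix.nonsing_inv_mul _ hPu, Matrix.one_mul]
  rw [htr, htr, hM, Matrix.trace_mul_comm, Matrix.mul_assoc, Matrix.mul_nonsing_inv _ hPu,
    Matrix.mul_one, Matrix.trace_conjTranspose]
  rfl

lemma innerOn_univ_irr {G : Type} [Group G] [Fintype G] {χ ψ : G → ℂ}
    (hχ : χ ∈ IrrChar G) (hψ : ψ ∈ IrrChar G) :
    innerOn Set.univ χ ψ = if χ = ψ then 1 else 0 := by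
  obtain ⟨V, hV, rfl⟩ := hχ
  obtain ⟨W, hW, rfl⟩ := hψ
  have : Invertible (Nat.card G : ℂ) := invertibleOfNonzero (NeZero.ne _)
  have h := FDRep.char_orthonormal V W
  have hin : innerOn Set.univ V.character W.character =
      (Nat.card G : ℂ)⁻¹ * ∑ g : G, V.character g * W.character g⁻¹ := by
    simp [innerOn, conj_character]
  rw [hin]
  by_cases hVW : V.character = W.character
  · rw [if_pos hVW, ← hVW]
    simpa [Nonempty.intro (CategoryTheory.Iso.refl V)] using FDRep.char_orthonormal V V
  · rw [if_neg hVW, h, if_neg]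
    rintro ⟨i⟩
    exact hVW (FDRep.char_iso i)

/-! ### Completeness of the irreducible characters -/

lemma simple_of_isIrreducible {G V : Type} [Group G] [Fintype G] [AddCommGroup V] [Module ℂ V]
    [FiniteDimensional ℂ V] (ρ : Representation ℂ G V) [ρ.IsIrreducible] :
    CategoryTheory.Simple (FDRep.of ρ) := by
  have : Invertible (Nat.card G : ℂ) := invertibleOfNonzero (NeZero.ne _)
  rw [FDRep.simple_iff_char_is_norm_one]
  have h := Representation.char_orthonormal ρ ρ
  rw [if_pos ⟨Representation.Equiv.refl ρ⟩, inv_mul_eq_one₀ (NeZero.ne _)] at h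
  exact h.symm

/-- The element `∑ f(g) g⁻¹` of the group algebra attached to a function `f` on `G`. -/
def dualElt {G : Type} [Group G] [Fintype G] (f : G → ℂ) : ℂ[G] :=
  ∑ g : G, MonoidAlgebra.single g⁻¹ (f g)

lemma dualElt_comm {G : Type} [Group G] [Fintype G] {f : G → ℂ}
    (hf : ∀ g x : G, f (g * x * g⁻¹) = f x) (r : ℂ[G]) :
    dualElt f * r = r * dualElt f := by
  induction r using MonoidAlgebra.induction_on with
  | of x =>
    simp only [dualElt, Finset.sum_mul, Finset.mul_sum, MonoidAlgebra.of_apply,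
      MonoidAlgebra.single_mul_single, mul_one, one_mul]
    refine Fintype.sum_equiv (MulAut.conj x⁻¹).toEquiv _ _ fun g => ?_
    have : f (x⁻¹ * (g * x)) = f g := by simpa [mul_assoc] using hf x⁻¹ g
    simp [this, mul_assoc]
  | add a b ha hb => rw [mul_add, add_mul, ha, hb]
  | smul c a ha => rw [mul_smul_comm, smul_mul_assoc, ha]

lemma isIrreducible_ofModule' {G M : Type} [Group G] [AddCommGroup M] [Module ℂ M]
    [Module ℂ[G] M] [IsScalarTower ℂ ℂ[G] M] [IsSimpleModule ℂ[G] M] :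
    (Representation.ofModule' (k := ℂ) (G := G) M).IsIrreducible := by
  rw [Representation.irreducible_iff_isSimpleModule_asModule]
  let ρ := Representation.ofModule' (k := ℂ) (G := G) M
  have hρ : ρ.asAlgebraHom = Algebra.lsmul ℂ ℂ M :=
    (MonoidAlgebra.lift ℂ (M →ₗ[ℂ] M) G).apply_symm_apply _
  let e : ρ.asModule ≃ₗ[ℂ[G]] M :=
    { ρ.asModuleEquiv.toAddEquiv with
      map_smul' := fun r x => by
        have := ρ.asModuleEquiv_map_smul r x
        rw [hρ] at this
        exact this }
  exact IsSimpleModule.congr e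

/-- Schur's lemma: the central element `dualElt f` acts on a simple module as a scalar, whose
trace is a multiple of the scalar product of `f` with the character of the module. -/
lemma dualElt_smul_eq_zero {G : Type} [Group G] [Fintype G] {f : G → ℂ}
    (hf : ∀ g x : G, f (g * x * g⁻¹) = f x)
    (horth : ∀ ψ ∈ IrrChar G, innerOn Set.univ f ψ = 0)
    (M : Type) [AddCommGroup M] [Module ℂ M] [FiniteDimensional ℂ M] [Module ℂ[G] M]
    [IsScalarTower ℂ ℂ[G] M] [IsSimpleModule ℂ[G] M] (m : M) :
    dualElt f • m = 0 := by
  let ρ : Representation ℂ G M := Representation.ofModule' M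
  have : ρ.IsIrreducible := isIrreducible_ofModule'
  let T : Module.End ℂ[G] M :=
    { toFun := fun w => dualElt f • w
      map_add' := fun _ _ => smul_add _ _ _
      map_smul' := fun r w => by
        simp only [RingHom.id_apply, ← mul_smul, dualElt_comm hf] }
  obtain ⟨c, hc⟩ :=
    (IsSimpleModule.algebraMap_end_bijective_of_isAlgClosed (A := ℂ[G]) (V := M) ℂ).2 T
  have hT : ∀ w : M, dualElt f • w = c • w := fun w => (LinearMap.congr_fun hc w).symm
  have hρ : ∀ g (w : M), ρ g w = (MonoidAlgebra.single g (1 : ℂ)) • w := fun g w => by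
    simp [ρ, Representation.ofModule']
  have hlin : ∑ g : G, f g • ρ g⁻¹ = c • LinearMap.id := by
    ext w
    simp only [LinearMap.sum_apply, LinearMap.smul_apply, LinearMap.id_apply, ← hT, dualElt,
      Finset.sum_smul, hρ, ← smul_assoc, MonoidAlgebra.smul_single, smul_eq_mul, mul_one]
  have htr := congrArg (LinearMap.trace ℂ M) hlin
  simp only [map_sum, map_smul, smul_eq_mul, LinearMap.trace_id] at htr
  have h0 := horth _ ⟨FDRep.of ρ, simple_of_isIrreducible ρ, rfl⟩
  simp only [innerOn, conj_character, Set.mem_univ, if_true] at h0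
  have h1 : ∑ g : G, f g * LinearMap.trace ℂ M (ρ g⁻¹) = 0 :=
    (mul_eq_zero.1 h0).resolve_left (inv_ne_zero (by simp))
  rw [h1] at htr
  have : Nontrivial M := IsSimpleModule.nontrivial ℂ[G] M
  have hd : (Module.finrank ℂ M : ℂ) ≠ 0 := by
    exact_mod_cast Module.finrank_pos.ne'
  have hc0 : c = 0 := (mul_eq_zero.1 htr.symm).resolve_right hd
  have := hT m
  rw [hc0, zero_smul] at this
  exact this

/-- Irreducible characters are complete: by Maschke's theorem the group algebra is a sum of
simple submodules, all of which are killed by `dualElt f`, so `dualElt f = 0`. -/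
lemma classFunction_eq_zero {G : Type} [Group G] [Fintype G] {f : G → ℂ}
    (hf : ∀ g x : G, f (g * x * g⁻¹) = f x)
    (horth : ∀ ψ ∈ IrrChar G, innerOn Set.univ f ψ = 0) : f = 0 := by
  have : NeZero (Nat.card G : ℂ) := inferInstance
  let L : ℂ[G] →ₗ[ℂ[G]] ℂ[G] :=
    { toFun := fun w => dualElt f * w
      map_add' := fun _ _ => mul_add _ _ _
      map_smul' := fun r w => by
        simp only [RingHom.id_apply, smul_eq_mul, ← mul_assoc, dualElt_comm hf] }
  have hker : LinearMap.ker L = ⊤ := by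
    rw [eq_top_iff, ← IsSemisimpleModule.sSup_simples_eq_top ℂ[G] ℂ[G]]
    refine sSup_le fun N hN n hn => ?_
    have : IsSimpleModule ℂ[G] N := hN
    exact congrArg Subtype.val (dualElt_smul_eq_zero hf horth N ⟨n, hn⟩)
  have h1 : dualElt f = 0 := by
    have : (1 : ℂ[G]) ∈ LinearMap.ker L := hker ▸ Submodule.mem_top
    simpa [L] using this
  funext x
  have h2 := congrArg (fun a : ℂ[G] => a.coeff x⁻¹) h1
  simpa [dualElt, Finsupp.single_apply] using h2

/-! ### Expansion of truncations -/

lemma irr_linearIndependent {G : Type} [Group G] [Fintype G] :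
    LinearIndependent ℂ (fun χ : IrrChar G => (χ : G → ℂ)) := by
  rw [linearIndependent_iff']
  intro s c hs χ hχ
  have hsum : ∑ ψ ∈ s, c ψ * innerOn Set.univ (ψ : G → ℂ) χ = 0 := by
    have : innerOn Set.univ (∑ ψ ∈ s, c ψ • (ψ : G → ℂ)) χ = 0 := by rw [hs]; simp [innerOn]
    rw [← this]
    simp only [innerOn, Set.mem_univ, if_true, Finset.sum_apply, Pi.smul_apply, smul_eq_mul,
      Finset.sum_mul, Finset.mul_sum]
    rw [Finset.sum_comm]
    refine Finset.sum_congr rfl fun _ _ => Finset.sum_congr rfl fun _ _ => by ring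
  rw [Finset.sum_eq_single χ] at hsum
  · simpa [innerOn_univ_irr χ.2 χ.2] using hsum
  · intro ψ _ hne
    rw [innerOn_univ_irr ψ.2 χ.2, if_neg (fun h => hne (Subtype.ext h)), mul_zero]
  · exact fun h => absurd hχ h

lemma finite_irr {G : Type} [Group G] [Fintype G] : (IrrChar G).Finite :=
  (irr_linearIndependent (G := G)).setFinite

lemma irr_conj {G : Type} [Group G] {χ : G → ℂ} (hχ : χ ∈ IrrChar G) (g x : G) :
    χ (g * x * g⁻¹) = χ x := by
  obtain ⟨V, -, rfl⟩ := hχ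
  exact V.char_conj x g

lemma innerOn_trunc_sub_sum {G : Type} [Fintype G] (C : Set G) (s : Finset (G → ℂ))
    (c : (G → ℂ) → ℂ) (χ φ : G → ℂ) :
    innerOn Set.univ (truncCF C χ - ∑ ψ ∈ s, c ψ • ψ) φ =
      innerOn C χ φ - ∑ ψ ∈ s, c ψ * innerOn Set.univ ψ φ := by
  simp only [innerOn, Set.mem_univ, if_true, Pi.sub_apply, Finset.sum_apply, Pi.smul_apply,
    smul_eq_mul, sub_mul, Finset.sum_sub_distrib, mul_sub, truncCF, ite_mul, zero_mul]
  congr 1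
  simp only [Finset.sum_mul, Finset.mul_sum]
  rw [Finset.sum_comm]
  exact Finset.sum_congr rfl fun _ _ => Finset.sum_congr rfl fun _ _ => by ring

/-- When `χ` is orthogonal across `C` to the irreducible characters outside `s`, the class
function `χ^C` expands over `s` with coefficients `⟨χ,ψ⟩_C`, since `⟨χ^C,ψ⟩ = ⟨χ,ψ⟩_C`. -/
lemma truncCF_eq_sum {G : Type} [Group G] [Fintype G] {C : Set G}
    (hC : ∀ g x : G, x ∈ C → g * x * g⁻¹ ∈ C) {s : Finset (G → ℂ)}
    (hs : ∀ ψ ∈ s, ψ ∈ IrrChar G) {χ : G → ℂ} (hχ : χ ∈ IrrChar G)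
    (hblock : ∀ ψ ∈ IrrChar G, ψ ∉ s → innerOn C χ ψ = 0) :
    truncCF C χ = ∑ ψ ∈ s, innerOn C χ ψ • ψ := by
  rw [← sub_eq_zero]
  apply classFunction_eq_zero
  · intro g x
    have hmem : g * x * g⁻¹ ∈ C ↔ x ∈ C :=
      ⟨fun h => by simpa [mul_assoc] using hC g⁻¹ _ h, hC g x⟩
    simp only [Pi.sub_apply, truncCF, hmem, irr_conj hχ, Finset.sum_apply, Pi.smul_apply]
    congr 1
    exact Finset.sum_congr rfl fun ψ hψ => by rw [irr_conj (hs ψ hψ)]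
  · intro φ hφ
    rw [innerOn_trunc_sub_sum]
    rw [Finset.sum_congr rfl fun ψ hψ => by rw [innerOn_univ_irr (hs ψ hψ) hφ]]
    by_cases h : φ ∈ s
    · simp [h]
    · simp [h, hblock φ hφ h]

/-- Under a generalized perfect isometry `I_η : (b,C) → (b',C')` between subsets of
irreducible characters which are orthogonal across `C` (resp. `C'`) to their complements,
the truncation `χ^C` of any `χ ∈ b` lies in the `ℂ`-span of `b`, and the induced `ℂ`-linear
map sends `χ^C` to `(I_η χ)^{C'}`: for any linear map `T` agreeing with `I_η` on `b`,
`T (χ^C) = (η(χ)·I(χ))^{C'}`. -/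
theorem generalized_perfect_isometry_commutes_with_truncation
    {G H : Type} [Group G] [Fintype G] [Group H] [Fintype H]
    (C : Set G) (C' : Set H)
    (hC : ∀ g x : G, x ∈ C → g * x * g⁻¹ ∈ C)
    (hC' : ∀ h x : H, x ∈ C' → h * x * h⁻¹ ∈ C')
    (b : Set (G → ℂ)) (b' : Set (H → ℂ))
    (hb : b ⊆ IrrChar G) (hb' : b' ⊆ IrrChar H)
    (I : (G → ℂ) → (H → ℂ)) (η : (G → ℂ) → ℂ)
    (hI : Set.BijOn I b b')
    (hη : ∀ χ ∈ b, η χ = 1 ∨ η χ = -1)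
    (hiso : ∀ χ ∈ b, ∀ φ ∈ b,
      innerOn C χ φ = innerOn C' (fun h => η χ * I χ h) (fun h => η φ * I φ h))
    (hblock : ∀ χ ∈ b, ∀ ψ ∈ IrrChar G \ b, innerOn C χ ψ = 0)
    (hblock' : ∀ χ' ∈ b', ∀ ψ' ∈ IrrChar H \ b', innerOn C' χ' ψ' = 0) :
    ∀ χ ∈ b, truncCF C χ ∈ Submodule.span ℂ b ∧
      ∀ T : (G → ℂ) →ₗ[ℂ] (H → ℂ), (∀ φ ∈ b, T φ = fun h => η φ * I φ h) →
        T (truncCF C χ) = truncCF C' (fun h => η χ * I χ h) := by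
  intro χ hχ
  have hbf : b.Finite := finite_irr.subset hb
  have hexp : truncCF C χ = ∑ ψ ∈ hbf.toFinset, innerOn C χ ψ • ψ :=
    truncCF_eq_sum hC (fun ψ hψ => hb (hbf.mem_toFinset.1 hψ)) (hb hχ)
      fun ψ hψ hn => hblock χ hχ ψ ⟨hψ, fun h => hn (hbf.mem_toFinset.2 h)⟩
  have hset : ∀ ψ', ψ' ∈ hbf.toFinset.image I ↔ ψ' ∈ b' := fun ψ' => by
    rw [← hI.image_eq]
    simp
  have hexp' : truncCF C' (I χ) = ∑ ψ ∈ hbf.toFinset, innerOn C' (I χ) (I ψ) • I ψ := by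
    rw [truncCF_eq_sum hC' (fun ψ hψ => hb' ((hset ψ).1 hψ)) (hb' (hI.mapsTo hχ))
      fun ψ hψ hn => hblock' _ (hI.mapsTo hχ) ψ ⟨hψ, fun h => hn ((hset ψ).2 h)⟩,
      Finset.sum_image]
    intro x hx y hy hxy
    exact hI.injOn (hbf.mem_toFinset.1 hx) (hbf.mem_toFinset.1 hy) hxy
  refine ⟨?_, fun T hT => ?_⟩
  · rw [hexp]
    exact Submodule.sum_mem _ fun ψ hψ =>
      Submodule.smul_mem _ _ (Submodule.subset_span (hbf.mem_toFinset.1 hψ))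
  · have htrunc : truncCF C' (fun h => η χ * I χ h) = η χ • truncCF C' (I χ) := by
      funext h
      simp [truncCF]
    rw [htrunc, hexp', hexp, map_sum, Finset.smul_sum]
    refine Finset.sum_congr rfl fun ψ hψ => ?_
    have hψb := hbf.mem_toFinset.1 hψ
    have hin : innerOn C χ ψ = η χ * η ψ * innerOn C' (I χ) (I ψ) := by
      have hstar : (starRingEnd ℂ) (η ψ) = η ψ := by
        rcases hη ψ hψb with h | h <;> simp [h]
      rw [hiso χ hχ ψ hψb]
      simp only [innerOn, map_mul, hstar, Finset.mul_sum]
      refine Finset.sum_congr rfl fun _ _ => ?_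
      split_ifs <;> ring
    have hsq : η ψ * η ψ = 1 := by
      rcases hη ψ hψb with h | h <;> simp [h]
    rw [map_smul, hT ψ hψb, hin]
    funext h
    simp only [Pi.smul_apply, smul_eq_mul]
    linear_combination (η χ * innerOn C' (I χ) (I ψ) * I ψ h) * hsq
end
end

section
/- Let G be a finite group that is an internal semidirect product G = H ⋊ K (H normal in G, K a subgroup, H ∩ K = {1}, HK = G), and let π : G → K be the canonical projection sending g = hk (with h ∈ H, k ∈ K) to k. Let C ⊆ G be conjugation-invariant with K ⊆ C, and suppose the number of G-conjugacy classes contained in C equals the number of conjugacy classes of K. Then the set {ψ∘π : ψ ∈ Irr(K)} consists of irreducible characters of G (namely those with H contained in their kernel), and it is a C-basic set of G. -/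
/-!
The projection `π` is a homomorphism which restricts to the identity on `K`. Hence elements of `K`
that are conjugate in `G` are conjugate in `K`, so mapping a class of `K` to the class of `G`
containing it is an injection into the classes contained in `C`; since the two numbers of classes
agree, every element of `C` is `G`-conjugate to an element of `K` (`exists_isConj_of_card_eq`).

If `g ∈ C` is conjugate to `k ∈ K`, then `π g` is conjugate to `k` in `K`, so a character `χ` of `G`
satisfies `χ(g) = χ(k) = (Res_K χ)(π g)`: on `C`, `χ` is the inflation of its restriction to `K`.
By Maschke's theorem `Res_K χ` is a sum of irreducible characters of `K`
(`character_mem_span_irrChar`), which shows that the truncated inflations span.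

For linear independence, restricting the truncation of `ψ ∘ π` from `C` to `K` gives back `ψ`, and
irreducible characters of `K` are linearly independent by orthogonality
(`linearIndependent_irrChar`). Inflations are irreducible because inflation along a surjection
preserves the norm of a character (`irrChar_comp_of_surjective`).
-/

open scoped Classical

noncomputable section

/-- Inflation along a surjection preserves irreducibility: all fibres of `f` have the same size, so
the norm of the character is unchanged, and norm one characterises irreducible characters. -/
theorem irrChar_comp_of_surjective {G K : Type} [Group G] [Fintype G] [Group K] [Fintype K]
    (f : G →* K) (hf : Function.Surjective f) {ψ : K → ℂ} (hψ : ψ ∈ IrrChar K) :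
    (fun g => ψ (f g)) ∈ IrrChar G := by
  obtain ⟨V, hV, rfl⟩ := hψ
  refine ⟨FDRep.of (V.ρ.comp f : Representation ℂ G V), ?_, rfl⟩
  rw [FDRep.simple_iff_char_is_norm_one] at hV ⊢
  have hfib : ∀ k : K, (Finset.univ.filter (fun g => f g = k)).card = Nat.card f.ker := by
    intro k
    obtain ⟨a, rfl⟩ := hf k
    rw [MonoidHom.card_fiber_eq_of_mem_range f (x := f a) (y := 1) ⟨a, rfl⟩ ⟨1, map_one f⟩,
      Nat.card_eq_fintype_card, Fintype.card_subtype]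
    simp only [MonoidHom.mem_ker]
  have hcard : Nat.card f.ker * Nat.card K = Nat.card G := by
    rw [← f.ker.card_mul_index, Subgroup.index_ker, MonoidHom.range_eq_top.mpr hf,
      Subgroup.card_top]
  calc ∑ g : G, V.character (f g) * V.character (f g⁻¹)
      = ∑ g : G, (fun k => V.character k * V.character k⁻¹) (f g) := by simp
    _ = ∑ k : K, (Nat.card f.ker : ℂ) * (V.character k * V.character k⁻¹) := by
        rw [← Finset.sum_fiberwise Finset.univ f]
        refine Finset.sum_congr rfl fun k _ => ?_
        rw [← hfib k, ← nsmul_eq_mul, ← Finset.sum_const]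
        refine Finset.sum_congr rfl fun g hg => ?_
        rw [(Finset.mem_filter.mp hg).2]
    _ = Nat.card G := by rw [← Finset.mul_sum, hV, ← hcard, Nat.cast_mul]

theorem linearIndependent_irrChar (K : Type) [Group K] [Fintype K] :
    LinearIndependent ℤ (fun χ : IrrChar K => (χ : K → ℂ)) := by
  have : Invertible (Nat.card K : ℂ) := invertibleOfNonzero (NeZero.ne _)
  have horth : ∀ χ η : IrrChar K,
      (Nat.card K : ℂ)⁻¹ * ∑ g : K, χ.1 g * η.1 g⁻¹ = if χ = η then 1 else 0 := by
    rintro ⟨_, V, hV, rfl⟩ ⟨_, W, hW, rfl⟩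
    by_cases h : V.character = W.character
    · have := FDRep.char_orthonormal V V
      rw [if_pos ⟨CategoryTheory.Iso.refl V⟩] at this
      simpa [h] using this
    · have := FDRep.char_orthonormal V W
      rw [if_neg fun ⟨i⟩ => h (FDRep.char_iso i)] at this
      rw [if_neg fun h' => h (Subtype.ext_iff.mp h')]
      exact this
  rw [linearIndependent_iff']
  intro s a ha η hη
  have key : (Nat.card K : ℂ)⁻¹ * ∑ g : K, (∑ χ ∈ s, a χ • (χ : K → ℂ)) g * η.1 g⁻¹ = a η := by
    calc _ = ∑ χ ∈ s, (a χ : ℂ) * ((Nat.card K : ℂ)⁻¹ * ∑ g : K, χ.1 g * η.1 g⁻¹) := by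
          simp only [Finset.sum_apply, Pi.smul_apply, Finset.sum_mul, Finset.mul_sum]
          rw [Finset.sum_comm]
          refine Finset.sum_congr rfl fun χ _ => Finset.sum_congr rfl fun g _ => ?_
          rw [zsmul_eq_mul]
          ring
      _ = a η := by simp only [horth, mul_ite, mul_one, mul_zero, Finset.sum_ite_eq', hη, if_true]
  rw [ha] at key
  simpa using key.symm

theorem irrChar_of_isIrreducible {K V : Type} [Group K] [Fintype K] [AddCommGroup V] [Module ℂ V]
    [FiniteDimensional ℂ V] (ρ : Representation ℂ K V) (hρ : ρ.IsIrreducible) :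
    ρ.character ∈ IrrChar K := by
  have : Invertible (Nat.card K : ℂ) := invertibleOfNonzero (NeZero.ne _)
  refine ⟨FDRep.of ρ, ?_, rfl⟩
  rw [FDRep.simple_iff_char_is_norm_one]
  have h := Representation.char_orthonormal ρ ρ
  rw [if_pos ⟨Representation.Equiv.refl ρ⟩, inv_mul_eq_one₀ (NeZero.ne _)] at h
  exact h.symm

theorem trace_eq_add_of_isCompl {V : Type} [AddCommGroup V] [Module ℂ V] [FiniteDimensional ℂ V]
    {P Q : Submodule ℂ V} (h : IsCompl P Q) (f : V →ₗ[ℂ] V) (hP : ∀ v ∈ P, f v ∈ P)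
    (hQ : ∀ v ∈ Q, f v ∈ Q) :
    LinearMap.trace ℂ V f
      = LinearMap.trace ℂ P (f.restrict hP) + LinearMap.trace ℂ Q (f.restrict hQ) := by
  let N : Bool → Submodule ℂ V := fun b => match b with
    | true => P
    | false => Q
  have hN : DirectSum.IsInternal N := by
    rw [DirectSum.isInternal_submodule_iff_isCompl N (i := true) (j := false) (by simp)
      (by ext b; cases b <;> simp)]
    exact h
  have hf : ∀ b, Set.MapsTo f (N b) (N b) := fun b => match b with
    | true => hP
    | false => hQ
  rw [LinearMap.trace_eq_sum_trace_restrict hN hf, Fintype.sum_bool]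

/-- Every character of a finite group is an integral combination of irreducible ones: a reducible
representation splits by Maschke's theorem into two of smaller dimension. -/
theorem character_mem_span_irrChar {K : Type} [Group K] [Fintype K] {V : Type} [AddCommGroup V]
    [Module ℂ V] [FiniteDimensional ℂ V] (ρ : Representation ℂ K V) :
    ρ.character ∈ Submodule.span ℤ (IrrChar K) := by
  induction hn : Module.finrank ℂ V using Nat.strong_induction_on generalizing V with
  | _ n ih =>
  by_cases hirr : ρ.IsIrreducible
  · exact Submodule.subset_span (irrChar_of_isIrreducible ρ hirr)
  rcases subsingleton_or_nontrivial V with hV | hV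
  · have : ρ.character = 0 := by
      ext g
      rw [Representation.character, Subsingleton.elim (ρ g) 0]
      simp
    rw [this]
    exact Submodule.zero_mem _
  obtain ⟨σ, hσ0, hσ1⟩ : ∃ σ : Subrepresentation ρ, σ ≠ ⊥ ∧ σ ≠ ⊤ := by
    by_contra! hcon
    have : Nontrivial (Subrepresentation ρ) := by
      refine ⟨⊥, ⊤, fun h => ?_⟩
      exact bot_ne_top (α := Submodule ℂ V) (congrArg Subrepresentation.toSubmodule h)
    exact hirr ⟨fun σ => or_iff_not_imp_left.mpr (hcon σ)⟩
  obtain ⟨τ, hστ⟩ := exists_isCompl σ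
  have hc : IsCompl σ.toSubmodule τ.toSubmodule := by
    constructor
    · rw [disjoint_iff, ← Subrepresentation.toSubmodule_inf, hστ.inf_eq_bot]; rfl
    · rw [codisjoint_iff, ← Subrepresentation.toSubmodule_sup, hστ.sup_eq_top]; rfl
  have hadd : ρ.character = σ.toRepresentation.character + τ.toRepresentation.character := by
    ext g
    exact trace_eq_add_of_isCompl hc (ρ g) (fun v hv => σ.apply_mem_toSubmodule g hv)
      (fun v hv => τ.apply_mem_toSubmodule g hv)
  have hdim := Submodule.finrank_add_eq_of_isCompl hc
  have hσlt : Module.finrank ℂ σ.toSubmodule < n := by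
    rw [← hn]
    exact Submodule.finrank_lt fun h => hσ1 (Subrepresentation.toSubmodule_injective h)
  have hσpos : 0 < Module.finrank ℂ σ.toSubmodule := by
    refine Nat.pos_of_ne_zero fun h => hσ0 (Subrepresentation.toSubmodule_injective ?_)
    exact Submodule.finrank_eq_zero.mp h
  rw [hadd]
  exact Submodule.add_mem _ (ih _ hσlt _ rfl) (ih _ (by omega) _ rfl)

theorem restrict_character_mem_span_irrChar {G : Type} [Group G] [Fintype G] (K : Subgroup G)
    (V : FDRep ℂ G) : (fun k : ↥K => V.character k) ∈ Submodule.span ℤ (IrrChar ↥K) :=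
  character_mem_span_irrChar (V := V) (MonoidHom.comp V.ρ K.subtype)

/-- If `π : G → K` is a multiplicative retraction onto `K ⊆ C`, then `K`-classes inject into the
`G`-classes contained in `C`; when there are equally many of both, every element of `C` is conjugate
to an element of `K`. -/
theorem exists_isConj_of_card_eq {G : Type} [Group G] [Fintype G] {K : Subgroup G}
    (π : G → ↥K) (hmul : ∀ a b, π (a * b) = π a * π b) (hid : ∀ k : ↥K, π (k : G) = k)
    (C : Set G) (hC : ∀ g x : G, x ∈ C → g * x * g⁻¹ ∈ C) (hKC : (K : Set G) ⊆ C)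
    (hcard : Nat.card {c : ConjClasses G // ConjClasses.carrier c ⊆ C}
      = Nat.card (ConjClasses ↥K)) (g : G) (hg : g ∈ C) : ∃ k : ↥K, IsConj (k : G) g := by
  have hsub : ∀ x ∈ C, (ConjClasses.mk x).carrier ⊆ C := by
    intro x hx y hy
    obtain ⟨c, rfl⟩ := isConj_iff.mp (ConjClasses.mk_eq_mk_iff_isConj.mp
      (ConjClasses.mem_carrier_iff_mk_eq.mp hy)).symm
    exact hC c x hx
  have hmap : ∀ d : ConjClasses ↥K, (ConjClasses.map K.subtype d).carrier ⊆ C := by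
    intro d
    obtain ⟨k, rfl⟩ := ConjClasses.mk_surjective d
    exact hsub k (hKC k.2)
  let F : ConjClasses ↥K → {c : ConjClasses G // ConjClasses.carrier c ⊆ C} :=
    fun d => ⟨ConjClasses.map K.subtype d, hmap d⟩
  have hF : Function.Injective F := by
    intro d e h
    have h' := congrArg (ConjClasses.map (MonoidHom.mk' π hmul)) (Subtype.ext_iff.mp h)
    obtain ⟨k, rfl⟩ := ConjClasses.mk_surjective d
    obtain ⟨l, rfl⟩ := ConjClasses.mk_surjective e
    have h'' : ConjClasses.mk (π k) = ConjClasses.mk (π l) := h'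
    simpa only [hid] using h''
  have hFs : Function.Surjective F :=
    ((Nat.bijective_iff_injective_and_card F).mpr ⟨hF, hcard.symm⟩).2
  obtain ⟨d, hd⟩ := hFs ⟨ConjClasses.mk g, hsub g hg⟩
  obtain ⟨k, rfl⟩ := ConjClasses.mk_surjective d
  exact ⟨k, ConjClasses.mk_eq_mk_iff_isConj.mp (Subtype.ext_iff.mp hd)⟩

/-- Let `G = H ⋊ K` be an internal semidirect product with canonical projection `π : G → K`,
and let `C` be a conjugation-invariant subset of `G` containing `K` such that the number of
`G`-conjugacy classes contained in `C` equals the number of conjugacy classes of `K`. Then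
the characters `ψ ∘ π`, for `ψ ∈ Irr K`, are irreducible characters of `G`, and they form a
`C`-basic set of `G`. -/
theorem semidirect_inflation_isBasicSet {G : Type} [Group G] [Fintype G]
    (H K : Subgroup G) [H.Normal]
    (hHK : H ⊓ K = ⊥)
    (hprod : ∀ g : G, ∃ h ∈ H, ∃ k ∈ K, g = h * k)
    (π : G → ↥K) (hπ : ∀ g : G, g * ((π g : G))⁻¹ ∈ H)
    (C : Set G) (hC : ∀ g x : G, x ∈ C → g * x * g⁻¹ ∈ C)
    (hKC : (K : Set G) ⊆ C)
    (hcard : Nat.card {c : ConjClasses G // ConjClasses.carrier c ⊆ C}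
      = Nat.card (ConjClasses ↥K)) :
    (fun ψ : ↥K → ℂ => (fun g : G => ψ (π g))) '' IrrChar ↥K ⊆ IrrChar G ∧
    IsBasicSetOf C (IrrChar G) ((fun ψ : ↥K → ℂ => (fun g : G => ψ (π g))) '' IrrChar ↥K) := by
  have huniq : ∀ (g : G) (k : ↥K), g * (k : G)⁻¹ ∈ H → π g = k := by
    intro g k hk
    have h1 : (π g : G) * (k : G)⁻¹ ∈ H ⊓ K := by
      refine ⟨?_, K.mul_mem (π g).2 (K.inv_mem k.2)⟩
      have := H.mul_mem (H.inv_mem (hπ g)) hk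
      simpa [mul_assoc] using this
    rw [hHK, Subgroup.mem_bot] at h1
    exact Subtype.ext (mul_inv_eq_one.mp h1)
  have hmul : ∀ a b : G, π (a * b) = π a * π b := by
    intro a b
    apply huniq
    -- `a b (π a π b)⁻¹ = (a (π a)⁻¹) · (π a) (b (π b)⁻¹) (π a)⁻¹`
    have := H.mul_mem (hπ a) (Subgroup.Normal.conj_mem inferInstance _ (hπ b) (π a : G))
    simpa [mul_assoc] using this
  have hid : ∀ k : ↥K, π (k : G) = k := fun k => huniq _ _ (by simp)
  let p : G →* ↥K := MonoidHom.mk' π hmul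
  have hp : Function.Surjective p := fun k => ⟨k, hid k⟩
  have hinfl : (fun ψ : ↥K → ℂ => (fun g : G => ψ (π g))) '' IrrChar ↥K ⊆ IrrChar G := by
    rintro _ ⟨ψ, hψ, rfl⟩
    exact irrChar_comp_of_surjective p hp hψ
  have hmeet := exists_isConj_of_card_eq π hmul hid C hC hKC hcard
  refine ⟨hinfl, hinfl, ?_, ?_⟩
  · let L : (G → ℂ) →ₗ[ℤ] (↥K → ℂ) := LinearMap.funLeft ℤ ℂ (Subtype.val : ↥K → G)
    have hL : ∀ ψ : ↥K → ℂ, L (truncCF C (fun g => ψ (π g))) = ψ := by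
      intro ψ
      ext k
      have : (k : G) ∈ C := hKC k.2
      simp [L, LinearMap.funLeft, truncCF, this, hid]
    apply LinearIndependent.of_comp L
    have hmem : ∀ χ : (fun ψ : ↥K → ℂ => (fun g : G => ψ (π g))) '' IrrChar ↥K,
        L (truncCF C χ.1) ∈ IrrChar ↥K := by
      rintro ⟨_, ψ, hψ, rfl⟩
      simpa only [hL] using hψ
    let F : (fun ψ : ↥K → ℂ => (fun g : G => ψ (π g))) '' IrrChar ↥K → IrrChar ↥K :=
      fun χ => ⟨L (truncCF C χ.1), hmem χ⟩
    have hF : Function.Injective F := by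
      rintro ⟨_, ψ, hψ, rfl⟩ ⟨_, φ, hφ, rfl⟩ h
      have h' : L (truncCF C fun g => ψ (π g)) = L (truncCF C fun g => φ (π g)) :=
        Subtype.ext_iff.mp h
      rw [hL, hL] at h'
      subst h'
      rfl
    have hli := (linearIndependent_irrChar ↥K).comp F hF
    exact hli
  · apply le_antisymm (Submodule.span_mono (Set.image_mono hinfl))
    rw [Submodule.span_le]
    intro θ hθ
    obtain ⟨χ, hχ, rfl⟩ := (Set.mem_image _ _ _).mp hθ
    obtain ⟨V, -, rfl⟩ := hχ
    -- On `C` the character of `V` agrees with the inflation of its restriction to `K`.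
    have hres : truncCF C V.character
        = truncCF C (fun g => V.character (π g)) := by
      ext g
      by_cases hg : g ∈ C
      · obtain ⟨k, hk⟩ := hmeet g hg
        obtain ⟨c, rfl⟩ := isConj_iff.mp hk
        have hπc : π (c * k * c⁻¹) = π c * k * (π c)⁻¹ := by
          have : p (c * k * c⁻¹) = p c * p k * (p c)⁻¹ := by simp
          simpa [p, hid] using this
        simp only [truncCF, hg, if_true]
        rw [FDRep.char_conj, hπc]
        push_cast
        rw [FDRep.char_conj]
      · simp [truncCF, hg]
    let T : (↥K → ℂ) →ₗ[ℤ] (G → ℂ) :=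
      { toFun := fun φ => truncCF C (fun g => φ (π g))
        map_add' := fun φ φ' => by
          ext g; by_cases hg : g ∈ C <;> simp [truncCF, hg]
        map_smul' := fun n φ => by
          ext g; by_cases hg : g ∈ C <;> simp [truncCF, hg] }
    have h := Submodule.mem_map_of_mem (f := T)
      (restrict_character_mem_span_irrChar K V)
    rw [Submodule.map_span] at h
    rw [SetLike.mem_coe, hres, ← Set.image_comp]
    exact h
end
end

section
/- Let ι be a finite type, let D be a square matrix over ℤ indexed by ι whose determinant is a unit of ℤ (i.e. det D = ±1), and let σ and τ be permutations of ι such that D(σ(i), τ(j)) = D(i, j) for all i, j ∈ ι. Then σ and τ have the same number of fixed points. -/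
/-!
With `P`, `Q` the permutation matrices of `σ`, `τ`, the invariance of `D` says `P * D = D * Q`.
As `D` is invertible over `ℤ`, `P` and `Q` are conjugate and so have equal traces; the trace of a
permutation matrix is the number of fixed points of the permutation.
-/

theorem trace_permMatrix_eq_card_filter {ι : Type*} [Fintype ι] [DecidableEq ι]
    (σ : Equiv.Perm ι) :
    (σ.permMatrix ℤ).trace = ((Finset.univ.filter fun i => σ i = i).card : ℤ) := by
  rw [Matrix.trace_permutation, ← Set.ncard_coe_finset]
  congr 2
  ext i
  simp [Function.mem_fixedPoints, Function.IsFixedPt]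

/-- If `D` is an integer matrix with `det D = ±1` which is invariant under simultaneously
permuting its rows by `σ` and its columns by `τ`, then `σ` and `τ` have the same number of
fixed points. -/
theorem fixedPoints_card_eq_of_invariant_unimodular {ι : Type*} [Fintype ι] [DecidableEq ι]
    (D : Matrix ι ι ℤ) (hD : IsUnit D.det)
    (σ τ : Equiv.Perm ι) (h : ∀ i j, D (σ i) (τ j) = D i j) :
    (Finset.univ.filter fun i => σ i = i).card
      = (Finset.univ.filter fun i => τ i = i).card := by
  have hPD : σ.permMatrix ℤ * D = D * τ.permMatrix ℤ := by
    rw [PEquiv.toMatrix_toPEquiv_mul, PEquiv.mul_toMatrix_toPEquiv]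
    ext i j
    simpa using h i (τ.symm j)
  have htr : (σ.permMatrix ℤ).trace = (τ.permMatrix ℤ).trace := by
    calc (σ.permMatrix ℤ).trace = (σ.permMatrix ℤ * D * D⁻¹).trace := by
          rw [Matrix.mul_nonsing_inv_cancel_right _ _ hD]
      _ = (D⁻¹ * (D * τ.permMatrix ℤ)).trace := by rw [hPD, Matrix.trace_mul_comm]
      _ = (τ.permMatrix ℤ).trace := by rw [Matrix.nonsing_inv_mul_cancel_left _ _ hD]
  rw [trace_permMatrix_eq_card_filter, trace_permMatrix_eq_card_filter] at htr
  exact_mod_cast htr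
end

section
/- Let r be a positive integer and let D be an r × r matrix over ℕ with wedge shape. Let D' be a matrix over ℕ indexed by (Fin r × Bool) × (Fin r × Bool) satisfying, for all i, j ∈ Fin r and s, t ∈ Bool: D'((i,s),(j,t)) = D'((i,¬s),(j,¬t)), and D'((i,s),(j,true)) + D'((i,s),(j,false)) = D(i,j). Then D' has wedge shape. -/
/-!
Each entry `D i j` splits as a `2 × 2` block of `D'` whose rows both sum to `D i j`, the two rows
being swapped copies of each other. A zero entry gives a zero block, and a diagonal `1` gives a
`2 × 2` permutation matrix. Ordering the doubled indices lexicographically, and permuting the two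
columns of each block column so that the diagonal blocks become identities, yields a lower
triangular matrix with unit diagonal.
-/

/-- A matrix `M` over `ℕ` has wedge shape if its rows and columns can be ordered so that the
resulting matrix is lower triangular with all diagonal entries equal to `1`. -/
def WedgeShape {I J : Type*} (M : Matrix I J ℕ) : Prop :=
  ∃ (m : ℕ) (ρ : Fin m ≃ I) (γ : Fin m ≃ J),
    (∀ i j : Fin m, i < j → M (ρ i) (γ j) = 0) ∧ ∀ i : Fin m, M (ρ i) (γ i) = 1

/-- If `D` is an `r × r` matrix over `ℕ` of wedge shape and `D'` is a doubled matrix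
satisfying `D'((i,s),(j,t)) = D'((i,¬s),(j,¬t))` and
`D'((i,s),(j,true)) + D'((i,s),(j,false)) = D(i,j)`, then `D'` has wedge shape. -/
theorem wedgeShape_doubling (r : ℕ) (hr : 0 < r) (D : Matrix (Fin r) (Fin r) ℕ)
    (hD : WedgeShape D)
    (D' : Matrix (Fin r × Bool) (Fin r × Bool) ℕ)
    (h1 : ∀ (i j : Fin r) (s t : Bool), D' (i, s) (j, t) = D' (i, !s) (j, !t))
    (h2 : ∀ (i j : Fin r) (s : Bool), D' (i, s) (j, true) + D' (i, s) (j, false) = D i j) :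
    WedgeShape D' := by
  obtain ⟨m, ρ, γ, hz, ho⟩ := hD
  -- `σ k` sends each row of the `k`-th diagonal block to the column of its unique `1`.
  have hσ : ∀ k : Fin m, ∃ σ : Equiv.Perm Bool, ∀ s : Bool,
      D' (ρ k, s) (γ k, σ s) = 1 ∧ D' (ρ k, s) (γ k, σ (!s)) = 0 := by
    intro k
    have ht := h2 (ρ k) (γ k) true
    rw [ho k] at ht
    have e1 := h1 (ρ k) (γ k) true true
    have e2 := h1 (ρ k) (γ k) true false
    simp only [Bool.not_true, Bool.not_false] at e1 e2
    by_cases h : D' (ρ k, true) (γ k, true) = 1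
    · refine ⟨Equiv.refl _, fun s => ?_⟩
      cases s <;> simp <;> omega
    · refine ⟨Equiv.boolNot, fun s => ?_⟩
      cases s <;> simp <;> omega
  choose σ hσ using hσ
  let e : Fin (m * 2) ≃ Fin m × Bool :=
    finProdFinEquiv.symm.trans (Equiv.prodCongr (Equiv.refl _) finTwoEquiv)
  -- `e` enumerates `Fin m × Bool` lexicographically.
  have he : ∀ i j : Fin (m * 2), i < j →
      (e i).1 < (e j).1 ∨ ((e i).1 = (e j).1 ∧ (e j).2 = !(e i).2) := by
    intro i j hij
    have hle : (e i).1 ≤ (e j).1 := by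
      change (i : ℕ) / 2 ≤ (j : ℕ) / 2
      exact Nat.div_le_div_right hij.le
    rcases hle.lt_or_eq with h | h
    · exact Or.inl h
    · refine Or.inr ⟨h, ?_⟩
      have hne : (e i).2 ≠ (e j).2 := fun h' => hij.ne (e.injective (Prod.ext h h'))
      revert hne
      cases (e i).2 <;> cases (e j).2 <;> simp
  refine ⟨m * 2, e.trans (Equiv.prodCongr ρ (Equiv.refl _)), e.trans (Equiv.prodShear γ σ),
    fun i j hij => ?_, fun i => (hσ (e i).1 (e i).2).1⟩
  change D' (ρ (e i).1, (e i).2) (γ (e j).1, σ (e j).1 (e j).2) = 0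
  rcases he i j hij with h | ⟨h, h'⟩
  · have hs := h2 (ρ (e i).1) (γ (e j).1) (e i).2
    rw [hz _ _ h] at hs
    cases σ (e j).1 (e j).2 <;> omega
  · rw [← h, h']
    exact (hσ _ _).2
end
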